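/- Sobolev–Poincaré inequalities: let p ∈ [1, 2n/(n−2)] if n ≥ 3, or p ∈ [1, ∞) if n = 2. There is a constant C > 0, depending only on n, d, C₀, and p, such that for every u ∈ W, every x ∈ ℝⁿ, and every r > 0, with B = B(x,r) and u_B = ⨍_B u dy, one has ( m(B)^{−1} ∫_B |u − u_B|^p dm )^{1/p} ≤ C r ( m(B)^{−1} ∫_B |∇u|² dm )^{1/2}. If in addition x ∈ Γ and Tu = 0 σ-almost everywhere on Γ ∩ B(x,r), then ( r^{−d−1} ∫_B |u|^p dm )^{1/p} ≤ C r ( r^{−d−1} ∫_B |∇u|² dm )^{1/2}. -/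

import Mathlib

open MeasureTheory Metric Set Filter
open scoped ENNReal NNReal Topology

noncomputable section

/-- Euclidean space `ℝⁿ`. -/
abbrev Euc (n : ℕ) := EuclideanSpace ℝ (Fin n)

/-- `Γ ⊆ ℝⁿ` is `d`-Ahlfors regular with constant `C₀`. -/
def AhlforsRegular (n : ℕ) (d C₀ : ℝ) (Γ : Set (Euc n)) : Prop :=
  ∀ x ∈ Γ, ∀ r : ℝ, 0 < r →
    ENNReal.ofReal (C₀⁻¹ * r ^ d) ≤ μH[d] (Γ ∩ ball x r) ∧
      μH[d] (Γ ∩ ball x r) ≤ ENNReal.ofReal (C₀ * r ^ d)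

/-- The weight `w(x) = dist(x, Γ) ^ (d + 1 - n)`. -/
def weightW (n : ℕ) (d : ℝ) (Γ : Set (Euc n)) (x : Euc n) : ℝ :=
  infDist x Γ ^ (d + 1 - (n : ℝ))

/-- The measure `m` with density `w` with respect to Lebesgue measure. -/
def measW (n : ℕ) (d : ℝ) (Γ : Set (Euc n)) : Measure (Euc n) :=
  volume.withDensity fun x => ENNReal.ofReal (weightW n d Γ x)

/-- `v` is a distributional gradient of `u` on the open set `E`: for every smooth
compactly supported test function `φ` with support in `E`, `∫_E u ∇φ = -∫_E φ v`. -/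
def IsDistribGradOn {n : ℕ} (u : Euc n → ℝ) (v : Euc n → Euc n) (E : Set (Euc n)) : Prop :=
  ∀ φ : Euc n → ℝ, ContDiff ℝ (⊤ : ℕ∞) φ → HasCompactSupport φ → tsupport φ ⊆ E →
    ∫ x in E, u x • gradient φ x = -∫ x in E, φ x • v x

/-- The averages of `u` over small balls centered at `x` converge to `t`. -/
def HasTraceAt {n : ℕ} (u : Euc n → ℝ) (x : Euc n) (t : ℝ) : Prop :=
  Tendsto (fun ρ : ℝ => ⨍ y in ball x ρ, u y) (𝓝[>] (0 : ℝ)) (𝓝 t)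

/-- `u` belongs to the weighted Sobolev space `W = Ẇ^{1,2}_w(Ω)`, `Ω = Γᶜ`, with
distributional gradient `v` on `Ω` lying in `L²(Ω, m)`. -/
structure MemW (n : ℕ) (d : ℝ) (Γ : Set (Euc n)) (u : Euc n → ℝ) (v : Euc n → Euc n) :
    Prop where
  locInt : LocallyIntegrableOn u Γᶜ volume
  gradLocInt : LocallyIntegrableOn v Γᶜ volume
  isGrad : IsDistribGradOn u v Γᶜ
  l2 : ∫⁻ x in Γᶜ, ENNReal.ofReal (‖v x‖ ^ 2) ∂(measW n d Γ) < ⊤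

/-- `u` belongs to the local space `W_r(E)`: `u ∈ L¹_loc(E)` and `φ u` (extended by `0`)
belongs to `W` for every smooth compactly supported `φ` with support in `E`. -/
def MemWrOn (n : ℕ) (d : ℝ) (Γ : Set (Euc n)) (E : Set (Euc n)) (u : Euc n → ℝ) : Prop :=
  LocallyIntegrableOn u E volume ∧
    ∀ φ : Euc n → ℝ, ContDiff ℝ (⊤ : ℕ∞) φ → HasCompactSupport φ → tsupport φ ⊆ E →
      ∃ vφ : Euc n → Euc n, MemW n d Γ (fun x => φ x * u x) vφ

/-- Degenerate ellipticity and boundedness conditions for the matrix `A`. -/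
def EllipticOn (n : ℕ) (d : ℝ) (Γ : Set (Euc n)) (A : Euc n → Euc n →L[ℝ] Euc n)
    (C₁ : ℝ) : Prop :=
  ∀ x, x ∉ Γ →
    (∀ ξ ζ : Euc n, |∑ i, A x ξ i * ζ i| ≤ C₁ * weightW n d Γ x * ‖ξ‖ * ‖ζ‖) ∧
      ∀ ξ : Euc n, C₁⁻¹ * weightW n d Γ x * ‖ξ‖ ^ 2 ≤ ∑ i, A x ξ i * ξ i

/-- `u`, with gradient `v`, is a weak subsolution of `- div A ∇u = 0` on `U ⊆ Ω = Γᶜ`. -/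
def SubsolOn {n : ℕ} (Γ : Set (Euc n)) (A : Euc n → Euc n →L[ℝ] Euc n)
    (v : Euc n → Euc n) (U : Set (Euc n)) : Prop :=
  ∀ φ : Euc n → ℝ, ContDiff ℝ (⊤ : ℕ∞) φ → HasCompactSupport φ → tsupport φ ⊆ U →
    (∀ x, 0 ≤ φ x) → ∫ x in Γᶜ, ∑ i, A x (v x) i * gradient φ x i ≤ 0

/-- `u`, with gradient `v`, is a weak supersolution of `- div A ∇u = 0` on `U ⊆ Ω = Γᶜ`. -/
def SupersolOn {n : ℕ} (Γ : Set (Euc n)) (A : Euc n → Euc n →L[ℝ] Euc n)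
    (v : Euc n → Euc n) (U : Set (Euc n)) : Prop :=
  ∀ φ : Euc n → ℝ, ContDiff ℝ (⊤ : ℕ∞) φ → HasCompactSupport φ → tsupport φ ⊆ U →
    (∀ x, 0 ≤ φ x) → 0 ≤ ∫ x in Γᶜ, ∑ i, A x (v x) i * gradient φ x i

/-- `u`, with gradient `v`, is a weak solution of `- div A ∇u = 0` on `U ⊆ Ω = Γᶜ`. -/
def SolOn {n : ℕ} (Γ : Set (Euc n)) (A : Euc n → Euc n →L[ℝ] Euc n)
    (v : Euc n → Euc n) (U : Set (Euc n)) : Prop :=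
  ∀ φ : Euc n → ℝ, ContDiff ℝ (⊤ : ℕ∞) φ → HasCompactSupport φ → tsupport φ ⊆ U →
    ∫ x in Γᶜ, ∑ i, A x (v x) i * gradient φ x i = 0

/-!
Since `1 / δ` is locally integrable, almost every segment between two points of a ball `B` misses
`Γ`, so mollifications of `u` can be integrated along it, and polar coordinates bound `|u - u_B|` on
`B` by the Riesz potential of order one of `|∇u| 1_B`. Write `|∇u| = δ^(γ/2) g` with
`γ = n - 1 - d`, so that `‖g‖_{L²(dx)} = ‖∇u‖_{L²(dm)}`. Since `δ(z) ≤ δ(x) + |x - z|`, the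
potential at `x` is at most `δ(x)^(γ/2)` times the Riesz potential of `g`, which is controlled by
the Hardy–Littlewood–Sobolev inequality, plus a potential of `g` with the milder kernel
`|x - z|^(1 - n + γ/2)`, which is subcritical for the measure `m` because `m(B(x, r)) ≲ r^(d + 1)`.

If `u` has trace `0` on `Γ ∩ B`, averaging the bound for `|u - u_B|` over small balls around
`z ∈ Γ` bounds `|u_B|` by the Riesz potential of `|∇u| 1_B` at `z`. Integrating in `σ` replaces the
kernel by `∫_Γ |z - t|^(1 - n) dσ(z) ≲ δ(t)^(d + 1 - n) = w(t)`, hence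
`r^d |u_B| ≲ ∫_B |∇u| dm`, and the Cauchy–Schwarz inequality concludes.
-/

section PowerKernels

lemma ennreal_rpow_le_rpow_of_nonpos {a b : ℝ≥0∞} {s : ℝ} (hs : s ≤ 0) (h : a ≤ b) :
    b ^ s ≤ a ^ s := by
  rw [← neg_neg s, ENNReal.rpow_neg, ENNReal.rpow_neg a]
  exact ENNReal.inv_le_inv.2 (ENNReal.rpow_le_rpow h (by linarith))

lemma ofReal_rpow_add {r : ℝ} (hr : 0 < r) (a b : ℝ) :
    ENNReal.ofReal r ^ (a + b) = ENNReal.ofReal r ^ a * ENNReal.ofReal r ^ b :=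
  ENNReal.rpow_add _ _ (by simpa using hr) ENNReal.ofReal_ne_top

lemma ofReal_mul_rpow {a b : ℝ} (ha : 0 ≤ a) (s : ℝ) :
    ENNReal.ofReal (a * b) ^ s = ENNReal.ofReal a ^ s * ENNReal.ofReal b ^ s := by
  rw [ENNReal.ofReal_mul ha,
    ENNReal.mul_rpow_of_ne_top ENNReal.ofReal_ne_top ENNReal.ofReal_ne_top]

lemma tsum_ofReal_mul_pow_rpow {R q : ℝ} (hR : 0 ≤ R) (hq : 0 ≤ q) (s : ℝ) :
    ∑' j : ℕ, ENNReal.ofReal (R * q ^ j) ^ s =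
      ENNReal.ofReal R ^ s * (1 - ENNReal.ofReal q ^ s)⁻¹ := by
  have term (j : ℕ) : ENNReal.ofReal (R * q ^ j) ^ s =
      ENNReal.ofReal R ^ s * (ENNReal.ofReal q ^ s) ^ j := by
    rw [ofReal_mul_rpow hR, ENNReal.ofReal_pow hq, ← ENNReal.rpow_natCast,
      ← ENNReal.rpow_mul, mul_comm (j : ℝ) s, ENNReal.rpow_mul, ENNReal.rpow_natCast]
  simp_rw [term, ENNReal.tsum_mul_left, ENNReal.tsum_geometric]

lemma edist_rpow_neg_le_of_two_mul_le_dist {X : Type*} [PseudoMetricSpace X] {κ ρ : ℝ}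
    (hκ : 0 ≤ κ) {t y z : X} (hzt : 2 * ρ ≤ dist z t) (hy : y ∈ ball z ρ) :
    edist y t ^ (-κ) ≤ 2 ^ κ * edist z t ^ (-κ) := by
  have hdist : dist z t ≤ 2 * dist y t := by
    rw [mem_ball, dist_comm] at hy
    linarith [dist_triangle z y t]
  have hedist : edist z t / 2 ≤ edist y t := by
    rw [edist_dist, edist_dist]
    refine ENNReal.div_le_of_le_mul' ?_
    simpa [ENNReal.ofReal_mul] using ENNReal.ofReal_le_ofReal hdist
  refine (ennreal_rpow_le_rpow_of_nonpos (by linarith) hedist).trans_eq ?_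
  rw [div_eq_mul_inv, ENNReal.mul_rpow_of_ne_top (edist_ne_top _ _) (by simp), ENNReal.inv_rpow,
    ← ENNReal.rpow_neg, neg_neg, mul_comm]

/-- The constant in the bounds for integrals of `|y - a|^(-κ)` against a measure whose balls
centred at `a` have mass at most `s ^ β`. -/
def kernelConst (β κ : ℝ) : ℝ≥0∞ := 4 ^ β * (1 - 2 ^ (-|β - κ|))⁻¹

lemma kernelConst_ne_top {β κ : ℝ} (h : β ≠ κ) : kernelConst β κ ≠ ⊤ := by
  have hlt : (2 : ℝ≥0∞) ^ (-|β - κ|) < 1 :=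
    ENNReal.rpow_lt_one_of_one_lt_of_neg (by norm_num) (by simpa [sub_eq_zero] using h)
  exact ENNReal.mul_ne_top (by finiteness) (ENNReal.inv_ne_top.2 (tsub_pos_of_lt hlt).ne')

variable {X : Type*} [PseudoMetricSpace X] [MeasurableSpace X]

/-- Polynomial growth of `μ` at the point `a`: the ball of radius `s` has mass at most `A s^β`. -/
def HasGrowthAt (μ : Measure X) (a : X) (A : ℝ≥0∞) (β : ℝ) : Prop :=
  ∀ s : ℝ, 0 < s → μ (ball a s) ≤ A * ENNReal.ofReal s ^ β

variable {μ : Measure X} {a z : X} {A : ℝ≥0∞} {β κ R ρ : ℝ}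

lemma HasGrowthAt.measure_closedBall_zero (h : HasGrowthAt μ a A β) (hA : A ≠ ⊤) (hβ : 0 < β) :
    μ (closedBall a 0) = 0 := by
  have hlim : Tendsto (fun s : ℝ => A * ENNReal.ofReal s ^ β) (𝓝[>] 0) (𝓝 0) := by
    have hpow : Tendsto (fun s : ℝ => ENNReal.ofReal s ^ β) (𝓝[>] 0) (𝓝 0) := by
      have := ((ENNReal.continuous_rpow_const (y := β)).comp ENNReal.continuous_ofReal).tendsto 0
      simpa [hβ, Function.comp_def] using this.mono_left nhdsWithin_le_nhds
    simpa using ENNReal.Tendsto.const_mul hpow (Or.inr hA)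
  refine le_antisymm (ge_of_tendsto hlim ?_) zero_le
  filter_upwards [self_mem_nhdsWithin] with s hs
  exact (measure_mono (closedBall_subset_ball hs)).trans (h s hs)

variable [OpensMeasurableSpace X]

lemma HasGrowthAt.setLIntegral_edist_rpow_neg_le_tsum (h : HasGrowthAt μ a A β) (hκ : 0 ≤ κ)
    {r : ℕ → ℝ} (hr : ∀ j, 0 < r j) {S : Set X}
    (hS : ∀ᵐ y ∂μ.restrict S, ∃ j, r j ≤ dist y a ∧ dist y a < 4 * r j) :
    ∫⁻ y in S, edist y a ^ (-κ) ∂μ ≤ 4 ^ β * A * ∑' j, ENNReal.ofReal (r j) ^ (β - κ) := by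
  calc ∫⁻ y in S, edist y a ^ (-κ) ∂μ
      ≤ ∫⁻ y in S, ∑' j, (ball a (4 * r j)).indicator
          (fun _ => ENNReal.ofReal (r j) ^ (-κ)) y ∂μ := by
        refine lintegral_mono_ae ?_
        filter_upwards [hS] with y ⟨j, hj, hj'⟩
        refine le_trans ?_ (ENNReal.le_tsum j)
        rw [indicator_of_mem (mem_ball.2 hj'), edist_dist]
        exact ennreal_rpow_le_rpow_of_nonpos (by linarith) (ENNReal.ofReal_le_ofReal hj)
    _ ≤ ∫⁻ y, ∑' j, (ball a (4 * r j)).indicator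
          (fun _ => ENNReal.ofReal (r j) ^ (-κ)) y ∂μ := setLIntegral_le_lintegral _ _
    _ = ∑' j, ENNReal.ofReal (r j) ^ (-κ) * μ (ball a (4 * r j)) := by
        rw [lintegral_tsum fun j => (measurable_const.indicator measurableSet_ball).aemeasurable]
        simp_rw [lintegral_indicator measurableSet_ball, setLIntegral_const]
    _ ≤ ∑' j, 4 ^ β * A * ENNReal.ofReal (r j) ^ (β - κ) := by
        refine ENNReal.tsum_le_tsum fun j => ?_
        have hj := hr j
        calc _ ≤ ENNReal.ofReal (r j) ^ (-κ) * (A * ENNReal.ofReal (4 * r j) ^ β) := by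
              gcongr; exact h _ (by positivity)
          _ = _ := by
              rw [ofReal_mul_rpow (by norm_num), ENNReal.ofReal_ofNat, sub_eq_add_neg,
                ofReal_rpow_add hj]
              ring
    _ = _ := ENNReal.tsum_mul_left

lemma HasGrowthAt.setLIntegral_ball_edist_rpow_neg_le (h : HasGrowthAt μ a A β) (hκ : 0 ≤ κ)
    (hκβ : κ < β) (hR : 0 < R) :
    ∫⁻ y in ball a R, edist y a ^ (-κ) ∂μ ≤ kernelConst β κ * A * ENNReal.ofReal R ^ (β - κ) := by
  rcases eq_or_ne A ⊤ with rfl | hA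
  · simp [kernelConst, ENNReal.mul_top, ENNReal.top_mul, hR]
  have hS : ∀ᵐ y ∂μ.restrict (ball a R), ∃ j : ℕ,
      R / 2 * (1 / 2) ^ j ≤ dist y a ∧ dist y a < 4 * (R / 2 * (1 / 2) ^ j) := by
    have hnull : ∀ᵐ y ∂μ, y ∉ closedBall a 0 :=
      measure_eq_zero_iff_ae_notMem.1 (h.measure_closedBall_zero hA (hκ.trans_lt hκβ))
    filter_upwards [ae_restrict_mem measurableSet_ball, ae_restrict_of_ae hnull] with y hy hya
    rw [mem_closedBall, not_le] at hya
    obtain ⟨j, hj, hj'⟩ := exists_nat_pow_near_of_lt_one (x := dist y a / R) (y := 1 / 2)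
      (by positivity) (div_le_one_of_le₀ (mem_ball.1 hy).le hR.le) (by norm_num) (by norm_num)
    rw [lt_div_iff₀ hR, pow_succ] at hj
    rw [div_le_iff₀ hR] at hj'
    refine ⟨j, by linarith, ?_⟩
    have : 0 < (1 / 2 : ℝ) ^ j * R := by positivity
    linarith
  refine (h.setLIntegral_edist_rpow_neg_le_tsum hκ (fun j => by positivity) hS).trans ?_
  rw [tsum_ofReal_mul_pow_rpow (by positivity) (by norm_num), kernelConst,
    abs_of_pos (sub_pos.2 hκβ), one_div, ENNReal.ofReal_inv_of_pos two_pos, ENNReal.ofReal_ofNat,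
    ENNReal.inv_rpow, ← ENNReal.rpow_neg]
  have : ENNReal.ofReal (R / 2) ^ (β - κ) ≤ ENNReal.ofReal R ^ (β - κ) :=
    ENNReal.rpow_le_rpow (ENNReal.ofReal_le_ofReal (by linarith)) (by linarith)
  calc _ ≤ 4 ^ β * A * (ENNReal.ofReal R ^ (β - κ) * (1 - 2 ^ (-(β - κ)))⁻¹) := by gcongr
    _ = _ := by ring

lemma HasGrowthAt.setLIntegral_compl_ball_edist_rpow_neg_le (h : HasGrowthAt μ a A β)
    (hκ : 0 ≤ κ) (hβκ : β < κ) (hR : 0 < R) :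
    ∫⁻ y in (ball a R)ᶜ, edist y a ^ (-κ) ∂μ ≤
      kernelConst β κ * A * ENNReal.ofReal R ^ (β - κ) := by
  have hS : ∀ᵐ y ∂μ.restrict (ball a R)ᶜ, ∃ j : ℕ,
      R * 2 ^ j ≤ dist y a ∧ dist y a < 4 * (R * 2 ^ j) := by
    filter_upwards [ae_restrict_mem measurableSet_ball.compl] with y hy
    have hRy : R ≤ dist y a := by simpa using hy
    obtain ⟨j, hj, hj'⟩ := exists_nat_pow_near (x := dist y a / R) (y := (2 : ℝ))
      ((one_le_div hR).2 hRy) (by norm_num)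
    rw [le_div_iff₀ hR] at hj
    rw [div_lt_iff₀ hR, pow_succ] at hj'
    have : 0 < (2 : ℝ) ^ j * R := by positivity
    exact ⟨j, by linarith, by linarith⟩
  refine (h.setLIntegral_edist_rpow_neg_le_tsum hκ (fun j => by positivity) hS).trans_eq ?_
  rw [tsum_ofReal_mul_pow_rpow hR.le two_pos.le, kernelConst, abs_of_neg (sub_neg.2 hβκ), neg_neg,
    ENNReal.ofReal_ofNat]
  ring

lemma HasGrowthAt.setLIntegral_ball_edist_rpow_neg_le_of_dist_le {t : X}
    (h : HasGrowthAt μ t A β) (hκ : 0 ≤ κ) (hκβ : κ < β) (hρ : 0 < ρ) (hzt : dist z t ≤ 2 * ρ) :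
    ∫⁻ y in ball z ρ, edist y t ^ (-κ) ∂μ ≤
      kernelConst β κ * 3 ^ (β - κ) * 2 ^ κ * A * ENNReal.ofReal ρ ^ β * edist z t ^ (-κ) := by
  have hsub : ball z ρ ⊆ ball t (3 * ρ) := ball_subset_ball' (by linarith)
  have htwo : (2 : ℝ≥0∞) ^ κ * 2 ^ (-κ) = 1 := by
    rw [← ENNReal.rpow_add _ _ (by norm_num) (by norm_num)]; simp
  calc ∫⁻ y in ball z ρ, edist y t ^ (-κ) ∂μ
      ≤ ∫⁻ y in ball t (3 * ρ), edist y t ^ (-κ) ∂μ := lintegral_mono_set hsub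
    _ ≤ kernelConst β κ * A * ENNReal.ofReal (3 * ρ) ^ (β - κ) :=
        h.setLIntegral_ball_edist_rpow_neg_le hκ hκβ (by positivity)
    _ = kernelConst β κ * 3 ^ (β - κ) * A * ENNReal.ofReal ρ ^ (β - κ) * (2 ^ κ * 2 ^ (-κ)) := by
        rw [ofReal_mul_rpow (by norm_num), ENNReal.ofReal_ofNat, htwo]; ring
    _ = kernelConst β κ * 3 ^ (β - κ) * 2 ^ κ * A * ENNReal.ofReal ρ ^ β *
          ENNReal.ofReal (2 * ρ) ^ (-κ) := by
        rw [sub_eq_add_neg β κ, ofReal_rpow_add hρ, ofReal_mul_rpow (by norm_num),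
          ENNReal.ofReal_ofNat]
        ring
    _ ≤ _ := by
        refine mul_le_mul_right (ennreal_rpow_le_rpow_of_nonpos (by linarith) ?_) _
        rw [edist_dist]
        exact ENNReal.ofReal_le_ofReal hzt

/-- The constant in the bound of the average of `|y - t|^(-κ)` over a ball by its value at the
centre. -/
def kernelAvgConst (β κ : ℝ) : ℝ≥0∞ := 2 ^ κ + kernelConst β κ * 3 ^ (β - κ) * 2 ^ κ

lemma kernelAvgConst_ne_top (h : β ≠ κ) : kernelAvgConst β κ ≠ ⊤ := by
  have := kernelConst_ne_top h
  unfold kernelAvgConst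
  finiteness

lemma HasGrowthAt.setLIntegral_ball_edist_rpow_neg_le_center {t : X} (hz : HasGrowthAt μ z A β)
    (ht : HasGrowthAt μ t A β) (hκ : 0 ≤ κ) (hκβ : κ < β) (hρ : 0 < ρ) :
    ∫⁻ y in ball z ρ, edist y t ^ (-κ) ∂μ ≤
      kernelAvgConst β κ * A * ENNReal.ofReal ρ ^ β * edist z t ^ (-κ) := by
  rcases le_total (2 * ρ) (dist z t) with hzt | hzt
  · calc ∫⁻ y in ball z ρ, edist y t ^ (-κ) ∂μ
        ≤ ∫⁻ _ in ball z ρ, 2 ^ κ * edist z t ^ (-κ) ∂μ :=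
          setLIntegral_mono' measurableSet_ball fun y hy =>
            edist_rpow_neg_le_of_two_mul_le_dist hκ hzt hy
      _ ≤ 2 ^ κ * edist z t ^ (-κ) * (A * ENNReal.ofReal ρ ^ β) := by
          rw [setLIntegral_const]; gcongr; exact hz ρ hρ
      _ = 2 ^ κ * A * ENNReal.ofReal ρ ^ β * edist z t ^ (-κ) := by ring
      _ ≤ _ := by gcongr; exact le_self_add
  · refine (ht.setLIntegral_ball_edist_rpow_neg_le_of_dist_le hκ hκβ hρ hzt).trans ?_
    gcongr
    exact le_add_self

end PowerKernels

section UnitBall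

/-- The volume of the unit ball of `ℝⁿ`. -/
def unitBallVolume (n : ℕ) : ℝ≥0∞ := volume (ball (0 : Euc n) 1)

lemma unitBallVolume_ne_top (n : ℕ) : unitBallVolume n ≠ ⊤ := measure_ball_lt_top.ne

lemma unitBallVolume_ne_zero (n : ℕ) : unitBallVolume n ≠ 0 := (measure_ball_pos _ _ one_pos).ne'

lemma volume_ball_eq {n : ℕ} (x : Euc n) {s : ℝ} (hs : 0 < s) :
    volume (ball x s) = unitBallVolume n * ENNReal.ofReal s ^ (n : ℝ) := by
  rw [Measure.addHaar_ball_of_pos _ _ hs, finrank_euclideanSpace_fin, mul_comm, unitBallVolume,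
    ENNReal.ofReal_pow hs.le, ENNReal.rpow_natCast]

lemma hasGrowthAt_volume {n : ℕ} (x : Euc n) : HasGrowthAt volume x (unitBallVolume n) n :=
  fun _ hs => (volume_ball_eq x hs).le

end UnitBall

section DyadicSums

variable {X : Type*} [MeasurableSpace X] {μ : Measure X}

lemma two_zpow_ne_zero (k : ℤ) : (2 : ℝ≥0∞) ^ k ≠ 0 :=
  (ENNReal.zpow_pos (by norm_num) (by norm_num) _).ne'

lemma two_zpow_ne_top (k : ℤ) : (2 : ℝ≥0∞) ^ k ≠ ⊤ :=
  (ENNReal.zpow_lt_top (by norm_num) (by norm_num) _).ne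

lemma sq_le_tsum_two_zpow (x : ℝ≥0∞) :
    x ^ 2 ≤ ∑' k : ℤ, if (2 : ℝ≥0∞) ^ k < x then 4 * ((2 : ℝ≥0∞) ^ k) ^ 2 else 0 := by
  rcases eq_or_ne x 0 with rfl | h0
  · simp
  rcases eq_or_ne x ⊤ with rfl | ht
  · have hterm (k : ℕ) :
        1 ≤ if (2 : ℝ≥0∞) ^ (k : ℤ) < ⊤ then 4 * ((2 : ℝ≥0∞) ^ (k : ℤ)) ^ 2 else 0 := by
      rw [if_pos (two_zpow_ne_top _).lt_top, zpow_natCast, ← one_mul 1]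
      exact mul_le_mul' (by norm_num) (one_le_pow₀ (one_le_pow₀ (by norm_num)))
    calc (⊤ : ℝ≥0∞) ^ 2 ≤ ⊤ := le_top
      _ = ∑' _ : ℕ, (1 : ℝ≥0∞) := (ENNReal.tsum_const_eq_top_of_ne_zero one_ne_zero).symm
      _ ≤ _ := (ENNReal.tsum_le_tsum hterm).trans
          (ENNReal.tsum_comp_le_tsum_of_injective Nat.cast_injective _)
  · obtain ⟨k, hk, hk'⟩ := ENNReal.exists_mem_Ioc_zpow h0 ht (y := 2) (by norm_num) (by norm_num)
    refine le_trans ?_ (ENNReal.le_tsum k)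
    rw [if_pos hk]
    calc x ^ 2 ≤ ((2 : ℝ≥0∞) ^ (k + 1)) ^ 2 := by gcongr
      _ = 4 * ((2 : ℝ≥0∞) ^ k) ^ 2 := by
          rw [ENNReal.zpow_add (by norm_num) (by norm_num), zpow_one, mul_pow]; norm_num; ring

lemma tsum_two_zpow_le (x : ℝ≥0∞) :
    ∑' k : ℤ, (if (2 : ℝ≥0∞) ^ k < x then (2 : ℝ≥0∞) ^ k else 0) ≤ 2 * x := by
  rcases eq_or_ne x 0 with rfl | h0
  · simp
  rcases eq_or_ne x ⊤ with rfl | ht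
  · simp
  obtain ⟨m, hm, hm'⟩ := ENNReal.exists_mem_Ioc_zpow h0 ht (y := 2) (by norm_num) (by norm_num)
  have hinj : Function.Injective fun j : ℕ => m - (j : ℤ) := fun i j h => by simpa using h
  rw [← hinj.tsum_eq]
  · calc ∑' j : ℕ, (if (2 : ℝ≥0∞) ^ (m - (j : ℤ)) < x then (2 : ℝ≥0∞) ^ (m - (j : ℤ)) else 0)
        ≤ ∑' j : ℕ, (2 : ℝ≥0∞) ^ m * 2⁻¹ ^ j := by
          refine ENNReal.tsum_le_tsum fun j => (ite_le_sup _ _ _).trans_eq ?_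
          rw [sup_of_le_left zero_le, ENNReal.zpow_sub (by norm_num) (by norm_num), zpow_natCast,
            ENNReal.inv_pow]
      _ = 2 ^ m * 2 := by
          rw [ENNReal.tsum_mul_left, ENNReal.tsum_geometric, ENNReal.one_sub_inv_two, inv_inv]
      _ ≤ 2 * x := by rw [mul_comm]; gcongr
  · intro k hk
    have hkx : (2 : ℝ≥0∞) ^ k < x := by
      by_contra h
      simp [h] at hk
    have hkm : k < m + 1 := by
      by_contra! h
      exact (hkx.trans_le hm').not_ge (ENNReal.zpow_le_of_le (by norm_num) h)
    exact ⟨(m - k).toNat, by simp; omega⟩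

lemma lintegral_sq_le_tsum_measure_lt (F : X → ℝ≥0∞) :
    ∫⁻ x, F x ^ 2 ∂μ ≤ ∑' k : ℤ, 4 * ((2 : ℝ≥0∞) ^ k) ^ 2 * μ {x | (2 : ℝ≥0∞) ^ k < F x} := by
  calc ∫⁻ x, F x ^ 2 ∂μ
      ≤ ∫⁻ x, ∑' k : ℤ, (toMeasurable μ {x | (2 : ℝ≥0∞) ^ k < F x}).indicator
          (fun _ => 4 * ((2 : ℝ≥0∞) ^ k) ^ 2) x ∂μ := by
        refine lintegral_mono fun x =>
          (sq_le_tsum_two_zpow _).trans (ENNReal.tsum_le_tsum fun k => ?_)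
        split_ifs with h
        · have hx : x ∈ toMeasurable μ {x | (2 : ℝ≥0∞) ^ k < F x} := subset_toMeasurable _ _ h
          rw [indicator_of_mem hx]
        · exact zero_le
    _ = _ := by
        rw [lintegral_tsum fun k =>
          (measurable_const.indicator (measurableSet_toMeasurable _ _)).aemeasurable]
        simp_rw [lintegral_indicator (measurableSet_toMeasurable _ _), setLIntegral_const,
          measure_toMeasurable]

/-- The `L²` case of Marcinkiewicz interpolation between weak type `(1,1)` and `L^∞`, with both
endpoint bounds combined into a weak type bound for the truncation of `g`. -/
lemma lintegral_sq_le_of_measure_lt_le {F g : X → ℝ≥0∞} (hg : Measurable g) (K b : ℝ≥0∞)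
    (hF : ∀ l : ℝ≥0∞, l ≠ 0 → l ≠ ⊤ →
      μ {x | l < F x} ≤ K * l⁻¹ * ∫⁻ y in {y | l < b * g y}, g y ∂μ) :
    ∫⁻ x, F x ^ 2 ∂μ ≤ 8 * K * b * ∫⁻ x, g x ^ 2 ∂μ := by
  have hset (k : ℤ) : MeasurableSet {y | (2 : ℝ≥0∞) ^ k < b * g y} :=
    measurableSet_lt measurable_const (hg.const_mul _)
  have hterm (k : ℤ) : Measurable fun y =>
      g y * if (2 : ℝ≥0∞) ^ k < b * g y then (2 : ℝ≥0∞) ^ k else 0 :=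
    hg.mul (Measurable.ite (hset k) measurable_const measurable_const)
  calc ∫⁻ x, F x ^ 2 ∂μ
      ≤ ∑' k : ℤ, 4 * ((2 : ℝ≥0∞) ^ k) ^ 2 * μ {x | (2 : ℝ≥0∞) ^ k < F x} :=
        lintegral_sq_le_tsum_measure_lt F
    _ ≤ ∑' k : ℤ, 4 * K *
          ∫⁻ y, g y * (if (2 : ℝ≥0∞) ^ k < b * g y then (2 : ℝ≥0∞) ^ k else 0) ∂μ := by
        refine ENNReal.tsum_le_tsum fun k => ?_
        have hk0 := two_zpow_ne_zero k
        have hkt := two_zpow_ne_top k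
        calc _ ≤ 4 * ((2 : ℝ≥0∞) ^ k) ^ 2 *
              (K * (2 ^ k)⁻¹ * ∫⁻ y in {y | (2 : ℝ≥0∞) ^ k < b * g y}, g y ∂μ) := by
              gcongr; exact hF _ hk0 hkt
          _ = 4 * K * (2 ^ k * (2 ^ k)⁻¹) *
              (2 ^ k * ∫⁻ y in {y | (2 : ℝ≥0∞) ^ k < b * g y}, g y ∂μ) := by ring
          _ = _ := by
              rw [ENNReal.mul_inv_cancel hk0 hkt, mul_one, ← lintegral_const_mul _ hg,
                ← lintegral_indicator (hset k)]
              congr 2 with y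
              by_cases h : (2 : ℝ≥0∞) ^ k < b * g y <;> simp [h, mul_comm]
    _ = 4 * K * ∫⁻ y, g y *
          ∑' k : ℤ, (if (2 : ℝ≥0∞) ^ k < b * g y then (2 : ℝ≥0∞) ^ k else 0) ∂μ := by
        rw [ENNReal.tsum_mul_left, ← lintegral_tsum fun k => (hterm k).aemeasurable]
        simp_rw [ENNReal.tsum_mul_left]
    _ ≤ 4 * K * ∫⁻ y, g y * (2 * (b * g y)) ∂μ := by
        gcongr; exact tsum_two_zpow_le _
    _ = _ := by
        have (y : X) : g y * (2 * (b * g y)) = 2 * b * g y ^ 2 := by ring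
        simp_rw [this]
        rw [lintegral_const_mul _ (hg.pow_const 2)]
        ring

end DyadicSums

section MaximalFunction

variable {n : ℕ} {g : Euc n → ℝ≥0∞}

/-- The centred Hardy–Littlewood maximal function, normalised by `s ^ n` in place of the volume
of the ball of radius `s`. -/
def maximalFunction (g : Euc n → ℝ≥0∞) (x : Euc n) : ℝ≥0∞ :=
  ⨆ s : {s : ℝ // 0 < s}, ENNReal.ofReal s ^ (-(n : ℝ)) * ∫⁻ y in ball x s, g y

lemma mul_ofReal_rpow_le_iff {a b : ℝ≥0∞} {s : ℝ} (hs : 0 < s) (t : ℝ) :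
    a * ENNReal.ofReal s ^ t ≤ b ↔ a ≤ ENNReal.ofReal s ^ (-t) * b := by
  rw [ENNReal.rpow_neg, mul_comm _⁻¹, ← div_eq_mul_inv]
  exact (ENNReal.le_div_iff_mul_le (Or.inl (ENNReal.rpow_pos (by simpa using hs) (by simp)).ne')
    (Or.inl (by finiteness))).symm

lemma le_mul_ofReal_rpow_iff {a b : ℝ≥0∞} {s : ℝ} (hs : 0 < s) (t : ℝ) :
    b ≤ a * ENNReal.ofReal s ^ t ↔ ENNReal.ofReal s ^ (-t) * b ≤ a := by
  rw [ENNReal.rpow_neg, mul_comm _⁻¹, ← div_eq_mul_inv]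
  exact (ENNReal.div_le_iff_le_mul (Or.inl (ENNReal.rpow_pos (by simpa using hs) (by simp)).ne')
    (Or.inl (by finiteness))).symm

lemma rpow_neg_mul_setLIntegral_ball_le_maximalFunction (g : Euc n → ℝ≥0∞) (x : Euc n) {s : ℝ}
    (hs : 0 < s) :
    ENNReal.ofReal s ^ (-(n : ℝ)) * ∫⁻ y in ball x s, g y ≤ maximalFunction g x :=
  le_iSup (fun s : {s : ℝ // 0 < s} => ENNReal.ofReal s ^ (-(n : ℝ)) * ∫⁻ y in ball x s, g y)
    ⟨s, hs⟩

lemma hasGrowthAt_withDensity_maximalFunction (g : Euc n → ℝ≥0∞) (x : Euc n) :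
    HasGrowthAt (volume.withDensity g) x (maximalFunction g x) n := fun s hs => by
  rw [withDensity_apply _ measurableSet_ball, le_mul_ofReal_rpow_iff hs]
  exact rpow_neg_mul_setLIntegral_ball_le_maximalFunction g x hs

lemma volume_biUnion_ball_le {l : ℝ≥0∞} (hl0 : l ≠ 0) (hlt : l ≠ ⊤) {u : Set (Euc n)}
    (hu : u.Countable) {s : Euc n → ℝ} (hs : ∀ x ∈ u, 0 < s x)
    (hl : ∀ x ∈ u, l * ENNReal.ofReal (s x) ^ (n : ℝ) ≤ ∫⁻ y in ball x (s x), g y)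
    (hdisj : u.PairwiseDisjoint fun x => ball x (s x)) :
    volume (⋃ x ∈ u, ball x (4 * s x)) ≤ unitBallVolume n * 4 ^ (n : ℝ) * l⁻¹ * ∫⁻ y, g y := by
  calc volume (⋃ x ∈ u, ball x (4 * s x))
      ≤ ∑' x : u, volume (ball (x : Euc n) (4 * s x)) := measure_biUnion_le _ hu _
    _ ≤ ∑' x : u, unitBallVolume n * 4 ^ (n : ℝ) * l⁻¹ * ∫⁻ y in ball (x : Euc n) (s x), g y := by
        refine ENNReal.tsum_le_tsum fun ⟨x, hx⟩ => ?_
        have hsx := hs x hx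
        rw [volume_ball_eq _ (by positivity), ofReal_mul_rpow (by norm_num), ENNReal.ofReal_ofNat,
          ← mul_assoc, mul_assoc _ l⁻¹]
        gcongr
        rw [← ENNReal.mul_le_iff_le_inv hl0 hlt]
        exact hl x hx
    _ = unitBallVolume n * 4 ^ (n : ℝ) * l⁻¹ * ∫⁻ y in ⋃ x ∈ u, ball x (s x), g y := by
        rw [ENNReal.tsum_mul_left, lintegral_biUnion hu (fun _ _ => measurableSet_ball) hdisj]
    _ ≤ _ := mul_le_mul_right (setLIntegral_le_lintegral _ _) _

lemma volume_lt_maximalFunction_le (hn : 0 < n) (g : Euc n → ℝ≥0∞) {l : ℝ≥0∞} (hl0 : l ≠ 0)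
    (hlt : l ≠ ⊤) :
    volume {x | l < maximalFunction g x} ≤
      unitBallVolume n * 4 ^ (n : ℝ) * l⁻¹ * ∫⁻ y, g y := by
  rcases eq_or_ne (∫⁻ y, g y) ⊤ with hg | hg
  · rw [hg, ENNReal.mul_top]
    · exact le_top
    · simp [unitBallVolume_ne_zero, hlt]
  have hradius (x : Euc n) : ∃ s : ℝ, l < maximalFunction g x →
      0 < s ∧ l * ENNReal.ofReal s ^ (n : ℝ) ≤ ∫⁻ y in ball x s, g y := by
    by_cases hx : l < maximalFunction g x
    · obtain ⟨⟨s, hs⟩, hls⟩ := lt_iSup_iff.1 hx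
      exact ⟨s, fun _ => ⟨hs, (mul_ofReal_rpow_le_iff hs _).2 hls.le⟩⟩
    · exact ⟨0, fun h => absurd h hx⟩
  choose s hs using hradius
  have hbdd : ∀ x ∈ {x | l < maximalFunction g x},
      s x ≤ ((l⁻¹ * ∫⁻ y, g y) ^ (1 / (n : ℝ))).toReal := by
    intro x hx
    have hpow : ENNReal.ofReal (s x) ^ (n : ℝ) ≤ l⁻¹ * ∫⁻ y, g y := by
      rw [← ENNReal.mul_le_iff_le_inv hl0 hlt]
      exact (hs x hx).2.trans (setLIntegral_le_lintegral _ _)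
    rw [← ENNReal.ofReal_le_iff_le_toReal (by finiteness), one_div,
      ENNReal.le_rpow_inv_iff (by exact_mod_cast hn)]
    exact hpow
  obtain ⟨u, hu, hdisj, hcover⟩ := Vitali.exists_disjoint_subfamily_covering_enlargement_ball
    {x | l < maximalFunction g x} id s _ hbdd 4 (by norm_num)
  simp only [id] at hdisj hcover
  have hcount : u.Countable := hdisj.countable_of_isOpen (fun _ _ => isOpen_ball)
    fun x hx => ⟨x, mem_ball_self (hs x (hu hx)).1⟩
  refine (measure_mono fun x hx => ?_).trans (volume_biUnion_ball_le hl0 hlt hcount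
    (fun x hx => (hs x (hu hx)).1) (fun x hx => (hs x (hu hx)).2) hdisj)
  obtain ⟨b, hb, hsub⟩ := hcover x hx
  exact mem_biUnion hb (hsub (mem_ball_self (hs x hx).1))

lemma maximalFunction_le_add {g h : Euc n → ℝ≥0∞} {c : ℝ≥0∞} (hgh : ∀ y, g y ≤ h y + c)
    (x : Euc n) : maximalFunction g x ≤ maximalFunction h x + unitBallVolume n * c := by
  refine iSup_le fun ⟨s, hs⟩ => ?_
  calc ENNReal.ofReal s ^ (-(n : ℝ)) * ∫⁻ y in ball x s, g y
      ≤ ENNReal.ofReal s ^ (-(n : ℝ)) * ∫⁻ y in ball x s, (h y + c) := by gcongr; exact hgh _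
    _ = ENNReal.ofReal s ^ (-(n : ℝ)) * (∫⁻ y in ball x s, h y) +
          (ENNReal.ofReal s ^ (-(n : ℝ)) * ENNReal.ofReal s ^ (n : ℝ)) *
            (unitBallVolume n * c) := by
        rw [lintegral_add_right _ measurable_const, setLIntegral_const, volume_ball_eq _ hs]
        ring
    _ ≤ _ := by
        rw [← ofReal_rpow_add hs, neg_add_cancel, ENNReal.rpow_zero, one_mul]
        gcongr
        exact rpow_neg_mul_setLIntegral_ball_le_maximalFunction h x hs

lemma volume_lt_maximalFunction_le_truncated (hn : 0 < n) (hg : Measurable g) {l : ℝ≥0∞}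
    (hl0 : l ≠ 0) (hlt : l ≠ ⊤) :
    volume {x | l < maximalFunction g x} ≤ 2 * (unitBallVolume n * 4 ^ (n : ℝ)) * l⁻¹ *
      ∫⁻ y in {y | l < 2 * unitBallVolume n * g y}, g y := by
  have hV0 : 2 * unitBallVolume n ≠ 0 := mul_ne_zero two_ne_zero (unitBallVolume_ne_zero n)
  have hVt : 2 * unitBallVolume n ≠ ⊤ := ENNReal.mul_ne_top (by simp) (unitBallVolume_ne_top n)
  set S : Set (Euc n) := {y | l < 2 * unitBallVolume n * g y}
  have hSm : MeasurableSet S := measurableSet_lt measurable_const (hg.const_mul _)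
  have hsplit (y : Euc n) : g y ≤ S.indicator g y + l / (2 * unitBallVolume n) := by
    by_cases hy : y ∈ S
    · rw [indicator_of_mem hy]; exact le_self_add
    · refine le_trans ?_ le_add_self
      rw [ENNReal.le_div_iff_mul_le (Or.inl hV0) (Or.inl hVt), mul_comm]
      exact not_lt.1 hy
  have hhalf : unitBallVolume n * (l / (2 * unitBallVolume n)) = l / 2 := by
    rw [← mul_div_assoc, mul_comm 2, ENNReal.mul_div_mul_left _ _ (unitBallVolume_ne_zero n)
      (unitBallVolume_ne_top n)]
  have hsub : {x | l < maximalFunction g x} ⊆ {x | l / 2 < maximalFunction (S.indicator g) x} := by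
    intro x hx
    by_contra! hx'
    refine (mem_ofPred_eq ▸ hx : l < _).not_ge ?_
    calc maximalFunction g x ≤ maximalFunction (S.indicator g) x + l / 2 :=
          hhalf ▸ maximalFunction_le_add hsplit x
      _ ≤ l / 2 + l / 2 := by gcongr; exact not_lt.1 hx'
      _ = l := ENNReal.add_halves l
  calc volume {x | l < maximalFunction g x}
      ≤ unitBallVolume n * 4 ^ (n : ℝ) * (l / 2)⁻¹ * ∫⁻ y, S.indicator g y :=
        (measure_mono hsub).trans (volume_lt_maximalFunction_le hn _ (by simp [hl0])
          (ENNReal.div_ne_top hlt (by norm_num)))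
    _ = _ := by
        rw [lintegral_indicator hSm, ENNReal.inv_div (by simp) (by simp), div_eq_mul_inv]
        ring

lemma lintegral_maximalFunction_sq_le (hn : 0 < n) (hg : Measurable g) :
    ∫⁻ x, maximalFunction g x ^ 2 ≤
      8 * (2 * (unitBallVolume n * 4 ^ (n : ℝ))) * (2 * unitBallVolume n) * ∫⁻ x, g x ^ 2 :=
  lintegral_sq_le_of_measure_lt_le hg _ _ fun _ hl0 hlt =>
    volume_lt_maximalFunction_le_truncated hn hg hl0 hlt

end MaximalFunction

section RieszPotential

lemma ball_subset_ball_two_mul {Y : Type*} [PseudoMetricSpace Y] {c x : Y} {r : ℝ}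
    (hx : x ∈ ball c r) : ball c r ⊆ ball x (2 * r) :=
  ball_subset_ball' (by rw [mem_ball, dist_comm] at hx; linarith)

variable {X : Type*} [PseudoMetricSpace X] [MeasurableSpace X] [OpensMeasurableSpace X]

/-- The potential `x ↦ ∫ |z - x|^(-κ) g(z) dν(z)`; for `ν` the Lebesgue measure on `ℝⁿ` it is the
Riesz potential of order `n - κ` of `g`, up to normalisation. -/
def rieszPotential (κ : ℝ) (ν : Measure X) (g : X → ℝ≥0∞) (x : X) : ℝ≥0∞ :=
  ∫⁻ z, edist z x ^ (-κ) * g z ∂ν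

lemma measurable_edist_rpow_left (κ : ℝ) (x : X) : Measurable fun z => edist z x ^ κ :=
  measurable_edist_left.pow_const κ

lemma measurable_edist_rpow_mul [SecondCountableTopology X] (κ : ℝ) {g : X → ℝ≥0∞}
    (hg : Measurable g) : Measurable fun q : X × X => edist q.2 q.1 ^ κ * g q.2 :=
  ((measurable_snd.edist measurable_fst).pow_const κ).mul (hg.comp measurable_snd)

lemma measurable_rieszPotential [SecondCountableTopology X] (κ : ℝ) (ν : Measure X) [SFinite ν]
    {g : X → ℝ≥0∞} (hg : Measurable g) : Measurable (rieszPotential κ ν g) :=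
  (measurable_edist_rpow_mul _ hg).lintegral_prod_right'

lemma edist_rpow_neg_add {Y : Type*} [PseudoEMetricSpace Y] {a b : ℝ} (ha : 0 ≤ a) (hb : 0 ≤ b)
    (z x : Y) : edist z x ^ (-(a + b)) = edist z x ^ (-a) * edist z x ^ (-b) := by
  simp only [ENNReal.rpow_neg, ← ENNReal.inv_rpow]
  exact ENNReal.rpow_add_of_nonneg _ _ ha hb

lemma lintegral_mul_mul_rpow_le {Y : Type*} [MeasurableSpace Y] {ν : Measure Y} {p : ℝ}
    (hp : 2 ≤ p) {k l g : Y → ℝ≥0∞} (hk : Measurable k) (hl : Measurable l) (hg : Measurable g) :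
    (∫⁻ z, k z * l z * g z ∂ν) ^ p ≤ (∫⁻ z, k z ^ p * g z ^ 2 ∂ν) *
      (∫⁻ z, g z ^ 2 ∂ν) ^ (p / 2 - 1) * (∫⁻ z, l z ^ (2 : ℝ) ∂ν) ^ (p / 2) := by
  have hp0 : 0 < p := by linarith
  have hpinv : 0 ≤ 1 / 2 - 1 / p := sub_nonneg.2 (one_div_le_one_div_of_le two_pos hp)
  have hholder := ENNReal.lintegral_prod_norm_pow_le (μ := ν) (Finset.univ : Finset (Fin 3))
    (f := ![fun z => k z ^ p * g z ^ 2, fun z => g z ^ 2, fun z => l z ^ (2 : ℝ)])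
    (p := ![1 / p, 1 / 2 - 1 / p, 1 / 2]) (by
      intro i _
      fin_cases i
      · exact ((hk.pow_const p).mul (hg.pow_const 2)).aemeasurable
      · exact (hg.pow_const 2).aemeasurable
      · exact (hl.pow_const _).aemeasurable)
    (by simp [Fin.sum_univ_three]; ring)
    (by
      intro i _
      fin_cases i
      · exact one_div_nonneg.2 (by linarith)
      · exact hpinv
      · exact one_half_pos.le)
  simp only [Fin.prod_univ_three, Matrix.cons_val_zero, Matrix.cons_val_one, Matrix.cons_val]
    at hholder
  have hsplit (z : Y) : k z * l z * g z =
      (k z ^ p * g z ^ 2) ^ (1 / p) * (g z ^ 2) ^ (1 / 2 - 1 / p) *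
        (l z ^ (2 : ℝ)) ^ (1 / 2 : ℝ) := by
    have hgz : g z = (g z ^ 2) ^ (1 / p) * (g z ^ 2) ^ (1 / 2 - 1 / p) := by
      rw [← ENNReal.rpow_add_of_nonneg _ _ (by positivity) hpinv, add_sub_cancel,
        ← ENNReal.rpow_two, ← ENNReal.rpow_mul]
      norm_num
    rw [ENNReal.mul_rpow_of_nonneg _ _ (by positivity), ← ENNReal.rpow_mul, ← ENNReal.rpow_mul,
      mul_one_div_cancel hp0.ne', mul_one_div_cancel two_ne_zero, ENNReal.rpow_one,
      ENNReal.rpow_one]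
    nth_rewrite 1 [hgz]
    ring
  simp_rw [hsplit]
  refine (ENNReal.rpow_le_rpow hholder hp0.le).trans_eq ?_
  rw [ENNReal.mul_rpow_of_nonneg _ _ hp0.le, ENNReal.mul_rpow_of_nonneg _ _ hp0.le,
    ← ENNReal.rpow_mul, ← ENNReal.rpow_mul, ← ENNReal.rpow_mul, one_div_mul_cancel hp0.ne',
    show (1 / 2 - 1 / p) * p = p / 2 - 1 by field_simp, one_div_mul_eq_div, ENNReal.rpow_one]

variable {μ ν : Measure X} {A A' : ℝ≥0∞} {α β κ a b p r : ℝ} {c : X} {g : X → ℝ≥0∞}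

lemma rieszPotential_ball_rpow_le (hν : ∀ x, HasGrowthAt ν x A' α) (hp : 2 ≤ p) (ha : 0 ≤ a)
    (hb : 0 ≤ b) (hbα : 2 * b < α) (hg : Measurable g) (hr : 0 < r) {x : X} (hx : x ∈ ball c r) :
    rieszPotential (a + b) (ν.restrict (ball c r)) g x ^ p ≤
      rieszPotential (a * p) (ν.restrict (ball c r)) (fun z => g z ^ 2) x *
        (∫⁻ z in ball c r, g z ^ 2 ∂ν) ^ (p / 2 - 1) *
        (kernelConst α (2 * b) * A' * ENNReal.ofReal (2 * r) ^ (α - 2 * b)) ^ (p / 2) := by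
  have hker : ∫⁻ z in ball c r, edist z x ^ (-(2 * b)) ∂ν ≤
      kernelConst α (2 * b) * A' * ENNReal.ofReal (2 * r) ^ (α - 2 * b) :=
    (lintegral_mono_set (ball_subset_ball_two_mul hx)).trans
      ((hν x).setLIntegral_ball_edist_rpow_neg_le (by positivity) hbα (by positivity))
  have hholder := lintegral_mul_mul_rpow_le (ν := ν.restrict (ball c r)) hp
    (measurable_edist_rpow_left (-a) x) (measurable_edist_rpow_left (-b) x) hg
  simp only [← edist_rpow_neg_add ha hb, ← ENNReal.rpow_mul, neg_mul, mul_comm b 2] at hholder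
  refine hholder.trans ?_
  gcongr
  rfl

lemma lintegral_rieszPotential_ball_le [SecondCountableTopology X] [SFinite μ] [SFinite ν]
    (hμ : ∀ x, HasGrowthAt μ x A β) (hκ : 0 ≤ κ) (hκβ : κ < β) (hg : Measurable g) (hr : 0 < r) :
    ∫⁻ x in ball c r, rieszPotential κ (ν.restrict (ball c r)) g x ∂μ ≤
      kernelConst β κ * A * ENNReal.ofReal (2 * r) ^ (β - κ) * ∫⁻ z in ball c r, g z ∂ν := by
  unfold rieszPotential
  rw [lintegral_lintegral_swap (measurable_edist_rpow_mul _ hg).aemeasurable,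
    ← lintegral_const_mul _ hg]
  refine setLIntegral_mono' measurableSet_ball fun z hz => ?_
  simp_rw [edist_comm z]
  rw [lintegral_mul_const _ (measurable_edist_rpow_left _ z)]
  gcongr
  exact (lintegral_mono_set (ball_subset_ball_two_mul hz)).trans
    ((hμ z).setLIntegral_ball_edist_rpow_neg_le hκ hκβ (by positivity))

lemma lintegral_rieszPotential_add_rpow_le [SecondCountableTopology X] [SFinite μ] [SFinite ν]
    (hμ : ∀ x, HasGrowthAt μ x A β) (hν : ∀ x, HasGrowthAt ν x A' α) (hp : 2 ≤ p) (ha : 0 ≤ a)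
    (hb : 0 ≤ b) (haβ : a * p < β) (hbα : 2 * b < α) (hg : Measurable g) (hr : 0 < r) :
    ∫⁻ x in ball c r, rieszPotential (a + b) (ν.restrict (ball c r)) g x ^ p ∂μ ≤
      (kernelConst α (2 * b) * A') ^ (p / 2) * kernelConst β (a * p) * A *
        ENNReal.ofReal (2 * r) ^ (β - p * (a + b) + p * α / 2) *
        (∫⁻ z in ball c r, g z ^ 2 ∂ν) ^ (p / 2) := by
  set N := ∫⁻ z in ball c r, g z ^ 2 ∂ν
  set T := (kernelConst α (2 * b) * A' * ENNReal.ofReal (2 * r) ^ (α - 2 * b)) ^ (p / 2) with hT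
  calc ∫⁻ x in ball c r, rieszPotential (a + b) (ν.restrict (ball c r)) g x ^ p ∂μ
      ≤ ∫⁻ x in ball c r, rieszPotential (a * p) (ν.restrict (ball c r)) (fun z => g z ^ 2) x *
          N ^ (p / 2 - 1) * T ∂μ :=
        setLIntegral_mono' measurableSet_ball fun x hx =>
          rieszPotential_ball_rpow_le hν hp ha hb hbα hg hr hx
    _ = (∫⁻ x in ball c r,
          rieszPotential (a * p) (ν.restrict (ball c r)) (fun z => g z ^ 2) x ∂μ) *
          N ^ (p / 2 - 1) * T := by
        simp_rw [mul_assoc]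
        rw [lintegral_mul_const _ (measurable_rieszPotential _ _ (hg.pow_const 2))]
    _ ≤ kernelConst β (a * p) * A * ENNReal.ofReal (2 * r) ^ (β - a * p) * N *
          N ^ (p / 2 - 1) * T := by
        gcongr
        exact lintegral_rieszPotential_ball_le hμ (by positivity) haβ (hg.pow_const 2) hr
    _ = (kernelConst α (2 * b) * A') ^ (p / 2) * kernelConst β (a * p) * A *
          (ENNReal.ofReal (2 * r) ^ (β - a * p) *
            ENNReal.ofReal (2 * r) ^ ((α - 2 * b) * (p / 2))) *
          (N ^ (1 : ℝ) * N ^ (p / 2 - 1)) := by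
        rw [hT, ENNReal.mul_rpow_of_nonneg _ _ (by positivity), ENNReal.rpow_mul, ENNReal.rpow_one]
        ring
    _ = _ := by
        rw [← ofReal_rpow_add (by positivity), ← ENNReal.rpow_add_of_nonneg _ _ zero_le_one
          (by linarith), add_sub_cancel]
        ring_nf

lemma exists_kernel_split (hκ : 0 < κ) (hα : 0 < α) (hβ : 0 < β) (hp : 0 < p)
    (h : p * (κ - α / 2) < β) :
    ∃ a b, 0 ≤ a ∧ 0 ≤ b ∧ a + b = κ ∧ a * p < β ∧ 2 * b < α := by
  obtain ⟨a, ha, ha'⟩ : ∃ a, max 0 (κ - α / 2) < a ∧ a < min κ (β / p) := by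
    refine exists_between (max_lt (lt_min hκ (by positivity)) (lt_min (by linarith) ?_))
    rwa [lt_div_iff₀ hp, mul_comm]
  rw [max_lt_iff] at ha
  rw [lt_min_iff, lt_div_iff₀ hp] at ha'
  exact ⟨a, κ - a, ha.1.le, by linarith, by ring, ha'.2, by linarith⟩

/-- The subcritical potential estimate. Part of the kernel is kept with `g` and integrated
against `μ`; Hölder's inequality integrates the other part against `ν`. -/
lemma exists_lintegral_rieszPotential_rpow_le_of_subcritical [SecondCountableTopology X]
    [SFinite ν] (hν : ∀ x, HasGrowthAt ν x A' α) (hA' : A' ≠ ⊤) (hp : 2 ≤ p) (hκ : 0 < κ)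
    (hα : 0 < α) (hβ : 0 < β) (h : p * (κ - α / 2) < β) :
    ∃ C : ℝ≥0∞, C ≠ ⊤ ∧ ∀ (μ : Measure X) [SFinite μ] (A : ℝ≥0∞),
      (∀ x, HasGrowthAt μ x A β) → ∀ (c : X) (r : ℝ), 0 < r → ∀ g : X → ℝ≥0∞, Measurable g →
        ∫⁻ x in ball c r, rieszPotential κ (ν.restrict (ball c r)) g x ^ p ∂μ ≤
          C * A * ENNReal.ofReal r ^ (β - p * κ + p * α / 2) *
            (∫⁻ z in ball c r, g z ^ 2 ∂ν) ^ (p / 2) := by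
  obtain ⟨a, b, ha, hb, rfl, haβ, hbα⟩ := exists_kernel_split hκ hα hβ (by linarith) h
  have hb' := kernelConst_ne_top hbα.ne'
  have ha' := kernelConst_ne_top haβ.ne'
  refine ⟨(kernelConst α (2 * b) * A') ^ (p / 2) * kernelConst β (a * p) *
    2 ^ (β - p * (a + b) + p * α / 2), by finiteness, ?_⟩
  intro μ _ A hμ c r hr g hg
  refine (lintegral_rieszPotential_add_rpow_le hμ hν hp ha hb haβ hbα hg hr).trans_eq ?_
  rw [ofReal_mul_rpow (by norm_num), ENNReal.ofReal_ofNat]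
  ring

end RieszPotential

section HardyLittlewoodSobolev

lemma kernelConst_ne_zero (β κ : ℝ) : kernelConst β κ ≠ 0 :=
  mul_ne_zero (ENNReal.rpow_pos (by norm_num) (by norm_num)).ne'
    (ENNReal.inv_ne_zero.2 (by finiteness))

lemma eq_zero_of_forall_le_mul_ofReal_rpow_neg {I K : ℝ≥0∞} {t : ℝ} (ht : 0 < t) (hK : K ≠ ⊤)
    (h : ∀ R : ℝ, 0 < R → I ≤ K * ENNReal.ofReal R ^ (-t)) : I = 0 := by
  have hlim : Tendsto (fun R : ℝ => K * ENNReal.ofReal R ^ (-t)) atTop (𝓝 0) := by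
    have hrpow := (ENNReal.continuous_rpow_const (y := -t)).tendsto ⊤
    rw [ENNReal.top_rpow_of_neg (by linarith)] at hrpow
    simpa using ENNReal.Tendsto.const_mul (hrpow.comp ENNReal.tendsto_ofReal_atTop) (Or.inr hK)
  exact le_zero_iff.1 (ge_of_tendsto hlim ((eventually_gt_atTop 0).mono h))

/-- The optimal radius `R` makes the two terms comparable: `b = a R^(s+t)`. -/
lemma rpow_le_of_forall_le_add {I a b K₁ K₂ : ℝ≥0∞} {s t p : ℝ} (hs : 0 < s) (ht : 0 < t)
    (hpt : p * t = 2 * (s + t)) (hK₁ : K₁ ≠ 0) (hK₂ : K₂ ≠ ⊤) (hb0 : b ≠ 0) (hbt : b ≠ ⊤)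
    (h : ∀ R : ℝ, 0 < R →
      I ≤ K₁ * a * ENNReal.ofReal R ^ s + K₂ * b * ENNReal.ofReal R ^ (-t)) :
    I ^ p ≤ (K₁ + K₂) ^ p * b ^ (p - 2) * a ^ 2 := by
  have hp2 : 2 < p := by nlinarith
  have hp0 : 0 < p := by linarith
  rcases eq_or_ne a 0 with rfl | ha0
  · have hI : I = 0 := eq_zero_of_forall_le_mul_ofReal_rpow_neg ht (ENNReal.mul_ne_top hK₂ hbt)
      (by simpa using h)
    simp [hI, hp0]
  rcases eq_or_ne a ⊤ with rfl | hat
  · have hcoef : (K₁ + K₂) ^ p * b ^ (p - 2) ≠ 0 := by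
      simp [ENNReal.rpow_eq_zero_iff, hK₁, hb0, hbt, hp0.not_gt]
    simp [ENNReal.mul_top hcoef]
  have hba0 : b / a ≠ 0 := (ENNReal.div_pos hb0 hat).ne'
  have hbat : b / a ≠ ⊤ := ENNReal.div_ne_top hbt ha0
  set ρ := (b / a) ^ (s + t)⁻¹ with hρ
  have hρ0 : ρ ≠ 0 := (ENNReal.rpow_pos (pos_iff_ne_zero.2 hba0) hbat).ne'
  have hρt : ρ ≠ ⊤ := ENNReal.rpow_ne_top_of_nonneg (by positivity) hbat
  have hbρ : b = a * ρ ^ (s + t) := by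
    rw [hρ, ENNReal.rpow_inv_rpow (by positivity), ENNReal.mul_div_cancel ha0 hat]
  have hbalance : b * ρ ^ (-t) = a * ρ ^ s := by
    rw [hbρ, mul_assoc, ← ENNReal.rpow_add _ _ hρ0 hρt, add_neg_cancel_right]
  have hI : I ≤ (K₁ + K₂) * (a * ρ ^ s) := by
    have := h ρ.toReal (ENNReal.toReal_pos hρ0 hρt)
    rwa [ENNReal.ofReal_toReal hρt, mul_assoc, mul_assoc K₂, hbalance, ← add_mul] at this
  calc I ^ p ≤ ((K₁ + K₂) * (a * ρ ^ s)) ^ p := by gcongr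
    _ = (K₁ + K₂) ^ p * (a ^ (p - 2) * ρ ^ (s * p)) * a ^ 2 := by
        have hap : a ^ p = a ^ (p - 2) * a ^ 2 := by
          rw [← ENNReal.rpow_two, ← ENNReal.rpow_add _ _ ha0 hat, sub_add_cancel]
        rw [ENNReal.mul_rpow_of_nonneg _ _ hp0.le, ENNReal.mul_rpow_of_nonneg _ _ hp0.le, hap,
          ENNReal.rpow_mul]
        ring
    _ = _ := by
        rw [hbρ, ENNReal.mul_rpow_of_nonneg _ _ (by linarith), ← ENNReal.rpow_mul ρ,
          show (s + t) * (p - 2) = s * p by linarith]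

variable {n : ℕ} {g : Euc n → ℝ≥0∞} {κ p R : ℝ}

lemma setLIntegral_ball_edist_rpow_neg_mul_le (hκ : 0 ≤ κ) (hκn : κ < n) (hg : Measurable g)
    (x : Euc n) (hR : 0 < R) :
    ∫⁻ z in ball x R, edist z x ^ (-κ) * g z ≤
      kernelConst n κ * maximalFunction g x * ENNReal.ofReal R ^ (n - κ) := by
  have hker := (hasGrowthAt_withDensity_maximalFunction g x).setLIntegral_ball_edist_rpow_neg_le
    hκ hκn hR
  rw [restrict_withDensity measurableSet_ball,
    lintegral_withDensity_eq_lintegral_mul _ hg (measurable_edist_rpow_left _ x)] at hker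
  simpa only [Pi.mul_apply, mul_comm] using hker

lemma setLIntegral_compl_ball_edist_rpow_neg_mul_le (hκ : (n : ℝ) < 2 * κ) (hg : Measurable g)
    (x : Euc n) (hR : 0 < R) :
    ∫⁻ z in (ball x R)ᶜ, edist z x ^ (-κ) * g z ≤
      (kernelConst n (2 * κ) * unitBallVolume n) ^ (1 / 2 : ℝ) *
        (∫⁻ z, g z ^ 2) ^ (1 / 2 : ℝ) * ENNReal.ofReal R ^ (-(κ - n / 2)) := by
  have hker : ∫⁻ z in (ball x R)ᶜ, (edist z x ^ (-κ)) ^ (2 : ℝ) ≤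
      kernelConst n (2 * κ) * unitBallVolume n * ENNReal.ofReal R ^ (n - 2 * κ) := by
    simp_rw [← ENNReal.rpow_mul, neg_mul, mul_comm κ 2]
    exact (hasGrowthAt_volume x).setLIntegral_compl_ball_edist_rpow_neg_le
      (by linarith [(n.cast_nonneg : (0 : ℝ) ≤ n)]) hκ hR
  calc ∫⁻ z in (ball x R)ᶜ, edist z x ^ (-κ) * g z
      ≤ (∫⁻ z in (ball x R)ᶜ, (edist z x ^ (-κ)) ^ (2 : ℝ)) ^ (1 / 2 : ℝ) *
          (∫⁻ z in (ball x R)ᶜ, g z ^ (2 : ℝ)) ^ (1 / 2 : ℝ) :=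
        ENNReal.lintegral_mul_le_Lp_mul_Lq _ Real.HolderConjugate.two_two
          (measurable_edist_rpow_left _ x).aemeasurable hg.aemeasurable
    _ ≤ (kernelConst n (2 * κ) * unitBallVolume n * ENNReal.ofReal R ^ (n - 2 * κ)) ^ (1 / 2 : ℝ) *
          (∫⁻ z, g z ^ (2 : ℝ)) ^ (1 / 2 : ℝ) := by
        gcongr
        exact Measure.restrict_le_self
    _ = _ := by
        simp_rw [ENNReal.rpow_two]
        rw [ENNReal.mul_rpow_of_nonneg _ _ (by norm_num), ← ENNReal.rpow_mul]
        ring_nf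

lemma rieszPotential_rpow_le_maximalFunction (hκn : κ < n) (hκ : (n : ℝ) < 2 * κ)
    (hp : p * (2 * κ - n) = 2 * n) (hg : Measurable g) (hN0 : ∫⁻ z, g z ^ 2 ≠ 0)
    (hNt : ∫⁻ z, g z ^ 2 ≠ ⊤) (x : Euc n) :
    rieszPotential κ volume g x ^ p ≤
      (kernelConst n κ + (kernelConst n (2 * κ) * unitBallVolume n) ^ (1 / 2 : ℝ)) ^ p *
        ((∫⁻ z, g z ^ 2) ^ (1 / 2 : ℝ)) ^ (p - 2) * maximalFunction g x ^ 2 := by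
  have hV := unitBallVolume_ne_top n
  have hker := kernelConst_ne_top hκ.ne
  refine rpow_le_of_forall_le_add (s := n - κ) (t := κ - n / 2) (by linarith) (by linarith)
    (by linarith) (kernelConst_ne_zero _ _) (by finiteness)
    (ENNReal.rpow_pos (pos_iff_ne_zero.2 hN0) hNt).ne' (by finiteness) fun R hR => ?_
  rw [rieszPotential, ← lintegral_add_compl _ (measurableSet_ball (x := x) (ε := R))]
  exact add_le_add
    (setLIntegral_ball_edist_rpow_neg_mul_le (by linarith [(n.cast_nonneg : (0 : ℝ) ≤ n)]) hκn
      hg x hR)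
    (setLIntegral_compl_ball_edist_rpow_neg_mul_le hκ hg x hR)

lemma rieszPotential_eq_zero (hg : Measurable g) (h : ∫⁻ z, g z ^ 2 = 0) (x : Euc n) :
    rieszPotential κ volume g x = 0 := by
  rw [lintegral_eq_zero_iff (hg.pow_const 2)] at h
  refine lintegral_eq_zero_of_ae_eq_zero (h.mono fun z hz => ?_)
  simp_all

lemma exists_lintegral_rieszPotential_rpow_le_of_critical (hκn : κ < n) (hκ : (n : ℝ) < 2 * κ)
    (hp : p * (2 * κ - n) = 2 * n) :
    ∃ C : ℝ≥0∞, C ≠ ⊤ ∧ ∀ g : Euc n → ℝ≥0∞, Measurable g →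
      ∫⁻ x, rieszPotential κ volume g x ^ p ≤ C * (∫⁻ z, g z ^ 2) ^ (p / 2) := by
  have hn : (0 : ℝ) < n := by linarith
  have hp2 : 2 < p := by nlinarith
  have hV := unitBallVolume_ne_top n
  have hV0 := unitBallVolume_ne_zero n
  have hker := kernelConst_ne_top hκn.ne'
  have hker' := kernelConst_ne_top hκ.ne
  set K := (kernelConst n κ + (kernelConst n (2 * κ) * unitBallVolume n) ^ (1 / 2 : ℝ)) ^ p with hK
  set M := 8 * (2 * (unitBallVolume n * 4 ^ (n : ℝ))) * (2 * unitBallVolume n) with hM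
  have hKt : K ≠ ⊤ := ENNReal.rpow_ne_top_of_nonneg (by linarith) (by finiteness)
  refine ⟨K * M, by finiteness, fun g hg => ?_⟩
  rcases eq_or_ne (∫⁻ z, g z ^ 2) 0 with hN0 | hN0
  · simp [rieszPotential_eq_zero hg hN0, show 0 < p by linarith]
  rcases eq_or_ne (∫⁻ z, g z ^ 2) ⊤ with hNt | hNt
  · have hC0 : K * M ≠ 0 := by
      simp [hK, hM, ENNReal.rpow_eq_zero_iff, kernelConst_ne_zero, hV0, show ¬ p < 0 by linarith]
    simp [hNt, ENNReal.top_rpow_of_pos (show 0 < p / 2 by linarith), ENNReal.mul_top hC0]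
  set N := ∫⁻ z, g z ^ 2
  calc ∫⁻ x, rieszPotential κ volume g x ^ p
      ≤ ∫⁻ x, K * (N ^ (1 / 2 : ℝ)) ^ (p - 2) * maximalFunction g x ^ 2 := lintegral_mono
        fun x => rieszPotential_rpow_le_maximalFunction hκn hκ hp hg hN0 hNt x
    _ = K * (N ^ (1 / 2 : ℝ)) ^ (p - 2) * ∫⁻ x, maximalFunction g x ^ 2 := by
        have : (N ^ (1 / 2 : ℝ)) ^ (p - 2) ≠ ⊤ :=
          ENNReal.rpow_ne_top_of_nonneg (by linarith) (by finiteness)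
        exact lintegral_const_mul' _ _ (by finiteness)
    _ ≤ K * (N ^ (1 / 2 : ℝ)) ^ (p - 2) * (M * N) := by
        gcongr; exact lintegral_maximalFunction_sq_le (by exact_mod_cast hn) hg
    _ = K * M * (N ^ ((1 / 2 : ℝ) * (p - 2)) * N ^ (1 : ℝ)) := by
        rw [← ENNReal.rpow_mul, ENNReal.rpow_one]; ring
    _ = _ := by rw [← ENNReal.rpow_add _ _ hN0 hNt]; ring_nf

lemma rieszPotential_indicator {S : Set (Euc n)} (hS : MeasurableSet S) (x : Euc n) :
    rieszPotential κ volume (S.indicator g) x = rieszPotential κ (volume.restrict S) g x := by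
  simp only [rieszPotential, ← lintegral_indicator hS, indicator_mul_right]

lemma exists_lintegral_ball_rieszPotential_rpow_le (hn : 2 ≤ n) (hp : 2 ≤ p)
    (hpn : n = 2 ∨ p = 2 * n / (n - 2)) :
    ∃ C : ℝ≥0∞, C ≠ ⊤ ∧ ∀ (c : Euc n) (r : ℝ), 0 < r → ∀ g : Euc n → ℝ≥0∞, Measurable g →
      ∫⁻ x in ball c r, rieszPotential (n - 1) (volume.restrict (ball c r)) g x ^ p ≤
        C * ENNReal.ofReal r ^ (n + p - p * n / 2) * (∫⁻ z in ball c r, g z ^ 2) ^ (p / 2) := by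
  have hn' : (2 : ℝ) ≤ n := by exact_mod_cast hn
  by_cases h2 : n = 2
  · have h2' : (n : ℝ) = 2 := by exact_mod_cast h2
    have hV := unitBallVolume_ne_top n
    obtain ⟨C, hC, H⟩ := exists_lintegral_rieszPotential_rpow_le_of_subcritical
      (hasGrowthAt_volume (n := n)) hV hp (κ := n - 1) (β := n) (by linarith) (by linarith)
      (by linarith) (by rw [h2']; norm_num)
    refine ⟨C * unitBallVolume n, by finiteness, fun c r hr g hg => ?_⟩
    convert H volume _ hasGrowthAt_volume c r hr g hg using 4
    rw [h2']; ring
  · have h3 : (3 : ℝ) ≤ n := by exact_mod_cast (show 3 ≤ n by omega)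
    have hp' : p * (n - 2) = 2 * n := by
      rw [hpn.resolve_left h2, div_mul_cancel₀ _ (by linarith)]
    obtain ⟨C, hC, H⟩ := exists_lintegral_rieszPotential_rpow_le_of_critical (n := n) (p := p)
      (κ := n - 1) (by linarith) (by linarith) (by linarith)
    refine ⟨C, hC, fun c r _ g hg => (setLIntegral_le_lintegral _ _).trans ?_⟩
    have hball := H _ (hg.indicator (measurableSet_ball (x := c) (ε := r)))
    simp_rw [rieszPotential_indicator measurableSet_ball] at hball
    rw [show n + p - p * n / 2 = (0 : ℝ) by linarith, ENNReal.rpow_zero, mul_one,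
      ← lintegral_indicator measurableSet_ball]
    refine hball.trans_eq ?_
    congr! with z
    by_cases hz : z ∈ ball c r <;> simp [hz]

end HardyLittlewoodSobolev

section RegularBoundary

variable {n : ℕ} {d C₀ κ ρ : ℝ} {Γ : Set (Euc n)}

/-- The geometric hypotheses on the boundary: `Γ` is a nonempty closed `d`-Ahlfors regular set of
codimension larger than one. -/
structure IsRegularBoundary (n : ℕ) (d C₀ : ℝ) (Γ : Set (Euc n)) : Prop where
  nonempty : Γ.Nonempty
  isClosed : IsClosed Γ
  ahlforsRegular : AhlforsRegular n d C₀ Γ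
  d_pos : 0 < d
  d_lt : d < n - 1
  one_le : 1 ≤ C₀

/-- The measure `σ`, the `d`-dimensional Hausdorff measure on `Γ`. -/
def surfaceMeasure (d : ℝ) (Γ : Set (Euc n)) : Measure (Euc n) := μH[d].restrict Γ

lemma surfaceMeasure_ball (x : Euc n) (s : ℝ) :
    surfaceMeasure d Γ (ball x s) = μH[d] (Γ ∩ ball x s) := by
  rw [surfaceMeasure, Measure.restrict_apply measurableSet_ball, inter_comm]

lemma isLocallyFiniteMeasure_of_hasGrowthAt {X : Type*} [PseudoMetricSpace X] [MeasurableSpace X]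
    {μ : Measure X} {A : ℝ≥0∞} {β : ℝ} (hA : A ≠ ⊤) (h : ∀ x, HasGrowthAt μ x A β) :
    IsLocallyFiniteMeasure μ :=
  ⟨fun x => ⟨ball x 1, ball_mem_nhds x one_pos,
    (h x 1 one_pos).trans_lt (by simpa using hA.lt_top)⟩⟩

namespace IsRegularBoundary

lemma hasGrowthAt_surfaceMeasure (h : IsRegularBoundary n d C₀ Γ) (x : Euc n) :
    HasGrowthAt (surfaceMeasure d Γ) x (ENNReal.ofReal (C₀ * 2 ^ d)) d := fun s hs => by
  have hC := h.one_le
  rw [surfaceMeasure_ball]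
  rcases (Γ ∩ ball x s).eq_empty_or_nonempty with hempty | ⟨z, hz, hzx⟩
  · simp [hempty]
  calc μH[d] (Γ ∩ ball x s) ≤ μH[d] (Γ ∩ ball z (2 * s)) :=
        measure_mono (inter_subset_inter_right _ (ball_subset_ball_two_mul hzx))
    _ ≤ ENNReal.ofReal (C₀ * (2 * s) ^ d) := (h.ahlforsRegular z hz _ (by positivity)).2
    _ = _ := by
        rw [ENNReal.ofReal_rpow_of_pos hs, ← ENNReal.ofReal_mul (by positivity),
          Real.mul_rpow two_pos.le hs.le, mul_assoc]

lemma le_surfaceMeasure_ball (h : IsRegularBoundary n d C₀ Γ) {x : Euc n} (hx : x ∈ Γ) {s : ℝ}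
    (hs : 0 < s) :
    ENNReal.ofReal C₀⁻¹ * ENNReal.ofReal s ^ d ≤ surfaceMeasure d Γ (ball x s) := by
  have hC := h.one_le
  rw [surfaceMeasure_ball, ENNReal.ofReal_rpow_of_pos hs, ← ENNReal.ofReal_mul (by positivity)]
  exact (h.ahlforsRegular x hx s hs).1

lemma sFinite_surfaceMeasure (h : IsRegularBoundary n d C₀ Γ) : SFinite (surfaceMeasure d Γ) :=
  have := isLocallyFiniteMeasure_of_hasGrowthAt ENNReal.ofReal_ne_top h.hasGrowthAt_surfaceMeasure
  inferInstance

lemma volume_eq_zero (h : IsRegularBoundary n d C₀ Γ) : volume Γ = 0 := by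
  obtain ⟨x, hx⟩ := h.nonempty
  have hnull (k : ℕ) : (μH[(n : ℝ)] : Measure (Euc n)) (Γ ∩ ball x (k + 1)) = 0 := by
    refine (Measure.hausdorffMeasure_zero_or_top (show d < n by linarith [h.d_lt])
      _).resolve_right fun htop => ?_
    exact ((h.ahlforsRegular x hx (k + 1) (by positivity)).2.trans_lt ENNReal.ofReal_lt_top).ne htop
  have hcover : Γ ⊆ ⋃ k : ℕ, Γ ∩ ball x (k + 1) := fun y hy => by
    obtain ⟨k, hk⟩ := exists_nat_gt (dist y x)
    exact mem_iUnion.2 ⟨k, hy, by rw [mem_ball]; linarith⟩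
  have : Measure.IsAddHaarMeasure (μH[(n : ℝ)] : Measure (Euc n)) := by
    have := isAddHaarMeasure_hausdorffMeasure (E := Euc n)
    rwa [finrank_euclideanSpace_fin] at this
  exact Measure.absolutelyContinuous_isAddHaarMeasure volume μH[(n : ℝ)]
    (measure_mono_null hcover (measure_iUnion_null hnull))

lemma ae_notMem (h : IsRegularBoundary n d C₀ Γ) : ∀ᵐ y : Euc n, y ∉ Γ :=
  measure_eq_zero_iff_ae_notMem.1 h.volume_eq_zero

lemma infEDist_ne_top (h : IsRegularBoundary n d C₀ Γ) (x : Euc n) : infEDist x Γ ≠ ⊤ :=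
  Metric.infEDist_ne_top h.nonempty

lemma infEDist_ne_zero (h : IsRegularBoundary n d C₀ Γ) {x : Euc n} (hx : x ∉ Γ) :
    infEDist x Γ ≠ 0 :=
  fun h0 => hx ((mem_iff_infEDist_zero_of_closed h.isClosed).2 h0)

lemma infEDist_eq_ofReal (h : IsRegularBoundary n d C₀ Γ) (x : Euc n) :
    infEDist x Γ = ENNReal.ofReal (infDist x Γ) := by
  rw [infDist, ENNReal.ofReal_toReal (h.infEDist_ne_top x)]

lemma infDist_pos (h : IsRegularBoundary n d C₀ Γ) {x : Euc n} (hx : x ∉ Γ) : 0 < infDist x Γ :=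
  (h.isClosed.notMem_iff_infDist_pos h.nonempty).1 hx

/-- Lower Ahlfors regularity at the point of `Γ` nearest to `y`. -/
lemma infEDist_rpow_mul_le_rieszPotential (h : IsRegularBoundary n d C₀ Γ) (hκ : 0 ≤ κ)
    {y : Euc n} (hy : y ∉ Γ) {S : Set (Euc n)} (hS : ball y (2 * infDist y Γ) ⊆ S) :
    (2 * infEDist y Γ) ^ (-(κ + d)) * (ENNReal.ofReal C₀⁻¹ * infEDist y Γ ^ d) ≤
      rieszPotential (κ + d) ((surfaceMeasure d Γ).restrict S) 1 y := by
  have hδ := h.infDist_pos hy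
  obtain ⟨z, hz, hyz⟩ := h.isClosed.exists_infDist_eq_dist h.nonempty y
  have hsub : ball z (infDist y Γ) ⊆ ball y (2 * infDist y Γ) :=
    ball_subset_ball' (by rw [dist_comm, ← hyz]; linarith)
  have hlower : ENNReal.ofReal C₀⁻¹ * infEDist y Γ ^ d ≤
      surfaceMeasure d Γ (ball y (2 * infDist y Γ)) := by
    rw [h.infEDist_eq_ofReal]
    exact (h.le_surfaceMeasure_ball hz hδ).trans (measure_mono hsub)
  calc (2 * infEDist y Γ) ^ (-(κ + d)) * (ENNReal.ofReal C₀⁻¹ * infEDist y Γ ^ d)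
      ≤ ∫⁻ _ in ball y (2 * infDist y Γ), (2 * infEDist y Γ) ^ (-(κ + d))
          ∂(surfaceMeasure d Γ) := by
        rw [setLIntegral_const]; gcongr
    _ ≤ ∫⁻ z in ball y (2 * infDist y Γ), edist z y ^ (-(κ + d)) ∂(surfaceMeasure d Γ) := by
        refine setLIntegral_mono' measurableSet_ball fun z hz => ?_
        have htwo : 2 * infEDist y Γ = ENNReal.ofReal (2 * infDist y Γ) := by
          rw [ENNReal.ofReal_mul two_pos.le, ENNReal.ofReal_ofNat, h.infEDist_eq_ofReal]
        refine ennreal_rpow_le_rpow_of_nonpos (by linarith [h.d_pos]) ?_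
        rw [htwo, edist_dist]
        exact ENNReal.ofReal_le_ofReal (mem_ball.1 hz).le
    _ ≤ ∫⁻ z in S, edist z y ^ (-(κ + d)) ∂(surfaceMeasure d Γ) := lintegral_mono_set hS
    _ = _ := by simp [rieszPotential]

lemma infEDist_rpow_neg_le_rieszPotential (h : IsRegularBoundary n d C₀ Γ) (hκ : 0 ≤ κ)
    {y : Euc n} (hy : y ∉ Γ) {S : Set (Euc n)} (hS : ball y (2 * infDist y Γ) ⊆ S) :
    infEDist y Γ ^ (-κ) ≤ ENNReal.ofReal C₀ * 2 ^ (κ + d) *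
      rieszPotential (κ + d) ((surfaceMeasure d Γ).restrict S) 1 y := by
  have hC := h.one_le
  have hDt := h.infEDist_ne_top y
  have hCC : ENNReal.ofReal C₀ * ENNReal.ofReal C₀⁻¹ = 1 := by
    rw [← ENNReal.ofReal_mul (by linarith), mul_inv_cancel₀ (by linarith), ENNReal.ofReal_one]
  have htwo : (2 : ℝ≥0∞) ^ (κ + d) * 2 ^ (-(κ + d)) = 1 := by
    rw [← ENNReal.rpow_add _ _ (by norm_num) (by norm_num), add_neg_cancel, ENNReal.rpow_zero]
  have hD : infEDist y Γ ^ (-(κ + d)) * infEDist y Γ ^ d = infEDist y Γ ^ (-κ) := by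
    rw [← ENNReal.rpow_add _ _ (h.infEDist_ne_zero hy) hDt]; ring_nf
  calc infEDist y Γ ^ (-κ)
      = (ENNReal.ofReal C₀ * ENNReal.ofReal C₀⁻¹) * (2 ^ (κ + d) * 2 ^ (-(κ + d))) *
          (infEDist y Γ ^ (-(κ + d)) * infEDist y Γ ^ d) := by rw [hCC, htwo, hD, one_mul, one_mul]
    _ = ENNReal.ofReal C₀ * 2 ^ (κ + d) *
          ((2 * infEDist y Γ) ^ (-(κ + d)) * (ENNReal.ofReal C₀⁻¹ * infEDist y Γ ^ d)) := by
        rw [ENNReal.mul_rpow_of_ne_top (by norm_num) hDt]; ring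
    _ ≤ _ := by gcongr; exact h.infEDist_rpow_mul_le_rieszPotential hκ hy hS

lemma setLIntegral_infEDist_rpow_neg_le_of_far (h : IsRegularBoundary n d C₀ Γ) (hκ : 0 ≤ κ)
    {x : Euc n} (hρ : 0 < ρ) (hx : 2 * ρ ≤ infDist x Γ) :
    ∫⁻ y in ball x ρ, infEDist y Γ ^ (-κ) ≤ unitBallVolume n * ENNReal.ofReal ρ ^ (n - κ) := by
  calc ∫⁻ y in ball x ρ, infEDist y Γ ^ (-κ) ≤ ∫⁻ _ in ball x ρ, ENNReal.ofReal ρ ^ (-κ) := by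
        refine setLIntegral_mono' measurableSet_ball fun y hy =>
          ennreal_rpow_le_rpow_of_nonpos (by linarith) ?_
        rw [h.infEDist_eq_ofReal]
        refine ENNReal.ofReal_le_ofReal ?_
        linarith [infDist_le_infDist_add_dist (s := Γ) (x := x) (y := y), mem_ball'.1 hy]
    _ = _ := by
        rw [setLIntegral_const, volume_ball_eq x hρ, sub_eq_neg_add, ofReal_rpow_add hρ]; ring

lemma setLIntegral_infEDist_rpow_neg_le_of_near (h : IsRegularBoundary n d C₀ Γ) (hκ : 0 ≤ κ)
    (hκn : κ < n - d) {x : Euc n} (hρ : 0 < ρ) (hx : infDist x Γ ≤ 2 * ρ) :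
    ∫⁻ y in ball x ρ, infEDist y Γ ^ (-κ) ≤ ENNReal.ofReal C₀ * 2 ^ (κ + d) *
      (kernelConst n (κ + d) * unitBallVolume n * 14 ^ (n - (κ + d))) *
      (ENNReal.ofReal (C₀ * 2 ^ d) * 7 ^ d) * ENNReal.ofReal ρ ^ (n - κ) := by
  have := h.sFinite_surfaceMeasure
  have hd := h.d_pos
  calc ∫⁻ y in ball x ρ, infEDist y Γ ^ (-κ)
      ≤ ∫⁻ y in ball x ρ, ENNReal.ofReal C₀ * 2 ^ (κ + d) *
          rieszPotential (κ + d) ((surfaceMeasure d Γ).restrict (ball x (7 * ρ))) 1 y := by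
        refine lintegral_mono_ae ?_
        filter_upwards [ae_restrict_of_ae h.ae_notMem, ae_restrict_mem measurableSet_ball]
          with y hy hyx
        refine h.infEDist_rpow_neg_le_rieszPotential hκ hy (ball_subset_ball' ?_)
        linarith [infDist_le_infDist_add_dist (s := Γ) (x := y) (y := x), mem_ball.1 hyx]
    _ ≤ ENNReal.ofReal C₀ * 2 ^ (κ + d) * ∫⁻ y in ball x (7 * ρ),
          rieszPotential (κ + d) ((surfaceMeasure d Γ).restrict (ball x (7 * ρ))) 1 y := by
        rw [lintegral_const_mul _ (measurable_rieszPotential _ _ measurable_one)]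
        gcongr
        linarith
    _ ≤ ENNReal.ofReal C₀ * 2 ^ (κ + d) * (kernelConst n (κ + d) * unitBallVolume n *
          ENNReal.ofReal (2 * (7 * ρ)) ^ (n - (κ + d)) *
          (ENNReal.ofReal (C₀ * 2 ^ d) * ENNReal.ofReal (7 * ρ) ^ d)) := by
        refine mul_le_mul_right ((lintegral_rieszPotential_ball_le hasGrowthAt_volume (by linarith)
          (by linarith) measurable_one (by positivity)).trans ?_) _
        gcongr
        simpa using h.hasGrowthAt_surfaceMeasure x (7 * ρ) (by positivity)
    _ = _ := by
        rw [show (n : ℝ) - κ = (n - (κ + d)) + d by ring, ofReal_rpow_add hρ,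
          show 2 * (7 * ρ) = 14 * ρ by ring, ofReal_mul_rpow (by norm_num),
          ofReal_mul_rpow (by norm_num), ENNReal.ofReal_ofNat, ENNReal.ofReal_ofNat]
        ring

end IsRegularBoundary

lemma measW_eq_withDensity_infEDist (h : IsRegularBoundary n d C₀ Γ) :
    measW n d Γ = volume.withDensity fun y => infEDist y Γ ^ (-(n - 1 - d)) := by
  refine withDensity_congr_ae ?_
  filter_upwards [h.ae_notMem] with y hy
  rw [weightW, h.infEDist_eq_ofReal, ENNReal.ofReal_rpow_of_pos (h.infDist_pos hy)]
  ring_nf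

instance : SFinite (measW n d Γ) := by unfold measW; infer_instance

lemma setLIntegral_measW (h : IsRegularBoundary n d C₀ Γ) (f : Euc n → ℝ≥0∞) {S : Set (Euc n)}
    (hS : MeasurableSet S) :
    ∫⁻ y in S, f y ∂(measW n d Γ) = ∫⁻ y in S, infEDist y Γ ^ (-(n - 1 - d)) * f y := by
  rw [measW_eq_withDensity_infEDist h, restrict_withDensity hS,
    lintegral_withDensity_eq_lintegral_mul_non_measurable₀ _
      (measurable_infEDist.pow_const _).aemeasurable]
  · rfl
  · filter_upwards [ae_restrict_of_ae h.ae_notMem] with y hy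
    exact (ENNReal.rpow_ne_top_of_ne_zero (h.infEDist_ne_zero hy) (h.infEDist_ne_top y)).lt_top

/-- The constant `C` in the bound `m(B(x,s)) ≤ C s^(d+1)`. -/
def measWConst (n : ℕ) (d C₀ : ℝ) : ℝ≥0∞ :=
  unitBallVolume n + ENNReal.ofReal C₀ * 2 ^ (n - 1 - d + d) *
    (kernelConst n (n - 1 - d + d) * unitBallVolume n * 14 ^ (n - (n - 1 - d + d))) *
    (ENNReal.ofReal (C₀ * 2 ^ d) * 7 ^ d)

lemma measWConst_ne_top (n : ℕ) (d C₀ : ℝ) : measWConst n d C₀ ≠ ⊤ := by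
  have hV := unitBallVolume_ne_top n
  have hker := kernelConst_ne_top (show (n : ℝ) ≠ n - 1 - d + d by linarith)
  unfold measWConst
  finiteness

lemma hasGrowthAt_measW (h : IsRegularBoundary n d C₀ Γ) (x : Euc n) :
    HasGrowthAt (measW n d Γ) x (measWConst n d C₀) (d + 1) := fun s hs => by
  have hd := h.d_lt
  rw [measW_eq_withDensity_infEDist h, withDensity_apply _ measurableSet_ball,
    show d + 1 = n - (n - 1 - d) by ring]
  rcases le_total (2 * s) (infDist x Γ) with hx | hx
  · refine (h.setLIntegral_infEDist_rpow_neg_le_of_far (by linarith) hs hx).trans ?_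
    gcongr; exact le_self_add
  · refine (h.setLIntegral_infEDist_rpow_neg_le_of_near (by linarith) (by linarith) hs hx).trans ?_
    gcongr; exact le_add_self

lemma le_measW_ball (h : IsRegularBoundary n d C₀ Γ) {x : Euc n} {r R : ℝ} (hr : 0 < r)
    (hR : infDist x Γ + r ≤ R) :
    ENNReal.ofReal R ^ (-(n - 1 - d)) * (unitBallVolume n * ENNReal.ofReal r ^ (n : ℝ)) ≤
      measW n d Γ (ball x r) := by
  rw [measW_eq_withDensity_infEDist h, withDensity_apply _ measurableSet_ball,
    ← volume_ball_eq x hr, ← setLIntegral_const]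
  refine setLIntegral_mono' measurableSet_ball fun y hy =>
    ennreal_rpow_le_rpow_of_nonpos (by linarith [h.d_lt]) ?_
  rw [h.infEDist_eq_ofReal]
  refine ENNReal.ofReal_le_ofReal ?_
  linarith [infDist_le_infDist_add_dist (s := Γ) (x := y) (y := x), mem_ball.1 hy]

lemma measW_ball_ne_zero (h : IsRegularBoundary n d C₀ Γ) (x : Euc n) {r : ℝ} (hr : 0 < r) :
    measW n d Γ (ball x r) ≠ 0 := by
  refine (lt_of_lt_of_le ?_ (le_measW_ball h hr le_rfl)).ne'
  have hR : 0 < infDist x Γ + r := add_pos_of_nonneg_of_pos infDist_nonneg hr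
  exact ENNReal.mul_pos (ENNReal.rpow_pos (by simpa using hR) (by finiteness)).ne'
    (mul_ne_zero (unitBallVolume_ne_zero n) (ENNReal.rpow_pos (by simpa using hr)
      (by finiteness)).ne')

lemma measW_ball_ne_top (h : IsRegularBoundary n d C₀ Γ) (x : Euc n) {r : ℝ} (hr : 0 < r) :
    measW n d Γ (ball x r) ≠ ⊤ := by
  have hM := measWConst_ne_top n d C₀
  have := h.d_pos
  exact ne_top_of_le_ne_top (by finiteness) (hasGrowthAt_measW h x r hr)

end RegularBoundary

section Segments

lemma setLIntegral_Ioi_ofReal_rpow_neg {κ a : ℝ} (hκ : 1 < κ) (ha : 0 < a) :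
    ∫⁻ t in Ioi a, ENNReal.ofReal t ^ (-κ) =
      ENNReal.ofReal (κ - 1)⁻¹ * ENNReal.ofReal a ^ (1 - κ) := by
  have hpow : ∀ t ∈ Ioi a, ENNReal.ofReal t ^ (-κ) = ENNReal.ofReal (t ^ (-κ)) := fun t ht =>
    ENNReal.ofReal_rpow_of_pos (ha.trans ht)
  have hnonneg : ∀ t ∈ Ioi a, 0 ≤ t ^ (-κ) := fun t ht => Real.rpow_nonneg (ha.trans ht).le _
  rw [setLIntegral_congr_fun measurableSet_Ioi hpow,
    ← ofReal_integral_eq_lintegral_ofReal (integrableOn_Ioi_rpow_of_lt (by linarith) ha)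
      (ae_restrict_of_forall_mem measurableSet_Ioi hnonneg),
    integral_Ioi_rpow_of_lt (by linarith) ha, ENNReal.ofReal_rpow_of_pos ha,
    ← ENNReal.ofReal_mul (inv_nonneg.2 (by linarith)), neg_add_eq_sub, ← neg_sub κ 1,
    neg_div_neg_eq, div_eq_inv_mul]

lemma setLIntegral_Ioi_dist_div_rpow_neg {X : Type*} [MetricSpace X] {x z : X} (hz : z ≠ x)
    {κ r : ℝ} (hκ : 1 < κ) (hr : 0 < r) :
    ∫⁻ t in Ioi (dist z x / r), ENNReal.ofReal t ^ (-κ) =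
      ENNReal.ofReal (κ - 1)⁻¹ * ENNReal.ofReal r ^ (κ - 1) * edist z x ^ (-(κ - 1)) := by
  rw [setLIntegral_Ioi_ofReal_rpow_neg hκ (div_pos (dist_pos.2 hz) hr),
    ENNReal.ofReal_div_of_pos hr, ← edist_dist, div_eq_mul_inv,
    ENNReal.mul_rpow_of_ne_top (edist_ne_top _ _) (by simpa using hr), ENNReal.inv_rpow,
    ← ENNReal.rpow_neg, neg_sub, neg_sub, mul_assoc, mul_comm (edist z x ^ _)]

lemma lintegral_Ioi_rpow_neg_mul_setLIntegral_ball {X : Type*} [MetricSpace X] [MeasurableSpace X]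
    [OpensMeasurableSpace X] [SecondCountableTopology X] {μ : Measure X} [SFinite μ]
    [NullSingletonClass μ] {κ r : ℝ} (hκ : 1 < κ) (hr : 0 < r) (x : X) {G : X → ℝ≥0∞}
    (hG : Measurable G) :
    ∫⁻ t in Ioi (0 : ℝ), ENNReal.ofReal t ^ (-κ) * ∫⁻ z in ball x (r * t), G z ∂μ =
      ENNReal.ofReal (κ - 1)⁻¹ * ENNReal.ofReal r ^ (κ - 1) * rieszPotential (κ - 1) μ G x := by
  set F : ℝ × X → ℝ≥0∞ := {q | dist q.2 x < r * q.1}.indicator fun q =>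
    ENNReal.ofReal q.1 ^ (-κ) * G q.2
  have hF : Measurable F :=
    ((measurable_fst.ennreal_ofReal.pow_const _).mul (hG.comp measurable_snd)).indicator
      (measurableSet_lt (measurable_snd.dist measurable_const) (measurable_fst.const_mul r))
  have hslice (t : ℝ) (z : X) :
      F (t, z) = (Ioi (dist z x / r)).indicator (fun t => ENNReal.ofReal t ^ (-κ) * G z) t := by
    simp [F, indicator, div_lt_iff₀' hr]
  calc ∫⁻ t in Ioi (0 : ℝ), ENNReal.ofReal t ^ (-κ) * ∫⁻ z in ball x (r * t), G z ∂μ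
      = ∫⁻ t in Ioi (0 : ℝ), ∫⁻ z, F (t, z) ∂μ := by
        refine lintegral_congr fun t => ?_
        rw [← lintegral_const_mul _ hG, ← lintegral_indicator measurableSet_ball]
        simp [F, indicator]
    _ = ∫⁻ z, (∫⁻ t in Ioi (0 : ℝ), F (t, z)) ∂μ :=
        lintegral_lintegral_swap (f := fun t z => F (t, z)) hF.aemeasurable
    _ = ∫⁻ z, ENNReal.ofReal (κ - 1)⁻¹ * ENNReal.ofReal r ^ (κ - 1) *
          (edist z x ^ (-(κ - 1)) * G z) ∂μ := by
        refine lintegral_congr_ae ?_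
        filter_upwards [compl_mem_ae_iff.2 (measure_singleton x)] with z hz
        simp_rw [hslice]
        rw [setLIntegral_indicator measurableSet_Ioi,
          inter_eq_left.2 (Ioi_subset_Ioi (by positivity)),
          lintegral_mul_const _ (ENNReal.measurable_ofReal.pow_const _),
          setLIntegral_Ioi_dist_div_rpow_neg hz hκ hr, mul_assoc _ (edist z x ^ _)]
    _ = _ := lintegral_const_mul _ ((measurable_edist_rpow_left _ x).mul hG)

variable {n : ℕ} {c x : Euc n} {r t : ℝ} {h : Euc n → ℝ≥0∞}

lemma lintegral_comp_homothety {G : Euc n → ℝ≥0∞} (hG : Measurable G) (x : Euc n) (ht : 0 < t) :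
    ∫⁻ y, G (x + t • (y - x)) = ENNReal.ofReal t ^ (-(n : ℝ)) * ∫⁻ z, G z := by
  have hjacobian : ENNReal.ofReal |(t ^ n)⁻¹| = ENNReal.ofReal t ^ (-(n : ℝ)) := by
    rw [abs_of_pos (by positivity), ENNReal.ofReal_inv_of_pos (by positivity), ENNReal.rpow_neg,
      ENNReal.rpow_natCast, ENNReal.ofReal_pow ht.le]
  calc ∫⁻ y, G (x + t • (y - x)) = ∫⁻ y, G (x + t • y) :=
        lintegral_sub_right_eq_self (fun y => G (x + t • y)) x
    _ = ∫⁻ w, G (x + w) ∂(Measure.map (fun y : Euc n => t • y) volume) :=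
        (lintegral_map (hG.comp (measurable_const_add x)) (measurable_const_smul t)).symm
    _ = _ := by
        rw [Measure.map_addHaar_smul volume ht.ne', lintegral_smul_measure,
          lintegral_add_left_eq_self G x, finrank_euclideanSpace_fin, smul_eq_mul, hjacobian]

lemma setLIntegral_ball_comp_homothety_le (hx : x ∈ ball c r) (hh : Measurable h)
    (ht : t ∈ Ioc (0 : ℝ) 1) :
    ∫⁻ y in ball c r, edist y x * h (x + t • (y - x)) ≤
      ENNReal.ofReal t ^ (-(n + 1 : ℝ)) *
        ∫⁻ z in ball x (2 * r * t), edist z x * h z ∂(volume.restrict (ball c r)) := by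
  have ht0 : ENNReal.ofReal t ≠ 0 := by simpa using ht.1
  set S := ball x (2 * r * t) ∩ ball c r
  have hS : MeasurableSet S := measurableSet_ball.inter measurableSet_ball
  have hdist (y : Euc n) : edist (x + t • (y - x)) x = ENNReal.ofReal t * edist y x := by
    rw [edist_eq_enorm_sub, add_sub_cancel_left, enorm_smul, edist_eq_enorm_sub,
      Real.enorm_eq_ofReal ht.1.le]
  have hmem {y : Euc n} (hy : y ∈ ball c r) : x + t • (y - x) ∈ S := by
    refine ⟨?_, (convex_ball c r).add_smul_sub_mem hx hy ⟨ht.1.le, ht.2⟩⟩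
    rw [mem_ball_iff_norm, add_sub_cancel_left, norm_smul, Real.norm_of_nonneg ht.1.le, mul_comm,
      ← dist_eq_norm]
    exact mul_lt_mul_of_pos_right (ball_subset_ball_two_mul hx hy) ht.1
  have hG : Measurable (S.indicator fun z => edist z x * h z) :=
    (measurable_edist_left.mul hh).indicator hS
  calc ∫⁻ y in ball c r, edist y x * h (x + t • (y - x))
      ≤ ∫⁻ y in ball c r, ENNReal.ofReal t ^ (-1 : ℝ) *
          S.indicator (fun z => edist z x * h z) (x + t • (y - x)) := by
        refine setLIntegral_mono' measurableSet_ball fun y hy => ?_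
        rw [indicator_of_mem (hmem hy), hdist, ← mul_assoc, ← mul_assoc, ENNReal.rpow_neg_one,
          ENNReal.inv_mul_cancel ht0 ENNReal.ofReal_ne_top, one_mul]
    _ ≤ ENNReal.ofReal t ^ (-1 : ℝ) *
          ∫⁻ y, S.indicator (fun z => edist z x * h z) (x + t • (y - x)) := by
        rw [← lintegral_const_mul' _ _ (ENNReal.rpow_ne_top_of_ne_zero ht0 ENNReal.ofReal_ne_top)]
        exact setLIntegral_le_lintegral _ _
    _ = _ := by
        rw [lintegral_comp_homothety hG x ht.1, lintegral_indicator hS,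
          Measure.restrict_restrict measurableSet_ball, ← mul_assoc, ← ofReal_rpow_add ht.1,
          ← neg_add_rev]

/-- Polar coordinates around `x`, in the form of Tonelli's theorem in `t` and `x + t (y - x)`. -/
lemma setLIntegral_ball_lintegral_segment_le (hn : 0 < n) (hr : 0 < r) (hx : x ∈ ball c r)
    (hh : Measurable h) :
    ∫⁻ y in ball c r, edist y x * ∫⁻ t in Ioc (0 : ℝ) 1, h (x + t • (y - x)) ≤
      ENNReal.ofReal (2 * r) ^ (n : ℝ) *
        rieszPotential (n - 1) (volume.restrict (ball c r)) h x := by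
  have hn1 : (1 : ℝ) ≤ n := by exact_mod_cast hn
  have : Nonempty (Fin n) := ⟨⟨0, hn⟩⟩
  have hmeas : Measurable fun q : Euc n × ℝ => edist q.1 x * h (x + q.2 • (q.1 - x)) :=
    (measurable_edist_left.comp measurable_fst).mul (hh.comp (by fun_prop))
  have hkernel (z : Euc n) : edist z x ^ (-(n + 1 - 1 : ℝ)) * (edist z x * h z) ≤
      edist z x ^ (-(n - 1 : ℝ)) * h z := by
    rcases eq_or_ne (edist z x) 0 with h0 | h0
    · simp [h0]
    have hexp : edist z x ^ (-(n - 1 : ℝ)) = edist z x ^ (-(n + 1 - 1 : ℝ)) * edist z x := by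
      rw [show (-(n - 1) : ℝ) = -(n + 1 - 1) + 1 by ring, ENNReal.rpow_add _ _ h0
        (edist_ne_top _ _), ENNReal.rpow_one]
    rw [hexp, mul_assoc]
  calc ∫⁻ y in ball c r, edist y x * ∫⁻ t in Ioc (0 : ℝ) 1, h (x + t • (y - x))
      = ∫⁻ y in ball c r, ∫⁻ t in Ioc (0 : ℝ) 1, edist y x * h (x + t • (y - x)) :=
        lintegral_congr fun y => (lintegral_const_mul _ (hh.comp (by fun_prop))).symm
    _ = ∫⁻ t in Ioc (0 : ℝ) 1, ∫⁻ y in ball c r, edist y x * h (x + t • (y - x)) :=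
        lintegral_lintegral_swap hmeas.aemeasurable
    _ ≤ ∫⁻ t in Ioc (0 : ℝ) 1, ENNReal.ofReal t ^ (-(n + 1 : ℝ)) *
          ∫⁻ z in ball x (2 * r * t), edist z x * h z ∂(volume.restrict (ball c r)) :=
        setLIntegral_mono' measurableSet_Ioc fun t ht =>
          setLIntegral_ball_comp_homothety_le hx hh ht
    _ ≤ ∫⁻ t in Ioi (0 : ℝ), ENNReal.ofReal t ^ (-(n + 1 : ℝ)) *
          ∫⁻ z in ball x (2 * r * t), edist z x * h z ∂(volume.restrict (ball c r)) :=
        lintegral_mono_set Ioc_subset_Ioi_self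
    _ = ENNReal.ofReal (n + 1 - 1 : ℝ)⁻¹ * ENNReal.ofReal (2 * r) ^ (n + 1 - 1 : ℝ) *
          rieszPotential (n + 1 - 1) (volume.restrict (ball c r)) (fun z => edist z x * h z) x :=
        lintegral_Ioi_rpow_neg_mul_setLIntegral_ball (by linarith) (by positivity) x
          (measurable_edist_left.mul hh)
    _ ≤ 1 * ENNReal.ofReal (2 * r) ^ (n : ℝ) *
          rieszPotential (n - 1) (volume.restrict (ball c r)) h x := by
        have hinv : ENNReal.ofReal (n + 1 - 1 : ℝ)⁻¹ ≤ 1 := by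
          simpa using inv_le_one_of_one_le₀ hn1
        refine mul_le_mul' (mul_le_mul' hinv (by rw [add_sub_cancel_right])) ?_
        exact lintegral_mono hkernel
    _ = _ := by rw [one_mul]

lemma ae_rieszPotential_ball_lt_top {κ : ℝ} (hκ : 0 ≤ κ) (hκn : κ < n) (hh : Measurable h)
    (hr : 0 < r) (hfin : ∫⁻ z in ball c r, h z ≠ ⊤) :
    ∀ᵐ x ∂(volume.restrict (ball c r)), rieszPotential κ (volume.restrict (ball c r)) h x < ⊤ := by
  have hV := unitBallVolume_ne_top n
  have hker := kernelConst_ne_top hκn.ne'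
  have : 0 ≤ n - κ := by linarith
  exact ae_lt_top (measurable_rieszPotential _ _ hh) (ne_top_of_le_ne_top (by finiteness)
    (lintegral_rieszPotential_ball_le hasGrowthAt_volume hκ hκn hh hr))

end Segments

section AvoidingSegments

variable {E : Type*} [NormedAddCommGroup E] [NormedSpace ℝ E] {Γ : Set E} {x y : E}

lemma enorm_inv_sub_le_edist_mul_inv_infEDist (hx : x ∉ Γ) {t₀ : ℝ} (ht₀ : x + t₀ • (y - x) ∈ Γ)
    (t : ℝ) : ‖(t - t₀)⁻¹‖ₑ ≤ edist y x * (infEDist (x + t • (y - x)) Γ)⁻¹ := by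
  rcases eq_or_ne (t - t₀) 0 with ht | ht
  · simp [ht]
  have hyx : edist y x ≠ 0 := fun h0 => hx (by simpa [edist_eq_zero.1 h0] using ht₀)
  have hle : infEDist (x + t • (y - x)) Γ ≤ edist y x * ‖t - t₀‖ₑ := by
    refine (infEDist_le_edist_of_mem ht₀).trans_eq ?_
    rw [edist_eq_enorm_sub, edist_eq_enorm_sub, add_sub_add_left_eq_sub, ← sub_smul, enorm_smul,
      mul_comm]
  calc ‖(t - t₀)⁻¹‖ₑ = edist y x * (edist y x * ‖t - t₀‖ₑ)⁻¹ := by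
        rw [enorm_inv ht, ENNReal.mul_inv (Or.inl hyx) (Or.inl (edist_ne_top _ _)), ← mul_assoc,
          ENNReal.mul_inv_cancel hyx (edist_ne_top _ _), one_mul]
    _ ≤ _ := by gcongr

lemma segment_notMem_of_lintegral_inv_infEDist_lt_top (hx : x ∉ Γ)
    (h : ∫⁻ t in Ioc (0 : ℝ) 1, (infEDist (x + t • (y - x)) Γ)⁻¹ < ⊤) {t₀ : ℝ}
    (ht₀ : t₀ ∈ Icc (0 : ℝ) 1) : x + t₀ • (y - x) ∉ Γ := fun hmem => by
  have hfin : ∫⁻ t in Ioc (0 : ℝ) 1, ‖(t - t₀)⁻¹‖ₑ < ⊤ := by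
    refine (lintegral_mono (enorm_inv_sub_le_edist_mul_inv_infEDist hx hmem)).trans_lt ?_
    rw [lintegral_const_mul' _ _ (edist_ne_top _ _)]
    exact ENNReal.mul_lt_top (edist_ne_top _ _).lt_top h
  have hint : IntervalIntegrable (fun t : ℝ => (t - t₀)⁻¹) volume 0 1 := by
    rw [intervalIntegrable_iff_integrableOn_Ioc_of_le zero_le_one]
    exact ⟨by fun_prop, hfin⟩
  rw [intervalIntegrable_sub_inv_iff, uIcc_of_le zero_le_one] at hint
  exact hint.elim zero_ne_one fun hnot => hnot ht₀

lemma exists_closedBall_segment_subset_compl (hΓ : IsClosed Γ)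
    (h : ∀ t ∈ Icc (0 : ℝ) 1, x + t • (y - x) ∉ Γ) :
    ∃ ε > 0, ∀ t ∈ Icc (0 : ℝ) 1, closedBall (x + t • (y - x)) ε ⊆ Γᶜ := by
  have hK : IsCompact ((fun t : ℝ => x + t • (y - x)) '' Icc 0 1) :=
    isCompact_Icc.image (by fun_prop)
  obtain ⟨ε, hε, hsub⟩ := hK.exists_cthickening_subset_open hΓ.isOpen_compl (image_subset_iff.2 h)
  exact ⟨ε, hε, fun t ht =>
    (closedBall_subset_cthickening (mem_image_of_mem _ ht) ε).trans hsub⟩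

end AvoidingSegments

section Mollification

variable {n : ℕ} {φ : ContDiffBump (0 : Euc n)} {u : Euc n → ℝ} {v : Euc n → Euc n}
  {Γ : Set (Euc n)} {f : Euc n → ℝ≥0∞}

/-- The convolution of `u` with the normalised bump function of `φ`. -/
def mollify (φ : ContDiffBump (0 : Euc n)) (u : Euc n → ℝ) : Euc n → ℝ :=
  convolution (φ.normed volume) u (ContinuousLinearMap.lsmul ℝ ℝ) volume

/-- A bound for the mollification of `f ≥ 0` at `x`: the bump function of `φ` is replaced by the
indicator of its support times a bound for its height. -/
def bumpAverage (φ : ContDiffBump (0 : Euc n)) (f : Euc n → ℝ≥0∞) (x : Euc n) : ℝ≥0∞ :=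
  (volume (ball (0 : Euc n) φ.rIn))⁻¹ * ∫⁻ s in ball x φ.rOut, f s

/-- The kernel `y ↦ φ (x - y)` of the mollification at `x`, used as a test function in `y`. -/
def mollifyKernel (φ : ContDiffBump (0 : Euc n)) (x y : Euc n) : ℝ :=
  φ.normed volume (x - y)

lemma contDiff_mollify (φ : ContDiffBump (0 : Euc n)) (hu : LocallyIntegrable u volume) :
    ContDiff ℝ 1 (mollify φ u) :=
  φ.hasCompactSupport_normed.contDiff_convolution_left _ (n := 1) φ.contDiff_normed hu

lemma contDiff_mollifyKernel (φ : ContDiffBump (0 : Euc n)) (m : ℕ∞) (x : Euc n) :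
    ContDiff ℝ m (mollifyKernel φ x) :=
  φ.contDiff_normed.comp (contDiff_const.sub contDiff_id)

lemma support_mollifyKernel (φ : ContDiffBump (0 : Euc n)) (x : Euc n) :
    Function.support (mollifyKernel φ x) = ball x φ.rOut := by
  ext y
  rw [mem_ball', dist_eq_norm, ← mem_ball_zero_iff, ← φ.support_normed_eq (μ := volume)]
  rfl

lemma tsupport_mollifyKernel_subset (φ : ContDiffBump (0 : Euc n)) (x : Euc n) :
    tsupport (mollifyKernel φ x) ⊆ closedBall x φ.rOut :=
  closure_minimal ((support_mollifyKernel φ x).trans_subset ball_subset_closedBall)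
    isClosed_closedBall

lemma hasCompactSupport_mollifyKernel (φ : ContDiffBump (0 : Euc n)) (x : Euc n) :
    HasCompactSupport (mollifyKernel φ x) :=
  (isCompact_closedBall x φ.rOut).of_isClosed_subset (isClosed_tsupport _)
    (tsupport_mollifyKernel_subset φ x)

lemma enorm_mollifyKernel_le (φ : ContDiffBump (0 : Euc n)) (x y : Euc n) :
    ‖mollifyKernel φ x y‖ₑ ≤ (volume (ball (0 : Euc n) φ.rIn))⁻¹ := by
  have hpos : 0 < volume.real (closedBall (0 : Euc n) φ.rIn) :=
    ENNReal.toReal_pos (measure_closedBall_pos _ _ φ.rIn_pos).ne' measure_closedBall_lt_top.ne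
  calc ‖mollifyKernel φ x y‖ₑ
      ≤ ENNReal.ofReal (1 / volume.real (closedBall (0 : Euc n) φ.rIn)) := by
        rw [mollifyKernel, Real.enorm_eq_ofReal (φ.nonneg_normed _)]
        exact ENNReal.ofReal_le_ofReal (φ.normed_le_div_measure_closedBall_rIn volume _)
    _ = (volume (closedBall (0 : Euc n) φ.rIn))⁻¹ := by
        rw [one_div, ENNReal.ofReal_inv_of_pos hpos, Measure.real,
          ENNReal.ofReal_toReal measure_closedBall_lt_top.ne]
    _ ≤ _ := ENNReal.inv_le_inv.2 (measure_mono ball_subset_closedBall)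

lemma fderiv_mollify_apply (φ : ContDiffBump (0 : Euc n)) (hu : LocallyIntegrable u volume)
    (x w : Euc n) :
    fderiv ℝ (mollify φ u) x w = -∫ y, fderiv ℝ (mollifyKernel φ x) y w * u y := by
  have hsupp : HasCompactSupport (φ.normed volume) := φ.hasCompactSupport_normed
  have hsmooth : ContDiff ℝ 1 (φ.normed volume) := φ.contDiff_normed
  have hreflect (y : Euc n) :
      fderiv ℝ (mollifyKernel φ x) y w = -fderiv ℝ (φ.normed volume) (x - y) w := by
    have hcomp : HasFDerivAt (mollifyKernel φ x)
        ((fderiv ℝ (φ.normed volume) (x - y)).comp (-ContinuousLinearMap.id ℝ (Euc n))) y :=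
      (hsmooth.differentiable one_ne_zero (x - y)).hasFDerivAt.comp y
        ((hasFDerivAt_id y).const_sub x)
    simp [hcomp.fderiv]
  have hexists := (hsupp.fderiv ℝ).convolutionExists_left
    ((ContinuousLinearMap.lsmul ℝ ℝ).precompL (Euc n)) (hsmooth.continuous_fderiv one_ne_zero) hu x
  rw [mollify, (hsupp.hasFDerivAt_convolution_left _ hsmooth hu x).fderiv, convolution,
    ContinuousLinearMap.integral_apply hexists, ← integral_sub_left_eq_self _ volume x]
  simp [ContinuousLinearMap.precompL, hreflect, integral_neg]

lemma fderiv_mollify_apply_eq_inner (hΓ : ∀ᵐ z, z ∉ Γ) (hu : LocallyIntegrable u volume)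
    (hv : IsDistribGradOn u v Γᶜ) {x : Euc n} (hx : closedBall x φ.rOut ⊆ Γᶜ) (w : Euc n) :
    fderiv ℝ (mollify φ u) x w = inner ℝ w (∫ y, mollifyKernel φ x y • v y) := by
  have hint : Integrable (fun y => u y • gradient (mollifyKernel φ x) y) volume :=
    hu.integrable_smul_right_of_hasCompactSupport
      ((InnerProductSpace.toDual ℝ (Euc n)).symm.continuous.comp
        ((contDiff_mollifyKernel φ 1 x).continuous_fderiv one_ne_zero))
      (((hasCompactSupport_mollifyKernel φ x).fderiv ℝ).comp_left
        (g := (InnerProductSpace.toDual ℝ (Euc n)).symm) (map_zero _))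
  have hparts := hv (mollifyKernel φ x) (contDiff_mollifyKernel φ ⊤ x)
    (hasCompactSupport_mollifyKernel φ x) ((tsupport_mollifyKernel_subset φ x).trans hx)
  rw [Measure.restrict_eq_self_of_ae_mem (s := Γᶜ) hΓ] at hparts
  rw [fderiv_mollify_apply φ hu, ← neg_eq_iff_eq_neg.2 hparts, inner_neg_right,
    ← integral_inner hint]
  congr 2 with y
  rw [inner_smul_right, real_inner_comm, inner_gradient_left, mul_comm]

lemma enorm_fderiv_mollify_le (hΓ : ∀ᵐ z, z ∉ Γ) (hu : LocallyIntegrable u volume)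
    (hv : IsDistribGradOn u v Γᶜ) (hf : ∀ᵐ z, ‖v z‖ₑ ≤ f z) {x : Euc n}
    (hx : closedBall x φ.rOut ⊆ Γᶜ) :
    ‖fderiv ℝ (mollify φ u) x‖ₑ ≤ bumpAverage φ f x := by
  calc ‖fderiv ℝ (mollify φ u) x‖ₑ ≤ ‖∫ y, mollifyKernel φ x y • v y‖ₑ := by
        rw [enorm_le_iff_norm_le]
        refine ContinuousLinearMap.opNorm_le_bound _ (norm_nonneg _) fun w => ?_
        rw [fderiv_mollify_apply_eq_inner hΓ hu hv hx, mul_comm]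
        exact norm_inner_le_norm w _
    _ ≤ ∫⁻ y, ‖mollifyKernel φ x y • v y‖ₑ := enorm_integral_le_lintegral_enorm _
    _ = ∫⁻ y in ball x φ.rOut, ‖mollifyKernel φ x y • v y‖ₑ := by
        refine (setLIntegral_eq_of_support_subset fun y hy => ?_).symm
        rw [← support_mollifyKernel]
        exact fun h0 => hy (by simp [h0])
    _ ≤ ∫⁻ y in ball x φ.rOut, (volume (ball (0 : Euc n) φ.rIn))⁻¹ * f y := by
        refine lintegral_mono_ae ?_
        filter_upwards [ae_restrict_of_ae hf] with y hy
        rw [enorm_smul]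
        exact mul_le_mul' (enorm_mollifyKernel_le φ x y) hy
    _ = _ := lintegral_const_mul' _ _ (ENNReal.inv_ne_top.2 (measure_ball_pos _ _ φ.rIn_pos).ne')

lemma enorm_mollify_sub_le (hΓ : ∀ᵐ z, z ∉ Γ) (hu : LocallyIntegrable u volume)
    (hv : IsDistribGradOn u v Γᶜ) (hf : ∀ᵐ z, ‖v z‖ₑ ≤ f z) {x y : Euc n}
    (hxy : ∀ t ∈ Icc (0 : ℝ) 1, closedBall (x + t • (y - x)) φ.rOut ⊆ Γᶜ) :
    ‖mollify φ u y - mollify φ u x‖ₑ ≤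
      edist y x * ∫⁻ t in Ioc (0 : ℝ) 1, bumpAverage φ f (x + t • (y - x)) := by
  have hsmooth := contDiff_mollify φ hu
  set F : ℝ → ℝ := fun t => mollify φ u (x + t • (y - x))
  have hF : ContDiff ℝ 1 F :=
    hsmooth.comp (contDiff_const.add (contDiff_id.smul contDiff_const))
  have hderiv (t : ℝ) : HasDerivAt F (fderiv ℝ (mollify φ u) (x + t • (y - x)) (y - x)) t :=
    (hsmooth.differentiable one_ne_zero _).hasFDerivAt.comp_hasDerivAt t
      (by simpa using ((hasDerivAt_id t).smul_const (y - x)).const_add x)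
  calc ‖mollify φ u y - mollify φ u x‖ₑ = ‖F 1 - F 0‖ₑ := by simp [F]
    _ ≤ ∫⁻ t in Icc (0 : ℝ) 1, ‖deriv F t‖ₑ :=
        enorm_sub_le_lintegral_deriv_of_contDiffOn_Icc hF.contDiffOn zero_le_one
    _ ≤ ∫⁻ t in Ioc (0 : ℝ) 1, edist y x * bumpAverage φ f (x + t • (y - x)) := by
        rw [← restrict_Ioc_eq_restrict_Icc]
        refine setLIntegral_mono' measurableSet_Ioc fun t ht => ?_
        rw [(hderiv t).deriv, edist_eq_enorm_sub, mul_comm]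
        exact (ContinuousLinearMap.le_opENorm _ _).trans (mul_le_mul_left
          (enorm_fderiv_mollify_le hΓ hu hv hf (hxy t (Ioc_subset_Icc_self ht))) _)
    _ = _ := lintegral_const_mul' _ _ (edist_ne_top _ _)

end Mollification

section BallIntegrals

variable {X : Type*} [PseudoMetricSpace X] [MeasurableSpace X] [OpensMeasurableSpace X]
  [SecondCountableTopology X] {μ ν : Measure X} [SFinite ν] {f g : X → ℝ≥0∞}

lemma measurable_uncurry_ball_indicator (hf : Measurable f) (ρ : ℝ) :
    Measurable fun q : X × X => (ball q.1 ρ).indicator f q.2 :=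
  Measurable.ite (measurableSet_lt (measurable_snd.dist measurable_fst) measurable_const)
    (hf.comp measurable_snd) measurable_const

lemma measurable_setLIntegral_ball (ν : Measure X) [SFinite ν] (hf : Measurable f) (ρ : ℝ) :
    Measurable fun z => ∫⁻ s in ball z ρ, f s ∂ν := by
  simp_rw [← lintegral_indicator measurableSet_ball]
  exact (measurable_uncurry_ball_indicator hf ρ).lintegral_prod_right'

lemma lintegral_mul_setLIntegral_ball [SFinite μ] (hf : Measurable f) (hg : Measurable g) (ρ : ℝ) :
    ∫⁻ z, g z * ∫⁻ s in ball z ρ, f s ∂ν ∂μ = ∫⁻ s, (∫⁻ z in ball s ρ, g z ∂μ) * f s ∂ν := by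
  have hmeas : Measurable fun q : X × X => g q.1 * (ball q.1 ρ).indicator f q.2 :=
    (hg.comp measurable_fst).mul (measurable_uncurry_ball_indicator hf ρ)
  calc ∫⁻ z, g z * ∫⁻ s in ball z ρ, f s ∂ν ∂μ
      = ∫⁻ z, ∫⁻ s, g z * (ball z ρ).indicator f s ∂ν ∂μ := by
        refine lintegral_congr fun z => ?_
        rw [← lintegral_indicator measurableSet_ball,
          lintegral_const_mul _ (hf.indicator measurableSet_ball)]
    _ = ∫⁻ s, ∫⁻ z, g z * (ball z ρ).indicator f s ∂μ ∂ν :=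
        lintegral_lintegral_swap hmeas.aemeasurable
    _ = _ := by
        refine lintegral_congr fun s => ?_
        rw [← lintegral_mul_const _ hg, ← lintegral_indicator measurableSet_ball]
        simp only [indicator, mem_ball, dist_comm s, mul_ite, mul_zero]

lemma rieszPotential_setLIntegral_ball_le {A : ℝ≥0∞} {β κ r ρ : ℝ} [SFinite μ]
    (hμ : ∀ x, HasGrowthAt μ x A β) (hκ : 0 ≤ κ) (hκβ : κ < β) (hρ : 0 < ρ) (hf : Measurable f)
    (c x : X) :
    rieszPotential κ (μ.restrict (ball c r)) (fun z => ∫⁻ s in ball z ρ, f s ∂ν) x ≤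
      kernelAvgConst β κ * A * ENNReal.ofReal ρ ^ β *
        rieszPotential κ (ν.restrict (ball c (r + ρ))) f x := by
  have hker := measurable_edist_rpow_left (-κ) x
  rw [rieszPotential, lintegral_mul_setLIntegral_ball hf hker, rieszPotential,
    ← lintegral_const_mul _ (f := fun z => edist z x ^ (-κ) * f z) (hker.mul hf),
    ← lintegral_indicator measurableSet_ball]
  refine lintegral_mono fun s => ?_
  rw [Measure.restrict_restrict measurableSet_ball]
  by_cases hs : s ∈ ball c (r + ρ)
  · rw [indicator_of_mem hs, ← mul_assoc]
    exact mul_le_mul_left ((lintegral_mono_set inter_subset_left).trans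
      ((hμ s).setLIntegral_ball_edist_rpow_neg_le_center (hμ x) hκ hκβ hρ)) _
  · have hempty : ball s ρ ∩ ball c r = ∅ :=
      (ball_disjoint_ball (by rw [mem_ball] at hs; linarith)).inter_eq
    simp [hempty]

end BallIntegrals

section RepresentationFormula

lemma tendsto_setLIntegral_ball_nhdsGT {X : Type*} [PseudoMetricSpace X] [MeasurableSpace X]
    [OpensMeasurableSpace X] {μ : Measure X} {g : X → ℝ≥0∞} {c : X} {r R : ℝ}
    (hsphere : μ (sphere c r) = 0) (hR : r < R) (hfin : ∫⁻ z in ball c R, g z ∂μ ≠ ⊤) :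
    Tendsto (fun s => ∫⁻ z in ball c s, g z ∂μ) (𝓝[>] r) (𝓝 (∫⁻ z in ball c r, g z ∂μ)) := by
  have hball (s : ℝ) : ∫⁻ z in ball c s, g z ∂μ = μ.withDensity g (ball c s) :=
    (withDensity_apply g measurableSet_ball).symm
  have hlimit : ∫⁻ z in ball c r, g z ∂μ = μ.withDensity g (⋂ s > r, ball c s) := by
    rw [biInter_gt_ball, withDensity_apply g measurableSet_closedBall, ← ball_union_sphere]
    exact setLIntegral_congr (union_ae_eq_left_of_ae_eq_empty (ae_eq_empty.2 hsphere)).symm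
  rw [hlimit]
  simp_rw [hball] at hfin ⊢
  exact tendsto_measure_biInter_gt (fun s _ => measurableSet_ball.nullMeasurableSet)
    (fun s t _ hst => ball_subset_ball hst) ⟨R, hR, hfin⟩

variable {n : ℕ} {Γ : Set (Euc n)} {u : Euc n → ℝ} {f : Euc n → ℝ≥0∞} {c : Euc n} {r : ℝ}

/-- A closed set whose inverse distance function is locally integrable. Almost every segment misses
such a set, which makes it removable for Sobolev functions. -/
structure IsNegligibleBoundary (Γ : Set (Euc n)) : Prop where
  isClosed : IsClosed Γ
  setLIntegral_inv_infEDist_ne_top : ∀ c r, ∫⁻ z in ball c r, (infEDist z Γ)⁻¹ ≠ ⊤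

/-- `u` is locally integrable on the whole space, has a distributional gradient off `Γ`, and the
norm of that gradient is dominated by the locally integrable function `f`. -/
structure HasGradientMajorant (Γ : Set (Euc n)) (u : Euc n → ℝ) (f : Euc n → ℝ≥0∞) : Prop where
  locallyIntegrable : LocallyIntegrable u volume
  exists_grad_le : ∃ v, IsDistribGradOn u v Γᶜ ∧ ∀ᵐ z, ‖v z‖ₑ ≤ f z
  measurable : Measurable f
  setLIntegral_ball_ne_top : ∀ c r, ∫⁻ z in ball c r, f z ≠ ⊤

lemma measurable_inv_infEDist (Γ : Set (Euc n)) : Measurable fun z => (infEDist z Γ)⁻¹ :=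
  measurable_infEDist.inv

lemma measurable_lintegral_segment {h : Euc n → ℝ≥0∞} (hh : Measurable h) (x : Euc n) :
    Measurable fun y => ∫⁻ t in Ioc (0 : ℝ) 1, h (x + t • (y - x)) :=
  Measurable.lintegral_prod_right' (f := fun q : Euc n × ℝ => h (x + q.2 • (q.1 - x)))
    (hh.comp (by fun_prop))

lemma IsNegligibleBoundary.ae_notMem (hΓ : IsNegligibleBoundary Γ) : ∀ᵐ z, z ∉ Γ := by
  have hball (k : ℕ) : ∀ᵐ z, z ∈ ball (0 : Euc n) k → (infEDist z Γ)⁻¹ < ⊤ :=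
    (ae_restrict_iff' measurableSet_ball).1
      (ae_lt_top (measurable_inv_infEDist Γ) (hΓ.setLIntegral_inv_infEDist_ne_top 0 k))
  filter_upwards [ae_all_iff.2 hball] with z hz hzΓ
  obtain ⟨k, hk⟩ := exists_nat_gt (dist z 0)
  simpa [infEDist_zero_of_mem hzΓ] using hz k hk

lemma IsNegligibleBoundary.ae_ae_segment_notMem (hΓ : IsNegligibleBoundary Γ) (hn : 0 < n)
    (hr : 0 < r) :
    ∀ᵐ x ∂(volume.restrict (ball c r)), ∀ᵐ y ∂(volume.restrict (ball c r)),
      ∀ t ∈ Icc (0 : ℝ) 1, x + t • (y - x) ∉ Γ := by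
  have hn1 : (1 : ℝ) ≤ n := by exact_mod_cast hn
  have hmeas := measurable_inv_infEDist Γ
  filter_upwards [ae_rieszPotential_ball_lt_top (κ := n - 1) (by linarith) (by linarith) hmeas hr
    (hΓ.setLIntegral_inv_infEDist_ne_top c r), ae_restrict_of_ae hΓ.ae_notMem,
    ae_restrict_mem measurableSet_ball] with x hpot hxΓ hx
  have hfin : ∫⁻ y in ball c r,
      edist y x * ∫⁻ t in Ioc (0 : ℝ) 1, (infEDist (x + t • (y - x)) Γ)⁻¹ ≠ ⊤ :=
    ne_top_of_le_ne_top (by finiteness) (setLIntegral_ball_lintegral_segment_le hn hr hx hmeas)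
  filter_upwards [ae_lt_top (measurable_edist_left.mul (measurable_lintegral_segment hmeas x)) hfin]
    with y hy
  rcases eq_or_ne y x with rfl | hyx
  · simp [hxΓ]
  · exact fun t ht => segment_notMem_of_lintegral_inv_infEDist_lt_top hxΓ
      (ENNReal.lt_top_of_mul_ne_top_right hy.ne (by simpa using hyx)) ht

/-- The bump function of radius `1 / (k + 1)`. -/
def shrinkingBump (n k : ℕ) : ContDiffBump (0 : Euc n) where
  rIn := 1 / (k + 1) / 2
  rOut := 1 / (k + 1)
  rIn_pos := by positivity
  rIn_lt_rOut := half_lt_self (by positivity)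

lemma ae_tendsto_mollify_shrinkingBump (hu : LocallyIntegrable u volume) :
    ∀ᵐ x, Tendsto (fun k => mollify (shrinkingBump n k) u x) atTop (𝓝 (u x)) :=
  ContDiffBump.ae_convolution_tendsto_right_of_locallyIntegrable (K := 2)
    tendsto_one_div_add_atTop_nhds_zero_nat
    (Eventually.of_forall fun k => by simp only [shrinkingBump]; linarith) hu

lemma measurable_bumpAverage (φ : ContDiffBump (0 : Euc n)) (hf : Measurable f) :
    Measurable (bumpAverage φ f) :=
  (measurable_setLIntegral_ball volume hf _).const_mul _

lemma inv_volume_ball_half_mul (x : Euc n) {ρ : ℝ} (hρ : 0 < ρ) :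
    (volume (ball x (ρ / 2)))⁻¹ * (unitBallVolume n * ENNReal.ofReal ρ ^ (n : ℝ)) =
      2 ^ (n : ℝ) := by
  have hhalf : ENNReal.ofReal (ρ / 2) ^ (n : ℝ) ≠ 0 := by simp [hρ]
  have hdouble : ENNReal.ofReal ρ = 2 * ENNReal.ofReal (ρ / 2) := by
    rw [← ENNReal.ofReal_ofNat, ← ENNReal.ofReal_mul zero_le_two, mul_div_cancel₀ ρ two_ne_zero]
  have hV := unitBallVolume_ne_top n
  rw [volume_ball_eq _ (half_pos hρ), hdouble, ENNReal.mul_rpow_of_nonneg _ _ (by positivity),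
    mul_left_comm (unitBallVolume n), mul_left_comm,
    ENNReal.inv_mul_cancel (mul_ne_zero (unitBallVolume_ne_zero n) hhalf) (by finiteness), mul_one]

lemma rieszPotential_bumpAverage_le (hn : 0 < n) (hf : Measurable f) (k : ℕ) (x : Euc n) :
    rieszPotential (n - 1) (volume.restrict (ball c r)) (bumpAverage (shrinkingBump n k) f) x ≤
      kernelAvgConst n (n - 1) * 2 ^ (n : ℝ) *
        rieszPotential (n - 1) (volume.restrict (ball c (r + 1 / (k + 1)))) f x := by
  set ρ : ℝ := 1 / (k + 1)
  have hρ : 0 < ρ := by positivity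
  have hn1 : (1 : ℝ) ≤ n := by exact_mod_cast hn
  have hM : (volume (ball (0 : Euc n) (ρ / 2)))⁻¹ ≠ ⊤ :=
    ENNReal.inv_ne_top.2 (measure_ball_pos _ _ (half_pos hρ)).ne'
  calc rieszPotential (n - 1) (volume.restrict (ball c r)) (bumpAverage (shrinkingBump n k) f) x
      = (volume (ball (0 : Euc n) (ρ / 2)))⁻¹ * rieszPotential (n - 1)
          (volume.restrict (ball c r)) (fun z => ∫⁻ s in ball z ρ, f s) x := by
        rw [rieszPotential, rieszPotential, ← lintegral_const_mul' _ _ hM]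
        exact lintegral_congr fun z => mul_left_comm _ _ _
    _ ≤ (volume (ball (0 : Euc n) (ρ / 2)))⁻¹ *
          (kernelAvgConst n (n - 1) * unitBallVolume n * ENNReal.ofReal ρ ^ (n : ℝ) *
            rieszPotential (n - 1) (volume.restrict (ball c (r + ρ))) f x) :=
        mul_le_mul_right (rieszPotential_setLIntegral_ball_le hasGrowthAt_volume (by linarith)
          (by linarith) hρ hf c x) _
    _ = _ := by
        rw [← inv_volume_ball_half_mul (n := n) 0 hρ]
        ring

lemma HasGradientMajorant.ae_ae_enorm_sub_le_liminf (h : HasGradientMajorant Γ u f)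
    (hΓ : IsNegligibleBoundary Γ) (hn : 0 < n) (hr : 0 < r) :
    ∀ᵐ x ∂(volume.restrict (ball c r)), ∀ᵐ y ∂(volume.restrict (ball c r)),
      ‖u y - u x‖ₑ ≤ liminf (fun k => edist y x *
        ∫⁻ t in Ioc (0 : ℝ) 1, bumpAverage (shrinkingBump n k) f (x + t • (y - x))) atTop := by
  obtain ⟨v, hv, hf⟩ := h.exists_grad_le
  have hconv := ae_restrict_of_ae (s := ball c r)
    (ae_tendsto_mollify_shrinkingBump h.locallyIntegrable)
  filter_upwards [hΓ.ae_ae_segment_notMem hn hr, hconv] with x hseg hx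
  filter_upwards [hseg, hconv] with y hxy hy
  obtain ⟨ε, hε, hroom⟩ := exists_closedBall_segment_subset_compl hΓ.isClosed hxy
  have hlim := (continuous_enorm.tendsto _).comp (hy.sub hx)
  rw [← hlim.liminf_eq]
  refine liminf_le_liminf ?_
  filter_upwards [tendsto_one_div_add_atTop_nhds_zero_nat.eventually (gt_mem_nhds hε)] with k hk
  exact enorm_mollify_sub_le hΓ.ae_notMem h.locallyIntegrable hv hf fun t ht =>
    (closedBall_subset_closedBall hk.le).trans (hroom t ht)

/-- The constant in the representation of `u - u_B` by the Riesz potential of `|∇u|`. -/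
def representationConst (n : ℕ) : ℝ≥0∞ :=
  (unitBallVolume n)⁻¹ * (2 ^ (n : ℝ) * (kernelAvgConst n (n - 1) * 2 ^ (n : ℝ)))

lemma representationConst_ne_top (n : ℕ) : representationConst n ≠ ⊤ := by
  have hV := unitBallVolume_ne_zero n
  have hker : kernelAvgConst n (n - 1) ≠ ⊤ := kernelAvgConst_ne_top (by linarith)
  rw [representationConst]
  finiteness

lemma HasGradientMajorant.ae_setLIntegral_enorm_sub_le (h : HasGradientMajorant Γ u f)
    (hΓ : IsNegligibleBoundary Γ) (hn : 0 < n) (hr : 0 < r) :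
    ∀ᵐ x ∂(volume.restrict (ball c r)), ∫⁻ y in ball c r, ‖u y - u x‖ₑ ≤
      ENNReal.ofReal (2 * r) ^ (n : ℝ) * (kernelAvgConst n (n - 1) * 2 ^ (n : ℝ) *
        rieszPotential (n - 1) (volume.restrict (ball c r)) f x) := by
  have hn1 : (1 : ℝ) ≤ n := by exact_mod_cast hn
  have hker : kernelAvgConst n (n - 1) ≠ ⊤ := kernelAvgConst_ne_top (by linarith)
  have hpot := ae_restrict_of_ae_restrict_of_subset (ball_subset_ball (le_add_of_nonneg_right
    zero_le_one)) (ae_rieszPotential_ball_lt_top (c := c) (r := r + 1) (κ := n - 1) (by linarith)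
      (by linarith) h.measurable (by linarith) (h.setLIntegral_ball_ne_top _ _))
  filter_upwards [h.ae_ae_enorm_sub_le_liminf hΓ hn hr, hpot, ae_restrict_mem measurableSet_ball]
    with x hle hfin hx
  have hmeas (k : ℕ) := measurable_bumpAverage (shrinkingBump n k) h.measurable
  have hradius : Tendsto (fun k : ℕ => r + 1 / (k + 1 : ℝ)) atTop (𝓝[>] r) :=
    tendsto_nhdsWithin_iff.2 ⟨by
      simpa using tendsto_one_div_add_atTop_nhds_zero_nat.const_add r,
      Eventually.of_forall fun k => lt_add_of_pos_right r (by positivity)⟩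
  have hlim := (tendsto_setLIntegral_ball_nhdsGT (Measure.addHaar_sphere_of_ne_zero _ _ hr.ne')
    (lt_add_one r) hfin.ne).comp hradius
  calc ∫⁻ y in ball c r, ‖u y - u x‖ₑ
      ≤ ∫⁻ y in ball c r, liminf (fun k => edist y x * ∫⁻ t in Ioc (0 : ℝ) 1,
          bumpAverage (shrinkingBump n k) f (x + t • (y - x))) atTop := lintegral_mono_ae hle
    _ ≤ liminf (fun k => ∫⁻ y in ball c r, edist y x * ∫⁻ t in Ioc (0 : ℝ) 1,
          bumpAverage (shrinkingBump n k) f (x + t • (y - x))) atTop :=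
        lintegral_liminf_le fun k =>
          measurable_edist_left.mul (measurable_lintegral_segment (hmeas k) x)
    _ ≤ liminf (fun k : ℕ => ENNReal.ofReal (2 * r) ^ (n : ℝ) *
          (kernelAvgConst n (n - 1) * 2 ^ (n : ℝ) * rieszPotential (n - 1)
            (volume.restrict (ball c (r + 1 / (k + 1)))) f x)) atTop :=
        liminf_le_liminf (Eventually.of_forall fun k =>
          (setLIntegral_ball_lintegral_segment_le hn hr hx (hmeas k)).trans
            (mul_le_mul_right (rieszPotential_bumpAverage_le hn h.measurable k x) _))
    _ = _ := (ENNReal.Tendsto.const_mul (ENNReal.Tendsto.const_mul hlim (Or.inr (by finiteness)))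
        (Or.inr (by finiteness))).liminf_eq

lemma enorm_sub_setAverage_le {X : Type*} [MeasurableSpace X] {μ : Measure X} {s : Set X}
    {u : X → ℝ} (hu : IntegrableOn u s μ) (hs : μ s ≠ 0) (hs' : μ s ≠ ⊤) (a : ℝ) :
    ‖a - ⨍ y in s, u y ∂μ‖ₑ ≤ (μ s)⁻¹ * ∫⁻ y in s, ‖u y - a‖ₑ ∂μ := by
  have hpos : 0 < μ.real s := ENNReal.toReal_pos hs hs'
  have haverage : a - ⨍ y in s, u y ∂μ = -⨍ y in s, (u y - a) ∂μ := by
    rw [setAverage_eq, setAverage_eq, integral_sub hu (integrableOn_const hs'), smul_sub,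
      setIntegral_const, smul_smul, inv_mul_cancel₀ hpos.ne', one_smul, neg_sub]
  rw [haverage, enorm_neg, setAverage_eq, enorm_smul, Real.enorm_eq_ofReal (by positivity),
    ENNReal.ofReal_inv_of_pos hpos, Measure.real, ENNReal.ofReal_toReal hs']
  exact mul_le_mul_right (enorm_integral_le_lintegral_enorm _) _

theorem HasGradientMajorant.ae_enorm_sub_setAverage_le (h : HasGradientMajorant Γ u f)
    (hΓ : IsNegligibleBoundary Γ) (hn : 0 < n) (hr : 0 < r) :
    ∀ᵐ x ∂(volume.restrict (ball c r)), ‖u x - ⨍ y in ball c r, u y‖ₑ ≤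
      representationConst n * rieszPotential (n - 1) (volume.restrict (ball c r)) f x := by
  have hr0 : ENNReal.ofReal r ^ (n : ℝ) ≠ 0 := by simp [hr]
  have hu : IntegrableOn u (ball c r) volume :=
    (h.locallyIntegrable.integrableOn_isCompact (isCompact_closedBall c r)).mono_set
      ball_subset_closedBall
  filter_upwards [h.ae_setLIntegral_enorm_sub_le hΓ hn hr] with x hx
  refine (enorm_sub_setAverage_le hu (measure_ball_pos _ _ hr).ne' measure_ball_lt_top.ne _).trans
    ((mul_le_mul_right hx _).trans_eq ?_)
  rw [volume_ball_eq c hr, ENNReal.mul_inv (Or.inl (unitBallVolume_ne_zero n))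
    (Or.inl (unitBallVolume_ne_top n)), ofReal_mul_rpow zero_le_two, ENNReal.ofReal_ofNat,
    representationConst]
  calc _ = (unitBallVolume n)⁻¹ * (2 ^ (n : ℝ) * (kernelAvgConst n (n - 1) * 2 ^ (n : ℝ))) *
        rieszPotential (n - 1) (volume.restrict (ball c r)) f x *
          ((ENNReal.ofReal r ^ (n : ℝ))⁻¹ * ENNReal.ofReal r ^ (n : ℝ)) := by ring
    _ = _ := by rw [ENNReal.inv_mul_cancel hr0 (by finiteness), mul_one]

end RepresentationFormula

section WeightedPotential

lemma rpow_le_mul_rpow_of_le_mul {a b m : ℝ≥0∞} {t : ℝ} (ha₀ : a ≠ 0) (ha : a ≠ ⊤) (hb : b ≠ ⊤)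
    (ht : t ≤ 0) (h : m ≤ a * b) : b ^ t ≤ a ^ (-t) * m ^ t := by
  calc b ^ t = a ^ (-t) * (a ^ t * b ^ t) := by
        rw [← mul_assoc, ← ENNReal.rpow_add _ _ ha₀ ha, neg_add_cancel, ENNReal.rpow_zero, one_mul]
    _ = a ^ (-t) * (a * b) ^ t := by rw [ENNReal.mul_rpow_of_ne_top ha hb]
    _ ≤ a ^ (-t) * m ^ t := mul_le_mul_right (ennreal_rpow_le_rpow_of_nonpos ht h) _

lemma ennreal_add_rpow_le {s : ℝ} (hs : 0 ≤ s) (a b : ℝ≥0∞) :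
    (a + b) ^ s ≤ 2 ^ s * (a ^ s + b ^ s) := by
  calc (a + b) ^ s ≤ (2 * max a b) ^ s := by
        rw [two_mul]; gcongr <;> simp
    _ = 2 ^ s * max (a ^ s) (b ^ s) := by
        rw [ENNReal.mul_rpow_of_nonneg _ _ hs, (ENNReal.monotone_rpow_of_nonneg hs).map_max]
    _ ≤ _ := by gcongr; exact max_le_add_of_nonneg zero_le zero_le

lemma ennreal_rpow_neg_mul_rpow_le {e : ℝ≥0∞} (he : e ≠ ⊤) {a s : ℝ} (hs : 0 < s) :
    e ^ (-a) * e ^ s ≤ e ^ (-(a - s)) := by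
  rcases eq_or_ne e 0 with rfl | he₀
  · simp [ENNReal.zero_rpow_of_pos hs]
  · rw [← ENNReal.rpow_add _ _ he₀ he]; ring_nf; rfl

variable {n : ℕ} {d C₀ γ p r : ℝ} {Γ : Set (Euc n)} {f : Euc n → ℝ≥0∞} {c : Euc n}

/-- The function `δ^(-γ/2) f`; for `γ = n - 1 - d` its `L²` norm with respect to Lebesgue measure is
the `L²(m)` norm of `f`. -/
def weightedDensity (Γ : Set (Euc n)) (γ : ℝ) (f : Euc n → ℝ≥0∞) (z : Euc n) : ℝ≥0∞ :=
  infEDist z Γ ^ (-(γ / 2)) * f z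

lemma measurable_weightedDensity (Γ : Set (Euc n)) (γ : ℝ) (hf : Measurable f) :
    Measurable (weightedDensity Γ γ f) :=
  (measurable_infEDist.pow_const _).mul hf

lemma eq_infEDist_rpow_mul_weightedDensity (h : IsRegularBoundary n d C₀ Γ) (γ : ℝ)
    (f : Euc n → ℝ≥0∞) {z : Euc n} (hz : z ∉ Γ) :
    f z = infEDist z Γ ^ (γ / 2) * weightedDensity Γ γ f z := by
  rw [weightedDensity, ← mul_assoc,
    ← ENNReal.rpow_add _ _ (h.infEDist_ne_zero hz) (h.infEDist_ne_top z), add_neg_cancel,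
    ENNReal.rpow_zero, one_mul]

lemma setLIntegral_weightedDensity_sq (h : IsRegularBoundary n d C₀ Γ) (f : Euc n → ℝ≥0∞)
    {S : Set (Euc n)} (hS : MeasurableSet S) :
    ∫⁻ z in S, weightedDensity Γ (n - 1 - d) f z ^ 2 = ∫⁻ z in S, f z ^ 2 ∂(measW n d Γ) := by
  rw [setLIntegral_measW h _ hS]
  refine lintegral_congr fun z => ?_
  rw [weightedDensity, mul_pow, ← ENNReal.rpow_mul_natCast]
  congr 2
  push_cast; ring

lemma rieszPotential_le_weightedDensity (h : IsRegularBoundary n d C₀ Γ) (hγ : 0 < γ) (κ : ℝ)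
    (hf : Measurable f) (S : Set (Euc n)) (x : Euc n) :
    rieszPotential κ (volume.restrict S) f x ≤ 2 ^ (γ / 2) *
      (infEDist x Γ ^ (γ / 2) *
          rieszPotential κ (volume.restrict S) (weightedDensity Γ γ f) x +
        rieszPotential (κ - γ / 2) (volume.restrict S) (weightedDensity Γ γ f) x) := by
  set g := weightedDensity Γ γ f
  have hg : Measurable g := measurable_weightedDensity Γ γ hf
  have hker (a : ℝ) : Measurable fun z => edist z x ^ a * g z :=
    (measurable_edist_rpow_left a x).mul hg
  simp only [rieszPotential]
  rw [← lintegral_const_mul _ (hker _), ← lintegral_add_right _ (hker _),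
    ← lintegral_const_mul' _ _ (by finiteness)]
  refine lintegral_mono_ae (ae_restrict_of_ae ?_)
  filter_upwards [h.ae_notMem] with z hz
  have hδ : infEDist z Γ ^ (γ / 2) ≤ 2 ^ (γ / 2) * (infEDist x Γ ^ (γ / 2) + edist z x ^ (γ / 2)) :=
    (ENNReal.rpow_le_rpow infEDist_le_infEDist_add_edist (by positivity)).trans
      (ennreal_add_rpow_le (by positivity) _ _)
  calc edist z x ^ (-κ) * f z = edist z x ^ (-κ) * (infEDist z Γ ^ (γ / 2) * g z) := by
        rw [← eq_infEDist_rpow_mul_weightedDensity h γ f hz]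
    _ ≤ edist z x ^ (-κ) *
          ((2 ^ (γ / 2) * (infEDist x Γ ^ (γ / 2) + edist z x ^ (γ / 2))) * g z) := by gcongr
    _ = 2 ^ (γ / 2) * (infEDist x Γ ^ (γ / 2) * (edist z x ^ (-κ) * g z) +
          (edist z x ^ (-κ) * edist z x ^ (γ / 2)) * g z) := by ring
    _ ≤ _ := by
        gcongr
        exact ennreal_rpow_neg_mul_rpow_le (edist_ne_top _ _) (by positivity)

lemma setLIntegral_infEDist_rpow_mul_le (h : IsRegularBoundary n d C₀ Γ) (hp : 2 ≤ p)
    {F : Euc n → ℝ≥0∞} (hF : Measurable F) {S : Set (Euc n)} (hS : MeasurableSet S) {R : ℝ≥0∞}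
    (hR : ∀ x ∈ S, infEDist x Γ ≤ R) :
    ∫⁻ x in S, (infEDist x Γ ^ ((n - 1 - d) / 2) * F x) ^ p ∂(measW n d Γ) ≤
      R ^ ((n - 1 - d) * (p / 2 - 1)) * ∫⁻ x in S, F x ^ p := by
  rw [setLIntegral_measW h _ hS, ← lintegral_const_mul _ (hF.pow_const p)]
  refine lintegral_mono_ae ?_
  filter_upwards [ae_restrict_of_ae h.ae_notMem, ae_restrict_mem hS] with z hz hzS
  rw [ENNReal.mul_rpow_of_nonneg _ _ (by linarith), ← ENNReal.rpow_mul, ← mul_assoc,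
    ← ENNReal.rpow_add _ _ (h.infEDist_ne_zero hz) (h.infEDist_ne_top z),
    show -(n - 1 - d) + (n - 1 - d) / 2 * p = (n - 1 - d) * (p / 2 - 1) by ring]
  gcongr
  · exact mul_nonneg (by linarith [h.d_lt]) (by linarith)
  · exact hR z hzS

/-- The order of magnitude of the maximal distance to `Γ` of the points of `B(c,r)`. -/
def boundaryScale (Γ : Set (Euc n)) (c : Euc n) (r : ℝ) : ℝ := max r (infDist c Γ / 2)

lemma infEDist_le_three_mul_boundaryScale (h : IsRegularBoundary n d C₀ Γ) {x : Euc n}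
    (hx : x ∈ ball c r) : infEDist x Γ ≤ ENNReal.ofReal (3 * boundaryScale Γ c r) := by
  rw [h.infEDist_eq_ofReal]
  refine ENNReal.ofReal_le_ofReal ?_
  have hr : r ≤ boundaryScale Γ c r := le_max_left _ _
  have hc : infDist c Γ / 2 ≤ boundaryScale Γ c r := le_max_right _ _
  linarith [infDist_le_infDist_add_dist (s := Γ) (x := x) (y := c), mem_ball.1 hx]

lemma measW_ball_le_boundaryScale (h : IsRegularBoundary n d C₀ Γ) (c : Euc n) (hr : 0 < r) :
    measW n d Γ (ball c r) ≤ measWConst n d C₀ *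
      (ENNReal.ofReal (boundaryScale Γ c r) ^ (-(n - 1 - d)) * ENNReal.ofReal r ^ (n : ℝ)) := by
  rcases le_total (infDist c Γ / 2) r with hc | hc
  · rw [boundaryScale, max_eq_left hc, ← ofReal_rpow_add hr,
      show -(n - 1 - d) + (n : ℝ) = d + 1 by ring]
    exact hasGrowthAt_measW h c r hr
  · rw [boundaryScale, max_eq_right hc, measW_eq_withDensity_infEDist h,
      withDensity_apply _ measurableSet_ball]
    calc ∫⁻ y in ball c r, infEDist y Γ ^ (-(n - 1 - d))
        ≤ ∫⁻ _ in ball c r, ENNReal.ofReal (infDist c Γ / 2) ^ (-(n - 1 - d)) := by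
          refine setLIntegral_mono' measurableSet_ball fun y hy =>
            ennreal_rpow_le_rpow_of_nonpos (by linarith [h.d_lt]) ?_
          rw [h.infEDist_eq_ofReal]
          refine ENNReal.ofReal_le_ofReal ?_
          linarith [infDist_le_infDist_add_dist (s := Γ) (x := c) (y := y), mem_ball'.1 hy]
      _ = unitBallVolume n *
            (ENNReal.ofReal (infDist c Γ / 2) ^ (-(n - 1 - d)) * ENNReal.ofReal r ^ (n : ℝ)) := by
          rw [setLIntegral_const, volume_ball_eq c hr]; ring
      _ ≤ _ := by gcongr; exact le_self_add

lemma measWConst_ne_zero (n : ℕ) (d C₀ : ℝ) : measWConst n d C₀ ≠ 0 := by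
  simp [measWConst, unitBallVolume_ne_zero n]

lemma ofReal_boundaryScale_rpow_mul_le (h : IsRegularBoundary n d C₀ Γ) (hp : 2 ≤ p) (c : Euc n)
    (hr : 0 < r) :
    ENNReal.ofReal (3 * boundaryScale Γ c r) ^ ((n - 1 - d) * (p / 2 - 1)) *
        ENNReal.ofReal r ^ (n + p - p * n / 2) ≤
      3 ^ ((n - 1 - d) * (p / 2 - 1)) * (measWConst n d C₀ ^ (-(1 - p / 2)) *
        (ENNReal.ofReal r ^ p * measW n d Γ (ball c r) ^ (1 - p / 2))) := by
  have hscale : 0 < boundaryScale Γ c r := hr.trans_le (le_max_left _ _)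
  have : ENNReal.ofReal (boundaryScale Γ c r) ≠ 0 := by simpa using hscale
  have hE : ENNReal.ofReal (boundaryScale Γ c r) ^ (-(n - 1 - d)) ≠ ⊤ := by finiteness
  have hrn : ENNReal.ofReal r ^ (n : ℝ) ≠ ⊤ := by finiteness
  calc _ = 3 ^ ((n - 1 - d) * (p / 2 - 1)) * (ENNReal.ofReal r ^ p *
          (ENNReal.ofReal (boundaryScale Γ c r) ^ (-(n - 1 - d)) * ENNReal.ofReal r ^ (n : ℝ)) ^
            (1 - p / 2)) := by
        rw [ofReal_mul_rpow (by norm_num), ENNReal.ofReal_ofNat, ENNReal.mul_rpow_of_ne_top hE hrn,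
          ← ENNReal.rpow_mul, ← ENNReal.rpow_mul,
          show n + p - p * n / 2 = p + n * (1 - p / 2) by ring, ofReal_rpow_add hr,
          show -(n - 1 - d) * (1 - p / 2) = (n - 1 - d) * (p / 2 - 1) by ring]
        ring
    _ ≤ 3 ^ ((n - 1 - d) * (p / 2 - 1)) * (ENNReal.ofReal r ^ p *
          (measWConst n d C₀ ^ (-(1 - p / 2)) * measW n d Γ (ball c r) ^ (1 - p / 2))) := by
        gcongr
        exact rpow_le_mul_rpow_of_le_mul (measWConst_ne_zero n d C₀) (measWConst_ne_top n d C₀)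
          (by finiteness) (by linarith) (measW_ball_le_boundaryScale h c hr)
    _ = _ := by ring

lemma exists_lintegral_infEDist_rpow_mul_rieszPotential_le (hn : 2 ≤ n) (d C₀ : ℝ) (hp : 2 ≤ p)
    (hpn : n = 2 ∨ p = 2 * n / (n - 2)) :
    ∃ C : ℝ≥0∞, C ≠ ⊤ ∧ ∀ Γ, IsRegularBoundary n d C₀ Γ → ∀ c r, 0 < r →
      ∀ g : Euc n → ℝ≥0∞, Measurable g →
      ∫⁻ x in ball c r, (infEDist x Γ ^ ((n - 1 - d) / 2) *
          rieszPotential (n - 1) (volume.restrict (ball c r)) g x) ^ p ∂(measW n d Γ) ≤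
        C * ENNReal.ofReal r ^ p * measW n d Γ (ball c r) ^ (1 - p / 2) *
          (∫⁻ z in ball c r, g z ^ 2) ^ (p / 2) := by
  obtain ⟨K, hK, hHLS⟩ := exists_lintegral_ball_rieszPotential_rpow_le hn hp hpn
  have hM := measWConst_ne_top n d C₀
  have hM₀ := measWConst_ne_zero n d C₀
  refine ⟨3 ^ ((n - 1 - d) * (p / 2 - 1)) * measWConst n d C₀ ^ (-(1 - p / 2)) * K,
    by finiteness, fun Γ h c r hr g hg => ?_⟩
  calc _ ≤ ENNReal.ofReal (3 * boundaryScale Γ c r) ^ ((n - 1 - d) * (p / 2 - 1)) *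
          ∫⁻ x in ball c r, rieszPotential (n - 1) (volume.restrict (ball c r)) g x ^ p :=
        setLIntegral_infEDist_rpow_mul_le h hp (measurable_rieszPotential _ _ hg) measurableSet_ball
          fun x hx => infEDist_le_three_mul_boundaryScale h hx
    _ ≤ ENNReal.ofReal (3 * boundaryScale Γ c r) ^ ((n - 1 - d) * (p / 2 - 1)) *
          (K * ENNReal.ofReal r ^ (n + p - p * n / 2) * (∫⁻ z in ball c r, g z ^ 2) ^ (p / 2)) := by
        gcongr; exact hHLS c r hr g hg
    _ = K * (ENNReal.ofReal (3 * boundaryScale Γ c r) ^ ((n - 1 - d) * (p / 2 - 1)) *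
          ENNReal.ofReal r ^ (n + p - p * n / 2)) * (∫⁻ z in ball c r, g z ^ 2) ^ (p / 2) := by ring
    _ ≤ K * (3 ^ ((n - 1 - d) * (p / 2 - 1)) * (measWConst n d C₀ ^ (-(1 - p / 2)) *
          (ENNReal.ofReal r ^ p * measW n d Γ (ball c r) ^ (1 - p / 2)))) *
          (∫⁻ z in ball c r, g z ^ 2) ^ (p / 2) := by
        gcongr K * ?_ * _
        exact ofReal_boundaryScale_rpow_mul_le h hp c hr
    _ = _ := by ring

lemma subcritical_weighted_exponent (hn : 2 ≤ n) (hd : 0 < d) (hdn : d < n - 1) (hp : 2 ≤ p)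
    (hpn : n = 2 ∨ p = 2 * n / (n - 2)) :
    p * (n - 1 - (n - 1 - d) / 2 - n / 2) < d + 1 := by
  rw [show (n : ℝ) - 1 - (n - 1 - d) / 2 - n / 2 = (d - 1) / 2 by ring]
  rcases eq_or_ne n 2 with rfl | hn2
  · norm_num at hdn; nlinarith
  · have hn3 : (3 : ℝ) ≤ n := by exact_mod_cast (by omega : 3 ≤ n)
    rw [hpn.resolve_left hn2, div_mul_eq_mul_div, div_lt_iff₀ (by linarith)]
    nlinarith

lemma exists_lintegral_rieszPotential_measW_le_of_subcritical (hn : 2 ≤ n) (C₀ : ℝ) (hd : 0 < d)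
    (hdn : d < n - 1) (hp : 2 ≤ p) (hpn : n = 2 ∨ p = 2 * n / (n - 2)) :
    ∃ C : ℝ≥0∞, C ≠ ⊤ ∧ ∀ Γ, IsRegularBoundary n d C₀ Γ → ∀ c r, 0 < r →
      ∀ g : Euc n → ℝ≥0∞, Measurable g →
      ∫⁻ x in ball c r,
          rieszPotential (n - 1 - (n - 1 - d) / 2) (volume.restrict (ball c r)) g x ^ p
          ∂(measW n d Γ) ≤
        C * ENNReal.ofReal r ^ p * measW n d Γ (ball c r) ^ (1 - p / 2) *
          (∫⁻ z in ball c r, g z ^ 2) ^ (p / 2) := by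
  have : (2 : ℝ) ≤ n := by exact_mod_cast hn
  obtain ⟨K, hK, hSchur⟩ := exists_lintegral_rieszPotential_rpow_le_of_subcritical
    (ν := (volume : Measure (Euc n))) (β := d + 1) hasGrowthAt_volume (unitBallVolume_ne_top n) hp
    (show 0 < n - 1 - (n - 1 - d) / 2 by linarith) (by linarith) (by linarith)
    (subcritical_weighted_exponent hn hd hdn hp hpn)
  have hM := measWConst_ne_top n d C₀
  have hM₀ := measWConst_ne_zero n d C₀
  refine ⟨K * measWConst n d C₀ * measWConst n d C₀ ^ (-(1 - p / 2)), by finiteness,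
    fun Γ h c r hr g hg => ?_⟩
  refine (hSchur (measW n d Γ) _ (hasGrowthAt_measW h) c r hr g hg).trans ?_
  have hgrowth : (ENNReal.ofReal r ^ (d + 1)) ^ (1 - p / 2) ≤
      measWConst n d C₀ ^ (-(1 - p / 2)) * measW n d Γ (ball c r) ^ (1 - p / 2) :=
    rpow_le_mul_rpow_of_le_mul hM₀ hM (by finiteness) (by linarith) (hasGrowthAt_measW h c r hr)
  rw [show d + 1 - p * (n - 1 - (n - 1 - d) / 2) + p * n / 2 = p + (d + 1) * (1 - p / 2) by ring,
    ofReal_rpow_add hr, ENNReal.rpow_mul]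
  calc _ ≤ K * measWConst n d C₀ * (ENNReal.ofReal r ^ p * (measWConst n d C₀ ^ (-(1 - p / 2)) *
          measW n d Γ (ball c r) ^ (1 - p / 2))) * (∫⁻ z in ball c r, g z ^ 2) ^ (p / 2) := by
        gcongr
    _ = _ := by ring

/-- Since `δ(z) ≤ δ(x) + |z - x|`, the potential of `f = δ^(γ/2) g`, `γ = n - 1 - d`, splits into
`δ(x)^(γ/2)` times the critical potential of `g`, and a subcritical potential of `g`. -/
lemma exists_lintegral_rieszPotential_measW_le (hn : 2 ≤ n) (C₀ : ℝ) (hd : 0 < d) (hdn : d < n - 1)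
    (hp : 2 ≤ p) (hpn : n = 2 ∨ p = 2 * n / (n - 2)) :
    ∃ C : ℝ≥0∞, C ≠ ⊤ ∧ ∀ Γ, IsRegularBoundary n d C₀ Γ → ∀ c r, 0 < r →
      ∀ f : Euc n → ℝ≥0∞, Measurable f →
      ∫⁻ x in ball c r, rieszPotential (n - 1) (volume.restrict (ball c r)) f x ^ p
          ∂(measW n d Γ) ≤
        C * ENNReal.ofReal r ^ p * measW n d Γ (ball c r) ^ (1 - p / 2) *
          (∫⁻ z in ball c r, f z ^ 2 ∂(measW n d Γ)) ^ (p / 2) := by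
  obtain ⟨K₁, hK₁, hcrit⟩ := exists_lintegral_infEDist_rpow_mul_rieszPotential_le hn d C₀ hp hpn
  obtain ⟨K₂, hK₂, hsub⟩ :=
    exists_lintegral_rieszPotential_measW_le_of_subcritical hn C₀ hd hdn hp hpn
  refine ⟨(2 ^ ((n - 1 - d) / 2)) ^ p * 2 ^ (p - 1) * (K₁ + K₂), by finiteness,
    fun Γ h c r hr f hf => ?_⟩
  set g := weightedDensity Γ (n - 1 - d) f
  have hg : Measurable g := measurable_weightedDensity Γ _ hf
  rw [← setLIntegral_weightedDensity_sq h f measurableSet_ball]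
  have hmeas (κ : ℝ) := measurable_rieszPotential κ (volume.restrict (ball c r)) hg
  calc _ ≤ ∫⁻ x in ball c r, (2 ^ ((n - 1 - d) / 2)) ^ p * (2 ^ (p - 1) *
          ((infEDist x Γ ^ ((n - 1 - d) / 2) *
              rieszPotential (n - 1) (volume.restrict (ball c r)) g x) ^ p +
            rieszPotential (n - 1 - (n - 1 - d) / 2) (volume.restrict (ball c r)) g x ^ p))
          ∂(measW n d Γ) := by
        refine lintegral_mono fun x => (ENNReal.rpow_le_rpow
          (rieszPotential_le_weightedDensity h (sub_pos.2 hdn) _ hf _ x) (by linarith)).trans ?_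
        rw [ENNReal.mul_rpow_of_nonneg _ _ (by linarith)]
        gcongr
        exact ENNReal.rpow_add_le_mul_rpow_add_rpow _ _ (by linarith)
    _ ≤ (2 ^ ((n - 1 - d) / 2)) ^ p * (2 ^ (p - 1) *
          (K₁ * ENNReal.ofReal r ^ p * measW n d Γ (ball c r) ^ (1 - p / 2) *
            (∫⁻ z in ball c r, g z ^ 2) ^ (p / 2) +
          K₂ * ENNReal.ofReal r ^ p * measW n d Γ (ball c r) ^ (1 - p / 2) *
            (∫⁻ z in ball c r, g z ^ 2) ^ (p / 2))) := by
        rw [lintegral_const_mul' _ _ (by finiteness), lintegral_const_mul' _ _ (by finiteness),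
          lintegral_add_right _ ((hmeas _).pow_const p)]
        gcongr
        · exact hcrit Γ h c r hr g hg
        · exact hsub Γ h c r hr g hg
    _ = _ := by ring

end WeightedPotential

section Poincare

variable {n : ℕ} {d C₀ p : ℝ} {Γ : Set (Euc n)} {u : Euc n → ℝ} {v : Euc n → Euc n}
  {f : Euc n → ℝ≥0∞} {c : Euc n} {r : ℝ}

lemma rpow_lintegral_div_le_of_le {α : Type*} [MeasurableSpace α] {μ : Measure α} {q : ℝ}
    (hp : 0 < p) (hpq : p ≤ q) {g : α → ℝ≥0∞} (hg : AEMeasurable g μ) (hμ₀ : μ univ ≠ 0)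
    (hμ : μ univ ≠ ⊤) :
    ((∫⁻ x, g x ^ p ∂μ) / μ univ) ^ (1 / p) ≤ ((∫⁻ x, g x ^ q ∂μ) / μ univ) ^ (1 / q) := by
  have hmono := eLpNorm'_le_eLpNorm'_mul_rpow_measure_univ hp hpq hg.aestronglyMeasurable
  simp only [eLpNorm', enorm_eq_self] at hmono
  rw [ENNReal.div_rpow_of_nonneg _ _ (by positivity), ENNReal.div_rpow_of_nonneg _ _
    (one_div_nonneg.2 (hp.le.trans hpq)), ENNReal.div_le_iff (by simp [*]) (by finiteness)]
  refine hmono.trans_eq ?_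
  rw [ENNReal.rpow_sub _ _ hμ₀ hμ, ← mul_div_assoc, ENNReal.mul_div_right_comm]

lemma rpow_div_eq_mul_rpow_div {C ρ M G : ℝ≥0∞} {q : ℝ} (hq : 0 < q) (hM₀ : M ≠ 0) (hM : M ≠ ⊤) :
    ((C * ρ ^ q * M ^ (1 - q / 2) * G ^ (q / 2)) / M) ^ (1 / q) =
      C ^ (1 / q) * ρ * (G / M) ^ ((1 : ℝ) / 2) := by
  have hq' : 0 ≤ 1 / q := by positivity
  have hcancel : C * ρ ^ q * M ^ (1 - q / 2) * G ^ (q / 2) / M = C * ρ ^ q * (G / M) ^ (q / 2) := by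
    rw [ENNReal.div_rpow_of_nonneg _ _ (by positivity), ENNReal.rpow_sub _ _ hM₀ hM,
      ENNReal.rpow_one]
    simp only [ENNReal.div_eq_inv_mul]
    calc _ = C * ρ ^ q * ((M ^ (q / 2))⁻¹ * G ^ (q / 2)) * (M * M⁻¹) := by ring
      _ = _ := by rw [ENNReal.mul_inv_cancel hM₀ hM, mul_one]
  rw [hcancel, ENNReal.mul_rpow_of_nonneg _ _ hq', ENNReal.mul_rpow_of_nonneg _ _ hq',
    ← ENNReal.rpow_mul, ← ENNReal.rpow_mul, mul_one_div_cancel hq.ne', ENNReal.rpow_one,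
    show q / 2 * (1 / q) = 1 / 2 by field_simp]

lemma exists_sobolev_exponent (hn : 2 ≤ n) (hp : n = 2 ∨ p ≤ 2 * n / (n - 2)) :
    ∃ q : ℝ, 2 ≤ q ∧ p ≤ q ∧ (n = 2 ∨ q = 2 * n / (n - 2)) := by
  by_cases h2 : n = 2
  · exact ⟨max 2 p, le_max_left _ _, le_max_right _ _, .inl h2⟩
  · have h3 : (3 : ℝ) ≤ n := by exact_mod_cast (by omega : 3 ≤ n)
    refine ⟨2 * n / (n - 2), ?_, hp.resolve_left h2, .inr rfl⟩
    rw [le_div_iff₀ (by linarith)]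
    linarith

namespace IsRegularBoundary

lemma isNegligibleBoundary (h : IsRegularBoundary n d C₀ Γ) : IsNegligibleBoundary Γ where
  isClosed := h.isClosed
  setLIntegral_inv_infEDist_ne_top c r := by
    simp only [← ENNReal.rpow_neg_one]
    have hdn := h.d_lt
    rcases le_or_gt r 0 with hr | hr
    · simp [ball_eq_empty.2 hr]
    rcases le_total (2 * r) (infDist c Γ) with hfar | hnear
    · have hV := unitBallVolume_ne_top n
      exact ne_top_of_le_ne_top (by finiteness)
        (h.setLIntegral_infEDist_rpow_neg_le_of_far zero_le_one hr hfar)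
    · have hV := unitBallVolume_ne_top n
      have hK := kernelConst_ne_top (show (n : ℝ) ≠ 1 + d by linarith)
      exact ne_top_of_le_ne_top (by finiteness)
        (h.setLIntegral_infEDist_rpow_neg_le_of_near zero_le_one (by linarith) hr hnear)

lemma setLIntegral_ball_le_measW (h : IsRegularBoundary n d C₀ Γ) (c : Euc n) (r : ℝ)
    (g : Euc n → ℝ≥0∞) :
    ENNReal.ofReal (infDist c Γ + r) ^ (-(n - 1 - d)) * ∫⁻ z in ball c r, g z ≤
      ∫⁻ z in ball c r, g z ∂(measW n d Γ) := by
  rw [setLIntegral_measW h _ measurableSet_ball]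
  refine (lintegral_const_mul_le _ _).trans (setLIntegral_mono' measurableSet_ball fun y hy => ?_)
  refine mul_le_mul_left (ennreal_rpow_le_rpow_of_nonpos (by linarith [h.d_lt]) ?_) _
  rw [h.infEDist_eq_ofReal]
  refine ENNReal.ofReal_le_ofReal ?_
  have := infDist_le_infDist_add_dist (s := Γ) (x := y) (y := c)
  linarith [mem_ball.1 hy]

lemma setLIntegral_ball_ne_top_of_sq (h : IsRegularBoundary n d C₀ Γ) {g : Euc n → ℝ≥0∞}
    (hg : ∫⁻ z in ball c r, g z ^ 2 ∂(measW n d Γ) ≠ ⊤) : ∫⁻ z in ball c r, g z ≠ ⊤ := by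
  have hsq : ∫⁻ z in ball c r, g z ^ 2 ≠ ⊤ := fun htop => hg <| by
    have hle := h.setLIntegral_ball_le_measW c r fun z => g z ^ 2
    have hweight : ENNReal.ofReal (infDist c Γ + r) ^ (-(n - 1 - d)) ≠ 0 := by
      simp [ENNReal.rpow_eq_zero_iff, h.d_lt.le]
    rwa [htop, ENNReal.mul_top hweight, top_le_iff] at hle
  have hone : ∫⁻ _ in ball c r, (1 : ℝ≥0∞) ≠ ⊤ := by simpa using measure_ball_lt_top.ne
  refine ne_top_of_le_ne_top (ENNReal.add_ne_top.2 ⟨hone, hsq⟩) ?_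
  rw [← lintegral_add_left measurable_const]
  refine lintegral_mono fun z => ?_
  rcases le_total (g z) 1 with hz | hz
  · exact hz.trans le_self_add
  · exact (le_self_pow₀ hz two_ne_zero).trans le_add_self

end IsRegularBoundary

lemma setLIntegral_ofReal_norm_sq_eq (hf : ∀ᵐ z, ‖v z‖ₑ = f z) (s : Set (Euc n)) :
    ∫⁻ y in s, ENNReal.ofReal (‖v y‖ ^ 2) ∂(measW n d Γ) = ∫⁻ z in s, f z ^ 2 ∂(measW n d Γ) := by
  refine lintegral_congr_ae (ae_restrict_of_ae ?_)
  filter_upwards [(withDensity_absolutelyContinuous _ _).ae_le hf] with z hz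
  rw [← hz, ENNReal.ofReal_pow (norm_nonneg _), ofReal_norm]

lemma MemW.exists_hasGradientMajorant (hu : MemW n d Γ u v) (h : IsRegularBoundary n d C₀ Γ)
    (hloc : LocallyIntegrable u) :
    ∃ f, HasGradientMajorant Γ u f ∧ ∀ᵐ z, ‖v z‖ₑ = f z := by
  have hrestrict : (volume : Measure (Euc n)).restrict Γᶜ = volume :=
    Measure.restrict_eq_self_of_ae_mem h.ae_notMem
  have hmeas : AEStronglyMeasurable v volume := by
    have := hu.gradLocInt.aestronglyMeasurable
    rwa [hrestrict] at this
  have hv := hmeas.enorm.ae_eq_mk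
  refine ⟨hmeas.enorm.mk _, ⟨hloc, ⟨v, hu.isGrad, hv.mono fun _ hz => hz.le⟩,
    hmeas.enorm.measurable_mk, fun c r => h.setLIntegral_ball_ne_top_of_sq ?_⟩, hv⟩
  have htotal := hu.l2
  rw [setLIntegral_ofReal_norm_sq_eq hv,
    setLIntegral_measW h _ h.isClosed.isOpen_compl.measurableSet, hrestrict] at htotal
  rw [setLIntegral_measW h _ measurableSet_ball]
  exact ((setLIntegral_le_lintegral _ _).trans_lt htotal).ne

namespace HasGradientMajorant

lemma lintegral_enorm_sub_setAverage_rpow_le (h : HasGradientMajorant Γ u f)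
    (hΓ : IsNegligibleBoundary Γ) (hn : 0 < n) (hr : 0 < r) (hp : 0 ≤ p) {μ : Measure (Euc n)}
    (hμ : μ ≪ volume) :
    ∫⁻ x in ball c r, ‖u x - ⨍ y in ball c r, u y‖ₑ ^ p ∂μ ≤ representationConst n ^ p *
      ∫⁻ x in ball c r, rieszPotential (n - 1) (volume.restrict (ball c r)) f x ^ p ∂μ := by
  have hK := representationConst_ne_top n
  rw [← lintegral_const_mul' _ _ (by finiteness)]
  refine lintegral_mono_ae ?_
  filter_upwards [(hμ.restrict _).ae_le (h.ae_enorm_sub_setAverage_le hΓ hn hr)] with x hx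
  rw [← ENNReal.mul_rpow_of_nonneg _ _ hp]
  exact ENNReal.rpow_le_rpow hx hp

end HasGradientMajorant

lemma exists_sobolevPoincare_le (hn : 2 ≤ n) (C₀ : ℝ) (hd : 0 < d) (hdn : d < n - 1) (hp : 1 ≤ p)
    (hpn : n = 2 ∨ p ≤ 2 * n / (n - 2)) :
    ∃ C : ℝ≥0∞, C ≠ ⊤ ∧ ∀ Γ, IsRegularBoundary n d C₀ Γ → ∀ (u : Euc n → ℝ) (f : Euc n → ℝ≥0∞),
      HasGradientMajorant Γ u f → ∀ c r, 0 < r →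
      ((∫⁻ x in ball c r, ‖u x - ⨍ y in ball c r, u y‖ₑ ^ p ∂(measW n d Γ)) /
          measW n d Γ (ball c r)) ^ (1 / p) ≤
        C * ENNReal.ofReal r * ((∫⁻ z in ball c r, f z ^ 2 ∂(measW n d Γ)) /
          measW n d Γ (ball c r)) ^ ((1 : ℝ) / 2) := by
  obtain ⟨q, hq, hpq, hqn⟩ := exists_sobolev_exponent hn hpn
  obtain ⟨L, hL, hpot⟩ := exists_lintegral_rieszPotential_measW_le hn C₀ hd hdn hq hqn
  have hK := representationConst_ne_top n
  refine ⟨representationConst n * L ^ (1 / q), by finiteness, fun Γ h u f hf c r hr => ?_⟩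
  have hM₀ := measW_ball_ne_zero h c hr
  have hM := measW_ball_ne_top h c hr
  have hjensen := rpow_lintegral_div_le_of_le (μ := (measW n d Γ).restrict (ball c r))
    (zero_lt_one.trans_le hp) hpq
    (measurable_rieszPotential (n - 1) (volume.restrict (ball c r)) hf.measurable).aemeasurable
    (by simpa using hM₀) (by simpa using hM)
  rw [Measure.restrict_apply_univ] at hjensen
  calc _ ≤ ((representationConst n ^ p * ∫⁻ x in ball c r,
          rieszPotential (n - 1) (volume.restrict (ball c r)) f x ^ p ∂(measW n d Γ)) /
          measW n d Γ (ball c r)) ^ (1 / p) := by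
        gcongr
        exact hf.lintegral_enorm_sub_setAverage_rpow_le h.isNegligibleBoundary (by omega) hr
          (by linarith) (withDensity_absolutelyContinuous _ _)
    _ = representationConst n * ((∫⁻ x in ball c r,
          rieszPotential (n - 1) (volume.restrict (ball c r)) f x ^ p ∂(measW n d Γ)) /
          measW n d Γ (ball c r)) ^ (1 / p) := by
        rw [mul_div_assoc, ENNReal.mul_rpow_of_nonneg _ _ (by positivity), ← ENNReal.rpow_mul,
          mul_one_div_cancel (by linarith), ENNReal.rpow_one]
    _ ≤ representationConst n * ((L * ENNReal.ofReal r ^ q *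
          measW n d Γ (ball c r) ^ (1 - q / 2) *
          (∫⁻ z in ball c r, f z ^ 2 ∂(measW n d Γ)) ^ (q / 2)) /
          measW n d Γ (ball c r)) ^ (1 / q) := by
        refine mul_le_mul_right (hjensen.trans ?_) _
        gcongr
        exact hpot Γ h c r hr f hf.measurable
    _ = _ := by
        rw [rpow_div_eq_mul_rpow_div (by linarith) hM₀ hM]
        ring

end Poincare

section Boundary

variable {n : ℕ} {d C₀ p r : ℝ} {Γ : Set (Euc n)} {u : Euc n → ℝ} {f : Euc n → ℝ≥0∞} {c : Euc n}

lemma lintegral_rieszPotential_swap {X : Type*} [PseudoMetricSpace X] [MeasurableSpace X]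
    [OpensMeasurableSpace X] [SecondCountableTopology X] (κ : ℝ) (μ ν : Measure X) [SFinite μ]
    [SFinite ν] {g : X → ℝ≥0∞} (hg : Measurable g) :
    ∫⁻ y, rieszPotential κ ν g y ∂μ = ∫⁻ t, (∫⁻ y, edist y t ^ (-κ) ∂μ) * g t ∂ν := by
  simp only [rieszPotential]
  rw [lintegral_lintegral_swap (measurable_edist_rpow_mul (-κ) hg).aemeasurable]
  refine lintegral_congr fun t => ?_
  rw [← lintegral_mul_const _ (measurable_edist_rpow_left _ t)]
  simp only [edist_comm]

lemma setLIntegral_ball_rieszPotential_le {κ ρ : ℝ} (hκ : 0 ≤ κ) (hκn : κ < n)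
    (ν : Measure (Euc n)) [SFinite ν] (hf : Measurable f) (z : Euc n) (hρ : 0 < ρ) :
    (volume (ball z ρ))⁻¹ * ∫⁻ y in ball z ρ, rieszPotential κ ν f y ≤
      kernelAvgConst n κ * rieszPotential κ ν f z := by
  have hV₀ : volume (ball z ρ) ≠ 0 := (measure_ball_pos _ _ hρ).ne'
  rw [lintegral_rieszPotential_swap κ _ ν hf, mul_comm, ← div_eq_mul_inv,
    ENNReal.div_le_iff hV₀ measure_ball_lt_top.ne]
  have hconst : kernelAvgConst n κ * volume (ball z ρ) ≠ ⊤ := by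
    have := kernelAvgConst_ne_top hκn.ne'
    finiteness
  calc _ ≤ ∫⁻ t, kernelAvgConst n κ * volume (ball z ρ) * (edist t z ^ (-κ) * f t) ∂ν := by
        refine lintegral_mono fun t => ?_
        rw [← mul_assoc, edist_comm t z, volume_ball_eq z hρ, ← mul_assoc]
        gcongr
        exact (hasGrowthAt_volume z).setLIntegral_ball_edist_rpow_neg_le_center
          (hasGrowthAt_volume t) hκ hκn hρ
    _ = _ := by
        rw [lintegral_const_mul' _ _ hconst, rieszPotential]
        ring

/-- Comparing `u_B` with the averages of `u` over small balls around `z`, whose limit is `0`. -/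
lemma HasGradientMajorant.enorm_setAverage_le_of_hasTraceAt (h : HasGradientMajorant Γ u f)
    (hΓ : IsNegligibleBoundary Γ) (hn : 0 < n) {z : Euc n} (hz : z ∈ ball c r)
    (htrace : HasTraceAt u z 0) :
    ‖⨍ y in ball c r, u y‖ₑ ≤ representationConst n * (kernelAvgConst n (n - 1) *
      rieszPotential (n - 1) (volume.restrict (ball c r)) f z) := by
  have hr : 0 < r := pos_of_mem_ball hz
  have hlim : Tendsto (fun ρ : ℝ => ‖(⨍ y in ball c r, u y) - ⨍ y in ball z ρ, u y‖ₑ) (𝓝[>] 0)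
      (𝓝 ‖(⨍ y in ball c r, u y) - 0‖ₑ) :=
    (continuous_enorm.tendsto _).comp (htrace.const_sub _)
  rw [sub_zero] at hlim
  have hgap : 0 < r - dist z c := sub_pos.2 (mem_ball.1 hz)
  refine le_of_tendsto hlim ?_
  filter_upwards [Ioo_mem_nhdsGT hgap] with ρ ⟨hρ, hρr⟩
  have hint : IntegrableOn u (ball z ρ) :=
    (h.locallyIntegrable.integrableOn_isCompact (isCompact_closedBall z ρ)).mono_set
      ball_subset_closedBall
  have hpotential := ae_restrict_of_ae_restrict_of_subset
    (ball_subset_ball' (by linarith : ρ + dist z c ≤ r)) (h.ae_enorm_sub_setAverage_le hΓ hn hr)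
  have hn' : (1 : ℝ) ≤ n := by exact_mod_cast hn
  calc _ ≤ (volume (ball z ρ))⁻¹ * ∫⁻ y in ball z ρ, ‖u y - ⨍ y in ball c r, u y‖ₑ :=
        enorm_sub_setAverage_le hint (measure_ball_pos _ _ hρ).ne' measure_ball_lt_top.ne _
    _ ≤ (volume (ball z ρ))⁻¹ * ∫⁻ y in ball z ρ, representationConst n *
          rieszPotential (n - 1) (volume.restrict (ball c r)) f y :=
        mul_le_mul_right (lintegral_mono_ae hpotential) _
    _ = representationConst n * ((volume (ball z ρ))⁻¹ * ∫⁻ y in ball z ρ,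
          rieszPotential (n - 1) (volume.restrict (ball c r)) f y) := by
        rw [lintegral_const_mul' _ _ (representationConst_ne_top n), mul_left_comm]
    _ ≤ _ := mul_le_mul_right (setLIntegral_ball_rieszPotential_le (by linarith) (by linarith) _
        h.measurable z hρ) _

lemma lintegral_surfaceMeasure_edist_rpow_neg_le {κ : ℝ} (h : IsRegularBoundary n d C₀ Γ)
    (hκ : d < κ) {t : Euc n} (ht : t ∉ Γ) :
    ∫⁻ z, edist z t ^ (-κ) ∂(surfaceMeasure d Γ) ≤
      kernelConst d κ * ENNReal.ofReal (C₀ * 2 ^ d) * infEDist t Γ ^ (d - κ) := by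
  have hsupport : (surfaceMeasure d Γ).restrict (ball t (infDist t Γ))ᶜ = surfaceMeasure d Γ := by
    refine Measure.restrict_eq_self_of_ae_mem ?_
    filter_upwards [ae_restrict_mem h.isClosed.measurableSet] with z hz
    rw [mem_compl_iff, mem_ball, not_lt, dist_comm]
    exact infDist_le_dist_of_mem hz
  have hfar := (h.hasGrowthAt_surfaceMeasure t).setLIntegral_compl_ball_edist_rpow_neg_le
    (h.d_pos.trans hκ).le hκ (h.infDist_pos ht)
  rwa [hsupport, ← h.infEDist_eq_ofReal] at hfar

/-- The integral of the Riesz kernel over `Γ` reproduces the weight: `∫_Γ |z - t|^(1-n) dσ(z)` is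
at most a multiple of `w(t)`. -/
lemma setLIntegral_surfaceMeasure_rieszPotential_le (h : IsRegularBoundary n d C₀ Γ)
    (hf : Measurable f) (s : Set (Euc n)) {E : Set (Euc n)} (hE : MeasurableSet E) :
    ∫⁻ z in s, rieszPotential (n - 1) (volume.restrict E) f z ∂(surfaceMeasure d Γ) ≤
      kernelConst d (n - 1) * ENNReal.ofReal (C₀ * 2 ^ d) * ∫⁻ t in E, f t ∂(measW n d Γ) := by
  have := h.sFinite_surfaceMeasure
  have hK := kernelConst_ne_top h.d_lt.ne
  rw [lintegral_rieszPotential_swap _ _ _ hf, setLIntegral_measW h _ hE,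
    ← lintegral_const_mul' _ _ (by finiteness)]
  refine lintegral_mono_ae (ae_restrict_of_ae ?_)
  filter_upwards [h.ae_notMem] with t ht
  rw [← mul_assoc, neg_sub (n - 1 : ℝ)]
  exact mul_le_mul_left ((setLIntegral_le_lintegral _ _).trans
    (lintegral_surfaceMeasure_edist_rpow_neg_le h h.d_lt ht)) _

lemma setLIntegral_measW_le_rpow_mul (h : IsRegularBoundary n d C₀ Γ) (hf : Measurable f)
    (c : Euc n) (hr : 0 < r) :
    ∫⁻ t in ball c r, f t ∂(measW n d Γ) ≤
      (∫⁻ z in ball c r, f z ^ 2 ∂(measW n d Γ)) ^ ((1 : ℝ) / 2) *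
        (measWConst n d C₀ * ENNReal.ofReal r ^ (d + 1)) ^ ((1 : ℝ) / 2) := by
  have hholder := eLpNorm'_le_eLpNorm'_mul_rpow_measure_univ one_pos one_le_two
    (hf.aemeasurable (μ := (measW n d Γ).restrict (ball c r))).aestronglyMeasurable
  simp only [eLpNorm', enorm_eq_self, ENNReal.rpow_one, div_one, Measure.restrict_apply_univ,
    ENNReal.rpow_two, show (1 : ℝ) - 1 / 2 = 1 / 2 by norm_num] at hholder
  refine hholder.trans ?_
  gcongr
  exact hasGrowthAt_measW h c r hr

/-- Average the pointwise bound over `Γ ∩ B` against `σ`. -/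
lemma HasGradientMajorant.enorm_setAverage_mul_le (hf : HasGradientMajorant Γ u f)
    (h : IsRegularBoundary n d C₀ Γ) (hc : c ∈ Γ) (hr : 0 < r)
    (htrace : ∀ᵐ z ∂(μH[d].restrict (Γ ∩ ball c r)), HasTraceAt u z 0) :
    ‖⨍ y in ball c r, u y‖ₑ * (ENNReal.ofReal C₀⁻¹ * ENNReal.ofReal r ^ d) ≤
      representationConst n * kernelAvgConst n (n - 1) * (kernelConst d (n - 1) *
        ENNReal.ofReal (C₀ * 2 ^ d) * ∫⁻ t in ball c r, f t ∂(measW n d Γ)) := by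
  have hrestrict :
      (surfaceMeasure d Γ).restrict (ball c r) = μH[d].restrict (Γ ∩ ball c r) := by
    rw [surfaceMeasure, Measure.restrict_restrict measurableSet_ball, inter_comm]
  have hK := representationConst_ne_top n
  have hA : kernelAvgConst n (n - 1) ≠ ⊤ := kernelAvgConst_ne_top (sub_one_lt _).ne'
  have hn : 0 < n := by
    have : (0 : ℝ) < n := by linarith [h.d_pos, h.d_lt]
    exact_mod_cast this
  calc _ ≤ ‖⨍ y in ball c r, u y‖ₑ * surfaceMeasure d Γ (ball c r) :=
        mul_le_mul_right (h.le_surfaceMeasure_ball hc hr) _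
    _ = ∫⁻ _ in ball c r, ‖⨍ y in ball c r, u y‖ₑ ∂(surfaceMeasure d Γ) :=
        (setLIntegral_const _ _).symm
    _ ≤ ∫⁻ z in ball c r, representationConst n * kernelAvgConst n (n - 1) *
          rieszPotential (n - 1) (volume.restrict (ball c r)) f z ∂(surfaceMeasure d Γ) := by
        refine lintegral_mono_ae ?_
        filter_upwards [hrestrict ▸ htrace, ae_restrict_mem measurableSet_ball] with z hz hzB
        rw [mul_assoc]
        exact hf.enorm_setAverage_le_of_hasTraceAt h.isNegligibleBoundary hn hzB hz
    _ ≤ _ := by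
        rw [lintegral_const_mul' _ _ (by finiteness)]
        exact mul_le_mul_right
          (setLIntegral_surfaceMeasure_rieszPotential_le h hf.measurable _ measurableSet_ball) _

lemma le_mul_rpow_div_of_mul_le {x a b K M G ρ : ℝ≥0∞} (hab : a * b = 1) (hρ₀ : ρ ≠ 0)
    (hρ : ρ ≠ ⊤)
    (h : x * (a * ρ ^ d) ≤ K * (G ^ ((1 : ℝ) / 2) * (M * ρ ^ (d + 1)) ^ ((1 : ℝ) / 2))) :
    x ≤ K * b * M ^ ((1 : ℝ) / 2) * ρ * (G / ρ ^ (d + 1)) ^ ((1 : ℝ) / 2) := by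
  have hhalf : (0 : ℝ) ≤ 1 / 2 := by norm_num
  have hd : ρ ^ d * ρ ^ (-d) = 1 := by
    rw [← ENNReal.rpow_add _ _ hρ₀ hρ, add_neg_cancel, ENNReal.rpow_zero]
  have hpow : (ρ ^ (d + 1)) ^ ((1 : ℝ) / 2) * ρ ^ (-d) =
      ρ ^ (1 : ℝ) * ((ρ ^ (d + 1))⁻¹) ^ ((1 : ℝ) / 2) := by
    rw [← ENNReal.rpow_neg, ← ENNReal.rpow_mul, ← ENNReal.rpow_mul, ← ENNReal.rpow_add _ _ hρ₀ hρ,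
      ← ENNReal.rpow_add _ _ hρ₀ hρ]
    ring_nf
  calc x = x * (a * ρ ^ d) * (b * ρ ^ (-d)) := by
        rw [mul_assoc, mul_mul_mul_comm, hab, hd, mul_one, mul_one]
    _ ≤ K * (G ^ ((1 : ℝ) / 2) * (M * ρ ^ (d + 1)) ^ ((1 : ℝ) / 2)) * (b * ρ ^ (-d)) :=
        mul_le_mul_left h _
    _ = K * b * M ^ ((1 : ℝ) / 2) * G ^ ((1 : ℝ) / 2) *
          ((ρ ^ (d + 1)) ^ ((1 : ℝ) / 2) * ρ ^ (-d)) := by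
        rw [ENNReal.mul_rpow_of_nonneg _ _ hhalf]
        ring
    _ = _ := by
        rw [hpow, ENNReal.rpow_one, ENNReal.div_eq_inv_mul, ENNReal.mul_rpow_of_nonneg _ _ hhalf]
        ring

lemma exists_enorm_setAverage_le (C₀ : ℝ) (hdn : d < n - 1) :
    ∃ C : ℝ≥0∞, C ≠ ⊤ ∧ ∀ Γ, IsRegularBoundary n d C₀ Γ → ∀ (u : Euc n → ℝ) (f : Euc n → ℝ≥0∞),
      HasGradientMajorant Γ u f → ∀ c ∈ Γ, ∀ r, 0 < r →
      (∀ᵐ z ∂(μH[d].restrict (Γ ∩ ball c r)), HasTraceAt u z 0) →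
      ‖⨍ y in ball c r, u y‖ₑ ≤ C * ENNReal.ofReal r *
        ((∫⁻ z in ball c r, f z ^ 2 ∂(measW n d Γ)) / ENNReal.ofReal r ^ (d + 1)) ^
          ((1 : ℝ) / 2) := by
  have hR := representationConst_ne_top n
  have hA : kernelAvgConst n (n - 1) ≠ ⊤ := kernelAvgConst_ne_top (sub_one_lt _).ne'
  have hK := kernelConst_ne_top hdn.ne
  have hM := measWConst_ne_top n d C₀
  refine ⟨representationConst n * kernelAvgConst n (n - 1) * (kernelConst d (n - 1) *
    ENNReal.ofReal (C₀ * 2 ^ d)) * ENNReal.ofReal C₀ * measWConst n d C₀ ^ ((1 : ℝ) / 2),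
    by finiteness, fun Γ h u f hf c hc r hr htrace => ?_⟩
  have hC₀ : 0 < C₀ := zero_lt_one.trans_le h.one_le
  have hinv : ENNReal.ofReal C₀⁻¹ * ENNReal.ofReal C₀ = 1 := by
    rw [← ENNReal.ofReal_mul (by positivity), inv_mul_cancel₀ hC₀.ne', ENNReal.ofReal_one]
  refine le_mul_rpow_div_of_mul_le hinv (by simpa using hr) ENNReal.ofReal_ne_top
    ((hf.enorm_setAverage_mul_le h hc hr htrace).trans ?_)
  rw [← mul_assoc]
  exact mul_le_mul_right (setLIntegral_measW_le_rpow_mul h hf.measurable c hr) _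

lemma rpow_div_le_mul_rpow_div {X a b K : ℝ≥0∞} {s : ℝ} (hs : 0 ≤ s) (hK₀ : K ≠ 0) (hK : K ≠ ⊤)
    (h : b ≤ K * a) : (X / a) ^ s ≤ K ^ s * (X / b) ^ s := by
  rw [← ENNReal.mul_rpow_of_nonneg _ _ hs]
  refine ENNReal.rpow_le_rpow ?_ hs
  rw [← ENNReal.mul_div_mul_left X a hK₀ hK, mul_div_assoc]
  gcongr

lemma rpow_lintegral_enorm_div_le_add {α : Type*} [MeasurableSpace α] {μ : Measure α}
    {g : α → ℝ} (hg : AEMeasurable g μ) (hp : 1 ≤ p) (hμ₀ : μ univ ≠ 0) (hμ : μ univ ≠ ⊤)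
    (b : ℝ) :
    ((∫⁻ x, ‖g x‖ₑ ^ p ∂μ) / μ univ) ^ (1 / p) ≤
      ((∫⁻ x, ‖g x - b‖ₑ ^ p ∂μ) / μ univ) ^ (1 / p) + ‖b‖ₑ := by
  have hp' : 0 ≤ 1 / p := by positivity
  have hconst : (∫⁻ _, ‖b‖ₑ ^ p ∂μ) ^ (1 / p) / μ univ ^ (1 / p) = ‖b‖ₑ := by
    rw [lintegral_const, ENNReal.mul_rpow_of_nonneg _ _ hp', ← ENNReal.rpow_mul,
      mul_one_div_cancel (by linarith), ENNReal.rpow_one]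
    exact ENNReal.mul_div_cancel_right (by simp [*]) (by finiteness)
  have hminkowski := ENNReal.lintegral_Lp_add_le (μ := μ) (hg.sub_const b).enorm
    (aemeasurable_const (b := ‖b‖ₑ)) hp
  rw [ENNReal.div_rpow_of_nonneg _ _ hp', ENNReal.div_rpow_of_nonneg _ _ hp']
  nth_rewrite 1 [← hconst]
  rw [← ENNReal.add_div]
  gcongr
  refine le_trans ?_ hminkowski
  gcongr with x
  simpa using enorm_add_le (g x - b) b

lemma ofReal_rpow_le_measW_ball (h : IsRegularBoundary n d C₀ Γ) (hc : c ∈ Γ) (hr : 0 < r) :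
    ENNReal.ofReal r ^ (d + 1) ≤ (unitBallVolume n)⁻¹ * measW n d Γ (ball c r) := by
  have hlower := le_measW_ball h hr (x := c) (R := r) (by simp [infDist_zero_of_mem hc])
  rw [mul_left_comm, ← ofReal_rpow_add hr, show -(n - 1 - d) + n = d + 1 by ring] at hlower
  rwa [← ENNReal.mul_le_iff_le_inv (unitBallVolume_ne_zero n) (unitBallVolume_ne_top n)]

lemma exists_boundarySobolevPoincare_le (hn : 2 ≤ n) (C₀ : ℝ) (hd : 0 < d) (hdn : d < n - 1)
    (hp : 1 ≤ p) (hpn : n = 2 ∨ p ≤ 2 * n / (n - 2)) :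
    ∃ C : ℝ≥0∞, C ≠ ⊤ ∧ ∀ Γ, IsRegularBoundary n d C₀ Γ → ∀ (u : Euc n → ℝ) (f : Euc n → ℝ≥0∞),
      HasGradientMajorant Γ u f → ∀ c ∈ Γ, ∀ r, 0 < r →
      (∀ᵐ z ∂(μH[d].restrict (Γ ∩ ball c r)), HasTraceAt u z 0) →
      ((∫⁻ x in ball c r, ‖u x‖ₑ ^ p ∂(measW n d Γ)) / ENNReal.ofReal r ^ (d + 1)) ^ (1 / p) ≤
        C * ENNReal.ofReal r * ((∫⁻ z in ball c r, f z ^ 2 ∂(measW n d Γ)) /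
          ENNReal.ofReal r ^ (d + 1)) ^ ((1 : ℝ) / 2) := by
  obtain ⟨A, hA, hpoincare⟩ := exists_sobolevPoincare_le hn C₀ hd hdn hp hpn
  obtain ⟨B, hB, hmean⟩ := exists_enorm_setAverage_le (n := n) C₀ hdn
  have hM₀ := measWConst_ne_zero n d C₀
  have hM := measWConst_ne_top n d C₀
  have hV₀ := unitBallVolume_ne_zero n
  have hV := unitBallVolume_ne_top n
  refine ⟨measWConst n d C₀ ^ (1 / p) * (A * (unitBallVolume n)⁻¹ ^ ((1 : ℝ) / 2) + B),
    by finiteness, fun Γ h u f hf c hc r hr htrace => ?_⟩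
  have htriangle := rpow_lintegral_enorm_div_le_add (μ := (measW n d Γ).restrict (ball c r))
    (hf.locallyIntegrable.aestronglyMeasurable.aemeasurable.mono_ac
      (Measure.restrict_le_self.absolutelyContinuous.trans
        (withDensity_absolutelyContinuous _ _))) hp
    (by simpa using measW_ball_ne_zero h c hr) (by simpa using measW_ball_ne_top h c hr)
    (⨍ y in ball c r, u y)
  rw [Measure.restrict_apply_univ] at htriangle
  calc _ ≤ measWConst n d C₀ ^ (1 / p) * ((∫⁻ x in ball c r, ‖u x‖ₑ ^ p ∂(measW n d Γ)) /
          measW n d Γ (ball c r)) ^ (1 / p) :=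
        rpow_div_le_mul_rpow_div (by positivity) hM₀ hM (hasGrowthAt_measW h c r hr)
    _ ≤ measWConst n d C₀ ^ (1 / p) * (A * ENNReal.ofReal r *
          ((unitBallVolume n)⁻¹ ^ ((1 : ℝ) / 2) * ((∫⁻ z in ball c r, f z ^ 2 ∂(measW n d Γ)) /
            ENNReal.ofReal r ^ (d + 1)) ^ ((1 : ℝ) / 2)) +
          B * ENNReal.ofReal r * ((∫⁻ z in ball c r, f z ^ 2 ∂(measW n d Γ)) /
            ENNReal.ofReal r ^ (d + 1)) ^ ((1 : ℝ) / 2)) := by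
        refine mul_le_mul_right (htriangle.trans (add_le_add
          ((hpoincare Γ h u f hf c r hr).trans (mul_le_mul_right ?_ _))
          (hmean Γ h u f hf c hc r hr htrace))) _
        exact rpow_div_le_mul_rpow_div (by norm_num) (by simpa using hV) (by simpa using hV₀)
          (ofReal_rpow_le_measW_ball h hc hr)
    _ = _ := by ring

end Boundary

lemma exists_pos_le_ofReal_of_ne_top {A B : ℝ≥0∞} (hA : A ≠ ⊤) (hB : B ≠ ⊤) :
    ∃ C : ℝ, 0 < C ∧ A ≤ ENNReal.ofReal C ∧ B ≤ ENNReal.ofReal C := by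
  have hsum : A + B ≤ ENNReal.ofReal ((A + B).toReal + 1) := by
    rw [ENNReal.le_ofReal_iff_toReal_le (by finiteness) (by positivity)]
    linarith
  exact ⟨(A + B).toReal + 1, by positivity, le_self_add.trans hsum, le_add_self.trans hsum⟩

lemma ofReal_abs_rpow {p : ℝ} (hp : 0 ≤ p) (a : ℝ) : ENNReal.ofReal (|a| ^ p) = ‖a‖ₑ ^ p := by
  rw [← ENNReal.ofReal_rpow_of_nonneg (abs_nonneg _) hp, Real.enorm_eq_ofReal_abs]

/-- Sobolev–Poincaré inequalities, interior and at the boundary. -/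
theorem statement7 (n : ℕ) (hn : 2 ≤ n) (d C₀ : ℝ) (hd0 : 0 < d)
    (hdn : d < (n : ℝ) - 1) (hC₀ : 1 ≤ C₀) (p : ℝ) (hp1 : 1 ≤ p)
    (hp2 : n = 2 ∨ p ≤ 2 * (n : ℝ) / ((n : ℝ) - 2)) :
    ∃ C : ℝ, 0 < C ∧
      ∀ Γ : Set (Euc n), Γ.Nonempty → IsClosed Γ → AhlforsRegular n d C₀ Γ →
        ∀ u v, MemW n d Γ u v → LocallyIntegrable u volume →
          ∀ x : Euc n, ∀ r : ℝ, 0 < r →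
            (((∫⁻ y in ball x r,
                  ENNReal.ofReal (|u y - ⨍ z in ball x r, u z| ^ p) ∂(measW n d Γ))
                / measW n d Γ (ball x r)) ^ (1 / p)
              ≤ ENNReal.ofReal (C * r) *
                ((∫⁻ y in ball x r, ENNReal.ofReal (‖v y‖ ^ 2) ∂(measW n d Γ))
                  / measW n d Γ (ball x r)) ^ ((1 : ℝ) / 2)) ∧
            (x ∈ Γ →
              (∀ᵐ z ∂(μH[d].restrict (Γ ∩ ball x r)), HasTraceAt u z 0) →
              ((∫⁻ y in ball x r, ENNReal.ofReal (|u y| ^ p) ∂(measW n d Γ))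
                  / ENNReal.ofReal (r ^ (d + 1))) ^ (1 / p)
                ≤ ENNReal.ofReal (C * r) *
                  ((∫⁻ y in ball x r, ENNReal.ofReal (‖v y‖ ^ 2) ∂(measW n d Γ))
                    / ENNReal.ofReal (r ^ (d + 1))) ^ ((1 : ℝ) / 2)) := by
  obtain ⟨A, hA, hinterior⟩ := exists_sobolevPoincare_le hn C₀ hd0 hdn hp1 hp2
  obtain ⟨B, hB, hboundary⟩ := exists_boundarySobolevPoincare_le hn C₀ hd0 hdn hp1 hp2
  obtain ⟨C, hC, hAC, hBC⟩ := exists_pos_le_ofReal_of_ne_top hA hB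
  refine ⟨C, hC, fun Γ hne hcl hreg u v hu hloc x r hr => ?_⟩
  have hΓ : IsRegularBoundary n d C₀ Γ := ⟨hne, hcl, hreg, hd0, hdn, hC₀⟩
  obtain ⟨f, hf, hvf⟩ := hu.exists_hasGradientMajorant hΓ hloc
  simp only [ENNReal.ofReal_mul hC.le, setLIntegral_ofReal_norm_sq_eq hvf,
    ofReal_abs_rpow (zero_le_one.trans hp1), ← ENNReal.ofReal_rpow_of_pos hr]
  refine ⟨(hinterior Γ hΓ u f hf x r hr).trans ?_,
    fun hx htrace => (hboundary Γ hΓ u f hf x hx r hr htrace).trans ?_⟩ <;>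
  gcongr
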